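/- The commutator map c : SU(2) × SU(2) → SU(2), c(u,v) = uvu⁻¹v⁻¹, is a continuous map which is not null-homotopic. -/

import Mathlib

/-- The special unitary group `SU(n)`: the subgroup of the unitary group
`U(n) = Matrix.unitaryGroup (Fin n) ℂ` consisting of matrices of determinant `1`. -/
def SU (n : ℕ) : Subgroup (Matrix.unitaryGroup (Fin n) ℂ) where
  carrier := {A | (A : Matrix (Fin n) (Fin n) ℂ).det = 1}
  mul_mem' := by
    intro a b ha hb
    simp only [Set.mem_setOf_eq] at *
    simp [Matrix.UnitaryGroup.mul_val, Matrix.det_mul, ha, hb]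
  one_mem' := by simp
  inv_mem' := by
    intro a ha
    simp only [Set.mem_setOf_eq] at *
    show ((a⁻¹ : Matrix.unitaryGroup (Fin n) ℂ) : Matrix (Fin n) (Fin n) ℂ).det = 1
    rw [Matrix.UnitaryGroup.inv_val, Matrix.star_eq_conjTranspose, Matrix.det_conjTranspose, ha]
    simp

/-!
A null homotopy of the commutator deforms `u⁻¹vu` into `v` through maps of `(u, v)`. Such a
deformation glues an `SU(2)`-bundle `E` on `((S² × S²) × S²) × S²` whose restrictions to two slices
`((S² × S²) × S²)` are clutched from prescribed maps to `SU(2)`; in K-theory these restrictions are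
`2 + 2 b₁h` and `2 + 2 b₂h`, where `h` is the Bott class of the `S²` factor of the slice and `b₁`,
`b₂` are the Bott classes of the two factors of `S² × S²`. By Bott periodicity
`E = 2 + 2 b₁h + 2 b₂h' + x h h'` for some class `x` on `S² × S²`. Since `Λ²E` is trivial, the
Adams operation satisfies `ψ²E = E² - 2`, and comparing coefficients of `h h'` gives
`4 ψ²x = 8 b₁b₂ + 4 x`. The coefficient `r` of `b₁b₂` in `x` then satisfies `16 r = 8 + 4 r`, which
no integer does.

Everything takes place in the `K₀` of rings of continuous functions, described by idempotent
matrices. Periodicity comes from quantizing the sphere: compressions of multiplication operators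
give asymptotically multiplicative maps from `C(X × S²)` to matrices over `C(X)`, hence an index
map on `K₀`, equal to `-1` on the Bott class. Applied to the relation `y₁(h + h') = y₂(h + h')` on
`X × S² × S²`, where `y₁` and `y₂` are the pullbacks of a class `y` on `X × S²` along the two
projections, it writes `y` as `a + b h` with `a` and `b` pulled back from `X`.
-/

open Matrix
open scoped Kronecker TensorProduct

section Idempotents

variable {R S : Type*} {ι κ μ ν : Type} [Fintype ι] [Fintype κ] [Fintype μ] [Fintype ν]

/-- Murray–von Neumann equivalence of square matrices; for idempotents it says that their images
are isomorphic projective modules. -/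
def MurrayVonNeumann [Ring R] (e : Matrix ι ι R) (f : Matrix κ κ R) : Prop :=
  ∃ (a : Matrix ι κ R) (b : Matrix κ ι R), a * b = e ∧ b * a = f

namespace MurrayVonNeumann

section Ring

variable [Ring R] [Ring S]

theorem refl {e : Matrix ι ι R} (he : IsIdempotentElem e) : MurrayVonNeumann e e :=
  ⟨e, e, he, he⟩

theorem symm {e : Matrix ι ι R} {f : Matrix κ κ R} (h : MurrayVonNeumann e f) :
    MurrayVonNeumann f e :=
  let ⟨a, b, hab, hba⟩ := h
  ⟨b, a, hba, hab⟩

theorem trans {e : Matrix ι ι R} {f : Matrix κ κ R} {g : Matrix μ μ R}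
    (he : IsIdempotentElem e) (hg : IsIdempotentElem g)
    (h : MurrayVonNeumann e f) (h' : MurrayVonNeumann f g) : MurrayVonNeumann e g := by
  obtain ⟨a, b, rfl, rfl⟩ := h
  obtain ⟨c, d, hcd, rfl⟩ := h'
  refine ⟨a * c, d * b, ?_, ?_⟩
  · calc a * c * (d * b) = a * (c * d) * b := by simp only [Matrix.mul_assoc]
      _ = a * b * (a * b) := by rw [hcd]; simp only [Matrix.mul_assoc]
      _ = a * b := he
  · calc d * b * (a * c) = d * (b * a) * c := by simp only [Matrix.mul_assoc]
      _ = d * c * (d * c) := by rw [← hcd]; simp only [Matrix.mul_assoc]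
      _ = d * c := hg

theorem of_submatrix {e : Matrix κ κ R} (he : IsIdempotentElem e) (σ : ι ≃ κ) :
    MurrayVonNeumann (e.submatrix σ σ) e := by
  refine ⟨e.submatrix σ id, e.submatrix id σ, ?_, ?_⟩
  · rw [← submatrix_mul _ _ _ _ _ Function.bijective_id, he.eq]
  · rw [← submatrix_mul _ _ _ _ _ σ.bijective, he.eq, submatrix_id_id]

theorem map {e : Matrix ι ι R} {f : Matrix κ κ R} (φ : R →+* S) (h : MurrayVonNeumann e f) :
    MurrayVonNeumann (e.map φ) (f.map φ) := by
  obtain ⟨a, b, rfl, rfl⟩ := h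
  exact ⟨a.map φ, b.map φ, (Matrix.map_mul).symm, (Matrix.map_mul).symm⟩

theorem fromBlocks {e : Matrix ι ι R} {e' : Matrix κ κ R} {f : Matrix μ μ R} {f' : Matrix ν ν R}
    (h : MurrayVonNeumann e e') (h' : MurrayVonNeumann f f') :
    MurrayVonNeumann (fromBlocks e 0 0 f) (fromBlocks e' 0 0 f') := by
  obtain ⟨a, b, rfl, rfl⟩ := h
  obtain ⟨c, d, rfl, rfl⟩ := h'
  exact ⟨Matrix.fromBlocks a 0 0 c, Matrix.fromBlocks b 0 0 d,
    by simp [fromBlocks_multiply], by simp [fromBlocks_multiply]⟩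

theorem of_isUnit [DecidableEq ι] [DecidableEq κ] {p : Matrix ι ι R} {q : Matrix κ κ R}
    {u : Matrix ι κ R} {v : Matrix κ ι R} (hp : IsIdempotentElem p) (hq : IsIdempotentElem q)
    (hpu : p * u = u) (huq : u * q = u) (hqv : q * v = v) (hvp : v * p = v)
    (hpp : IsUnit (u * v + (1 - p))) (hqq : IsUnit (v * u + (1 - q))) :
    MurrayVonNeumann p q := by
  obtain ⟨w, hw⟩ := hpp
  set w' : Matrix ι ι R := ↑w⁻¹
  have hwp : (w : Matrix ι ι R) * p = u * v := by
    rw [hw, add_mul, sub_mul, one_mul, hp.eq, sub_self, add_zero, Matrix.mul_assoc, hvp]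
  have hpw : p * (w : Matrix ι ι R) = u * v := by
    rw [hw, mul_add, mul_sub, mul_one, hp.eq, sub_self, add_zero, ← Matrix.mul_assoc, hpu]
  have huv : u * v * w' = p := by rw [← hpw, mul_assoc, w.mul_inv, mul_one]
  refine ⟨w' * u, v, by rw [Matrix.mul_assoc, ← hwp, ← mul_assoc, w.inv_mul, one_mul], ?_⟩
  refine hqq.mul_left_cancel ?_
  calc (v * u + (1 - q)) * (v * (w' * u))
      = v * (u * v * w') * u + (v - q * v) * (w' * u) := by
        simp only [Matrix.add_mul, Matrix.sub_mul, Matrix.one_mul, Matrix.mul_assoc]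
    _ = v * u := by rw [hqv, sub_self, Matrix.zero_mul, add_zero, huv, hvp]
    _ = (v * u + (1 - q)) * q := by
        rw [add_mul, sub_mul, one_mul, hq.eq, sub_self, add_zero, Matrix.mul_assoc, huq]

end Ring

theorem kronecker {R : Type*} [CommRing R] {e : Matrix ι ι R} {e' : Matrix κ κ R}
    {f : Matrix μ μ R} {f' : Matrix ν ν R} (h : MurrayVonNeumann e e')
    (h' : MurrayVonNeumann f f') : MurrayVonNeumann (e ⊗ₖ f) (e' ⊗ₖ f') := by
  obtain ⟨a, b, rfl, rfl⟩ := h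
  obtain ⟨c, d, rfl, rfl⟩ := h'
  exact ⟨a ⊗ₖ c, b ⊗ₖ d, (mul_kronecker_mul ..).symm, (mul_kronecker_mul ..).symm⟩

end MurrayVonNeumann

/-- An idempotent matrix over `R`, standing for the projective module it projects onto. -/
structure IdempotentMatrix (R : Type*) [Ring R] where
  index : Type
  [fintype : Fintype index]
  [decidableEq : DecidableEq index]
  toMatrix : Matrix index index R
  isIdempotentElem : IsIdempotentElem toMatrix

namespace IdempotentMatrix

attribute [instance] fintype decidableEq

variable [Ring R] [Ring S]

instance setoid (R : Type*) [Ring R] : Setoid (IdempotentMatrix R) where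
  r A B := MurrayVonNeumann A.toMatrix B.toMatrix
  iseqv := ⟨fun A => .refl A.isIdempotentElem, .symm,
    fun {A _ C} => .trans A.isIdempotentElem C.isIdempotentElem⟩

/-- The direct sum of the modules. -/
@[reducible] def add (A B : IdempotentMatrix R) : IdempotentMatrix R where
  index := A.index ⊕ B.index
  toMatrix := fromBlocks A.toMatrix 0 0 B.toMatrix
  isIdempotentElem := by
    simp [IsIdempotentElem, fromBlocks_multiply, A.isIdempotentElem.eq, B.isIdempotentElem.eq]

/-- The tensor product of the modules. -/
@[reducible] def mul {R : Type*} [CommRing R] (A B : IdempotentMatrix R) : IdempotentMatrix R where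
  index := A.index × B.index
  toMatrix := A.toMatrix ⊗ₖ B.toMatrix
  isIdempotentElem := by
    rw [IsIdempotentElem, ← mul_kronecker_mul, A.isIdempotentElem.eq, B.isIdempotentElem.eq]

/-- The free module with basis `ι`. -/
@[reducible] def free (R : Type*) [Ring R] (ι : Type) [Fintype ι] [DecidableEq ι] :
    IdempotentMatrix R :=
  ⟨ι, 1, .one⟩

/-- Extension of scalars. -/
@[reducible] def map (φ : R →+* S) (A : IdempotentMatrix R) : IdempotentMatrix S where
  index := A.index
  toMatrix := A.toMatrix.map φ
  isIdempotentElem := A.isIdempotentElem.map φ.mapMatrix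

end IdempotentMatrix

/-- The semiring of isomorphism classes of finitely generated projective `R`-modules. -/
def ProjectiveClass (R : Type*) [CommRing R] := Quotient (IdempotentMatrix.setoid R)

namespace ProjectiveClass

open IdempotentMatrix

variable [CommRing R] [CommRing S]

/-- The isomorphism class of the image of an idempotent matrix. -/
def mk (A : IdempotentMatrix R) : ProjectiveClass R := Quotient.mk _ A

theorem mk_eq_mk {A B : IdempotentMatrix R} :
    mk A = mk B ↔ MurrayVonNeumann A.toMatrix B.toMatrix := Quotient.eq

@[elab_as_elim]
theorem ind {p : ProjectiveClass R → Prop} (h : ∀ A, p (mk A)) (a : ProjectiveClass R) : p a :=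
  Quotient.ind h a

theorem mk_eq_mk_of_equiv {A B : IdempotentMatrix R} (σ : A.index ≃ B.index)
    (h : ∀ i j, A.toMatrix i j = B.toMatrix (σ i) (σ j)) : mk A = mk B := by
  have hA : A.toMatrix = B.toMatrix.submatrix σ σ := Matrix.ext h
  exact mk_eq_mk.2 (hA ▸ .of_submatrix B.isIdempotentElem σ)

instance : Add (ProjectiveClass R) :=
  ⟨Quotient.map₂ add fun _ _ h _ _ h' => MurrayVonNeumann.fromBlocks h h'⟩

instance : Mul (ProjectiveClass R) :=
  ⟨Quotient.map₂ mul fun _ _ h _ _ h' => MurrayVonNeumann.kronecker h h'⟩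

instance : Zero (ProjectiveClass R) := ⟨mk (free R Empty)⟩

instance : One (ProjectiveClass R) := ⟨mk (free R Unit)⟩

instance : AddCommMonoid (ProjectiveClass R) :=
  have add_comm (a b : ProjectiveClass R) : a + b = b + a := by
    induction a using ind with | _ A
    induction b using ind with | _ B
    refine mk_eq_mk_of_equiv (Equiv.sumComm _ _) ?_
    rintro (i | i) (j | j) <;> rfl
  have zero_add (a : ProjectiveClass R) : 0 + a = a := by
    induction a using ind with | _ A
    refine mk_eq_mk_of_equiv (Equiv.emptySum Empty A.index) ?_
    rintro (⟨⟨⟩⟩ | i) (⟨⟨⟩⟩ | j)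
    rfl
  { add_assoc := fun a b c => by
      induction a using ind with | _ A
      induction b using ind with | _ B
      induction c using ind with | _ C
      refine mk_eq_mk_of_equiv (Equiv.sumAssoc A.index B.index C.index) ?_
      rintro ((i | i) | i) ((j | j) | j) <;> rfl
    add_comm := add_comm
    zero_add := zero_add
    add_zero := fun a => by rw [add_comm, zero_add]
    nsmul := nsmulRec }

instance : CommSemiring (ProjectiveClass R) :=
  have mul_comm (a b : ProjectiveClass R) : a * b = b * a := by
    induction a using ind with | _ A
    induction b using ind with | _ B
    exact mk_eq_mk_of_equiv (Equiv.prodComm _ _) fun i j => mul_comm _ _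
  have one_mul (a : ProjectiveClass R) : 1 * a = a := by
    induction a using ind with | _ A
    exact mk_eq_mk_of_equiv (Equiv.punitProd A.index) fun i j => one_mul _
  have zero_mul (a : ProjectiveClass R) : 0 * a = 0 := by
    induction a using ind with | _ A
    exact mk_eq_mk_of_equiv (Equiv.equivOfIsEmpty (Empty × A.index) Empty) fun i => i.1.elim
  have add_mul (a b c : ProjectiveClass R) : (a + b) * c = a * c + b * c := by
    induction a using ind with | _ A
    induction b using ind with | _ B
    induction c using ind with | _ C
    refine mk_eq_mk_of_equiv (Equiv.sumProdDistrib A.index B.index C.index) ?_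
    rintro ⟨i | i, i'⟩ ⟨j | j, j'⟩ <;> simp
  { mul_assoc := fun a b c => by
      induction a using ind with | _ A
      induction b using ind with | _ B
      induction c using ind with | _ C
      exact mk_eq_mk_of_equiv (Equiv.prodAssoc A.index B.index C.index) fun i j => mul_assoc _ _ _
    mul_comm := mul_comm
    one_mul := one_mul
    zero_mul := zero_mul
    right_distrib := add_mul
    mul_one := fun a => by rw [mul_comm, one_mul]
    mul_zero := fun a => by rw [mul_comm, zero_mul]
    left_distrib := fun a b c => by rw [mul_comm, add_mul, mul_comm b, mul_comm c] }

theorem mk_add (A B : IdempotentMatrix R) : mk (A.add B) = mk A + mk B := rfl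

theorem mk_mul (A B : IdempotentMatrix R) : mk (A.mul B) = mk A * mk B := rfl

theorem mk_free (ι : Type) [Fintype ι] [DecidableEq ι] :
    mk (free R ι) = (Fintype.card ι : ProjectiveClass R) := by
  have congr {ι κ : Type} [Fintype ι] [DecidableEq ι] [Fintype κ] [DecidableEq κ] (σ : ι ≃ κ) :
      mk (free R ι) = mk (free R κ) :=
    mk_eq_mk_of_equiv σ fun i j => by simp [Matrix.one_apply]
  have fin (n : ℕ) : mk (free R (Fin n)) = n := by
    induction n with
    | zero => rw [Nat.cast_zero]; exact congr (Equiv.equivOfIsEmpty (Fin 0) Empty)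
    | succ n ih =>
      rw [Nat.cast_succ, ← ih, congr (finSumFinEquiv (m := n) (n := 1)).symm,
        congr (Equiv.sumCongr (Equiv.refl (Fin n)) (Equiv.ofUnique (Fin 1) Unit))]
      exact mk_eq_mk_of_equiv (B := (free R (Fin n)).add (free R Unit)) (Equiv.refl _)
        fun i j => congrFun₂ fromBlocks_one.symm i j
  rw [congr (Fintype.equivFin ι), fin]

theorem mk_eq_add {A B C : IdempotentMatrix R}
    (x : Matrix C.index A.index R) (y : Matrix A.index C.index R)
    (x' : Matrix C.index B.index R) (y' : Matrix B.index C.index R)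
    (hC : x * y + x' * y' = C.toMatrix) (hA : y * x = A.toMatrix) (hB : y' * x' = B.toMatrix)
    (h : y * x' = 0) (h' : y' * x = 0) : mk C = mk A + mk B :=
  mk_eq_mk.2 ⟨fromCols x x', fromRows y y', by rw [fromCols_mul_fromRows, hC],
    by rw [fromRows_mul_fromCols, hA, hB, h, h']⟩

/-- Extension of scalars on isomorphism classes. -/
def map (φ : R →+* S) : ProjectiveClass R →+* ProjectiveClass S where
  toFun := Quotient.map (IdempotentMatrix.map φ) fun _ _ h => MurrayVonNeumann.map φ h
  map_one' := mk_eq_mk_of_equiv (Equiv.refl Unit) fun _ _ => by simp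
  map_zero' := mk_eq_mk_of_equiv (Equiv.refl Empty) fun i => i.elim
  map_add' a b := by
    induction a using ind with | _ A
    induction b using ind with | _ B
    refine mk_eq_mk_of_equiv (Equiv.refl (A.index ⊕ B.index)) ?_
    rintro (i | i) (j | j) <;> simp
  map_mul' a b := by
    induction a using ind with | _ A
    induction b using ind with | _ B
    exact mk_eq_mk_of_equiv (Equiv.refl (A.index × B.index)) fun i j => map_mul φ _ _

theorem mk_eq_zero {A : IdempotentMatrix R} (h : A.toMatrix = 0) : mk A = 0 :=
  mk_eq_mk.2 ⟨0, 0, by simp [h], by ext i; exact i.elim⟩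

end ProjectiveClass

section ExteriorSquare

open IdempotentMatrix

variable [CommRing R] [Invertible (2 : R)]

/-- The matrix of the flip `v ⊗ w ↦ w ⊗ v`. -/
def tensorSwap (R : Type*) [CommRing R] (ι κ : Type) [DecidableEq ι] [DecidableEq κ] :
    Matrix (ι × κ) (κ × ι) R :=
  (Equiv.prodComm ι κ).toPEquiv.toMatrix

/-- The projection of `V ⊗ V` onto its antisymmetric tensors, for `V` free with basis `ι`. -/
def antisymmetrizer (R : Type*) [CommRing R] [Invertible (2 : R)] (ι : Type) [DecidableEq ι] :
    Matrix (ι × ι) (ι × ι) R :=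
  (⅟2 : R) • (1 - tensorSwap R ι ι)

variable [DecidableEq ι] [DecidableEq κ] [DecidableEq μ] [DecidableEq ν]

omit [Invertible (2 : R)] in
theorem tensorSwap_mul_kronecker (A : Matrix ι κ R) (B : Matrix μ ν R) :
    tensorSwap R ι μ * (B ⊗ₖ A) = (A ⊗ₖ B) * tensorSwap R κ ν := by
  rw [tensorSwap, tensorSwap, PEquiv.toMatrix_toPEquiv_mul, PEquiv.mul_toMatrix_toPEquiv]
  ext i j
  exact mul_comm _ _

omit [Invertible (2 : R)] in
theorem tensorSwap_mul_tensorSwap : tensorSwap R ι κ * tensorSwap R κ ι = 1 := by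
  rw [tensorSwap, tensorSwap, ← PEquiv.toMatrix_trans, ← Equiv.toPEquiv_trans]
  exact PEquiv.toMatrix_refl

theorem antisymmetrizer_mul_tensorSwap :
    antisymmetrizer R ι * tensorSwap R ι ι = -antisymmetrizer R ι := by
  rw [antisymmetrizer, Matrix.smul_mul, Matrix.sub_mul, tensorSwap_mul_tensorSwap, Matrix.one_mul,
    ← smul_neg, neg_sub]

omit [Fintype μ] [DecidableEq μ] in
theorem mul_two_smul_antisymmetrizer (A : Matrix μ (ι × ι) R) :
    A * ((2 : R) • antisymmetrizer R ι) = A - A * tensorSwap R ι ι := by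
  rw [antisymmetrizer, smul_smul, mul_invOf_self, one_smul, Matrix.mul_sub, Matrix.mul_one]

theorem antisymmetrizer_mul_self :
    antisymmetrizer R ι * antisymmetrizer R ι = antisymmetrizer R ι := by
  conv_lhs => enter [2]; rw [antisymmetrizer]
  rw [Matrix.mul_smul, Matrix.mul_sub, Matrix.mul_one, antisymmetrizer_mul_tensorSwap,
    sub_neg_eq_add, ← two_smul R, smul_smul, invOf_mul_self, one_smul]

theorem antisymmetrizer_mul_kronecker_self (A : Matrix ι κ R) :
    antisymmetrizer R ι * (A ⊗ₖ A) = (A ⊗ₖ A) * antisymmetrizer R κ := by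
  simp only [antisymmetrizer, Matrix.smul_mul, Matrix.mul_smul, Matrix.sub_mul, Matrix.mul_sub,
    tensorSwap_mul_kronecker, Matrix.mul_one, Matrix.one_mul]

omit [Fintype μ] [DecidableEq μ] in
theorem antisymmetrizer_mul_kronecker_mul (A : Matrix ι κ R) (B : Matrix κ μ R) :
    antisymmetrizer R ι * (A ⊗ₖ A) * (antisymmetrizer R κ * (B ⊗ₖ B)) =
      antisymmetrizer R ι * ((A * B) ⊗ₖ (A * B)) := by
  rw [antisymmetrizer_mul_kronecker_self, Matrix.mul_assoc,
    ← Matrix.mul_assoc (antisymmetrizer R κ), antisymmetrizer_mul_self, ← Matrix.mul_assoc,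
    ← antisymmetrizer_mul_kronecker_self, Matrix.mul_assoc, ← mul_kronecker_mul]

omit [Fintype κ] [DecidableEq κ] in
theorem kronecker_mul_antisymmetrizer_mul {ξ : Type}
    (z : Matrix ξ ι R) (z' : Matrix κ ι R) (w : Matrix ι μ R) (w' : Matrix ι ν R) :
    (z ⊗ₖ z') * antisymmetrizer R ι * (antisymmetrizer R ι * (w ⊗ₖ w')) =
      ⅟(2 : R) • ((z * w) ⊗ₖ (z' * w') - ((z * w') ⊗ₖ (z' * w)) * tensorSwap R ν μ) := by
  rw [Matrix.mul_assoc, ← Matrix.mul_assoc (antisymmetrizer R ι), antisymmetrizer_mul_self]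
  simp only [antisymmetrizer, Matrix.smul_mul, Matrix.mul_smul, Matrix.sub_mul, Matrix.mul_sub,
    Matrix.one_mul, mul_kronecker_mul, tensorSwap_mul_kronecker, Matrix.mul_assoc]

theorem MurrayVonNeumann.exteriorSquare {e : Matrix ι ι R} {f : Matrix κ κ R}
    (h : MurrayVonNeumann e f) :
    MurrayVonNeumann (antisymmetrizer R ι * (e ⊗ₖ e)) (antisymmetrizer R κ * (f ⊗ₖ f)) := by
  obtain ⟨a, b, rfl, rfl⟩ := h
  exact ⟨antisymmetrizer R ι * (a ⊗ₖ a), antisymmetrizer R κ * (b ⊗ₖ b),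
    antisymmetrizer_mul_kronecker_mul a b, antisymmetrizer_mul_kronecker_mul b a⟩

/-- `Λ²(P ⊕ Q) ≅ Λ²P ⊕ (P ⊗ Q) ⊕ Λ²Q`. -/
theorem MurrayVonNeumann.exteriorSquare_add {e : Matrix ι ι R}
    {x : Matrix ι κ R} {y : Matrix κ ι R} {x' : Matrix ι μ R} {y' : Matrix μ ι R}
    (he : x * y + x' * y' = e) (hyx' : y * x' = 0) (hy'x : y' * x = 0) :
    MurrayVonNeumann (antisymmetrizer R ι * (e ⊗ₖ e))
      (Matrix.fromBlocks (antisymmetrizer R κ * ((y * x) ⊗ₖ (y * x))) 0 0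
        (Matrix.fromBlocks ((y * x) ⊗ₖ (y' * x')) 0 0
          (antisymmetrizer R μ * ((y' * x') ⊗ₖ (y' * x'))))) := by
  set S := antisymmetrizer R ι
  set τ := tensorSwap R ι ι
  refine ⟨fromCols (S * (x ⊗ₖ x)) (fromCols ((2 : R) • (S * (x ⊗ₖ x'))) (S * (x' ⊗ₖ x'))),
    fromRows ((y ⊗ₖ y) * S) (fromRows ((y ⊗ₖ y') * S) ((y' ⊗ₖ y') * S)), ?_, ?_⟩
  · have hpq : (2 : R) • (S * (x ⊗ₖ x')) * ((y ⊗ₖ y') * S) =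
        S * ((x * y) ⊗ₖ (x' * y')) + S * ((x' * y') ⊗ₖ (x * y)) := by
      calc (2 : R) • (S * (x ⊗ₖ x')) * ((y ⊗ₖ y') * S)
          = S * (((x * y) ⊗ₖ (x' * y')) * ((2 : R) • S)) := by
            rw [mul_kronecker_mul]
            simp only [Matrix.smul_mul, Matrix.mul_smul, Matrix.mul_assoc]
        _ = S * ((x * y) ⊗ₖ (x' * y')) - S * τ * ((x' * y') ⊗ₖ (x * y)) := by
            rw [mul_two_smul_antisymmetrizer, ← tensorSwap_mul_kronecker, Matrix.mul_sub,
              ← Matrix.mul_assoc]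
        _ = _ := by
            rw [antisymmetrizer_mul_tensorSwap, Matrix.neg_mul, sub_neg_eq_add]
    have hpp {m : Type} [Fintype m] [DecidableEq m] (w : Matrix ι m R) (z : Matrix m ι R) :
        S * (w ⊗ₖ w) * ((z ⊗ₖ z) * S) = S * ((w * z) ⊗ₖ (w * z)) := by
      rw [← antisymmetrizer_mul_kronecker_self, antisymmetrizer_mul_kronecker_mul]
    rw [fromCols_mul_fromRows, fromCols_mul_fromRows, hpp, hpp, hpq, ← he]
    simp only [add_kronecker, kronecker_add, Matrix.mul_add]
    abel
  · have hpp {m : Type} [Fintype m] [DecidableEq m] (w : Matrix ι m R) (z : Matrix m ι R) :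
        (z ⊗ₖ z) * S * (S * (w ⊗ₖ w)) = antisymmetrizer R m * ((z * w) ⊗ₖ (z * w)) := by
      rw [← antisymmetrizer_mul_kronecker_self, antisymmetrizer_mul_kronecker_mul]
    simp only [fromRows_mul, mul_fromCols, hpp, Matrix.mul_smul, S,
      kronecker_mul_antisymmetrizer_mul, hyx', hy'x, Matrix.zero_kronecker, Matrix.kronecker_zero,
      Matrix.zero_mul, sub_zero, smul_zero]
    ext (i | i | i) (j | j | j) <;> simp

namespace IdempotentMatrix

/-- The exterior square of the module. -/
@[reducible] def exteriorSquare (A : IdempotentMatrix R) : IdempotentMatrix R where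
  index := A.index × A.index
  toMatrix := antisymmetrizer R A.index * (A.toMatrix ⊗ₖ A.toMatrix)
  isIdempotentElem := by
    rw [IsIdempotentElem, antisymmetrizer_mul_kronecker_mul, A.isIdempotentElem.eq]

theorem exteriorSquare_apply (A : IdempotentMatrix R) (i j i' j' : A.index) :
    A.exteriorSquare.toMatrix (i, j) (i', j') =
      ⅟2 * (A.toMatrix i i' * A.toMatrix j j' - A.toMatrix j i' * A.toMatrix i j') := by
  simp [antisymmetrizer, tensorSwap, Matrix.sub_mul, PEquiv.toMatrix_toPEquiv_mul, mul_sub]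

/-- All `2 × 2` minors vanish, i.e. the module has rank at most one. -/
def IsLine {R : Type*} [CommRing R] (L : IdempotentMatrix R) : Prop :=
  ∀ i j i' j', L.toMatrix i i' * L.toMatrix j j' = L.toMatrix j i' * L.toMatrix i j'

end IdempotentMatrix

namespace ProjectiveClass

/-- The exterior square on isomorphism classes. -/
def exteriorSquare : ProjectiveClass R → ProjectiveClass R :=
  Quotient.map IdempotentMatrix.exteriorSquare fun _ _ h => MurrayVonNeumann.exteriorSquare h

theorem exteriorSquare_mk (A : IdempotentMatrix R) : exteriorSquare (mk A) = mk A.exteriorSquare :=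
  rfl

theorem exteriorSquare_add (a b : ProjectiveClass R) :
    exteriorSquare (a + b) = exteriorSquare a + (a * b + exteriorSquare b) := by
  induction a using ind with | _ A
  induction b using ind with | _ B
  have h := MurrayVonNeumann.exteriorSquare_add
    (x := fromRows A.toMatrix (0 : Matrix B.index A.index R))
    (y := fromCols A.toMatrix (0 : Matrix A.index B.index R))
    (x' := fromRows (0 : Matrix A.index B.index R) B.toMatrix)
    (y' := fromCols (0 : Matrix B.index A.index R) B.toMatrix) (e := (A.add B).toMatrix)
    (by rw [fromRows_mul_fromCols, fromRows_mul_fromCols, fromBlocks_add]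
        simp [A.isIdempotentElem.eq, B.isIdempotentElem.eq])
    (by simp [fromCols_mul_fromRows]) (by simp [fromCols_mul_fromRows])
  simp only [fromCols_mul_fromRows, A.isIdempotentElem.eq, B.isIdempotentElem.eq, Matrix.mul_zero,
    add_zero, zero_add] at h
  exact mk_eq_mk (A := (A.add B).exteriorSquare)
    (B := A.exteriorSquare.add ((A.mul B).add B.exteriorSquare)).2 h

theorem exteriorSquare_mk_of_isLine {L : IdempotentMatrix R} (h : L.IsLine) :
    exteriorSquare (mk L) = 0 :=
  mk_eq_zero <| by
    ext ⟨i, j⟩ ⟨i', j'⟩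
    rw [exteriorSquare_apply, h i j, sub_self, mul_zero, Matrix.zero_apply]

theorem exteriorSquare_mul_of_isLine (a : ProjectiveClass R) {L : IdempotentMatrix R}
    (h : L.IsLine) : exteriorSquare (a * mk L) = exteriorSquare a * (mk L * mk L) := by
  induction a using ind with | _ A
  refine mk_eq_mk_of_equiv (A := (A.mul L).exteriorSquare)
    (B := A.exteriorSquare.mul (L.mul L)) (Equiv.prodProdProdComm ..) ?_
  rintro ⟨⟨i, k⟩, ⟨j, l⟩⟩ ⟨⟨i', k'⟩, ⟨j', l'⟩⟩
  change (A.mul L).exteriorSquare.toMatrix ((i, k), (j, l)) ((i', k'), (j', l')) =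
    A.exteriorSquare.toMatrix (i, j) (i', j') * (L.toMatrix k k' * L.toMatrix l l')
  rw [exteriorSquare_apply, exteriorSquare_apply]
  simp only [kroneckerMap_apply]
  linear_combination (⅟2 : R) * A.toMatrix j i' * A.toMatrix i j' * h k l k' l'

theorem exteriorSquare_map [CommRing S] [Invertible (2 : S)] (φ : R →+* S) (a : ProjectiveClass R) :
    exteriorSquare (map φ a) = map φ (exteriorSquare a) := by
  induction a using ind with | _ A
  refine mk_eq_mk_of_equiv (A := (A.map φ).exteriorSquare) (B := A.exteriorSquare.map φ)
    (Equiv.refl _) ?_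
  rintro ⟨i, j⟩ ⟨i', j'⟩
  change _ = φ (A.exteriorSquare.toMatrix (i, j) (i', j'))
  have hφ : φ ⅟2 = ⅟2 :=
    (invOf_eq_left_inv (by rw [← map_ofNat φ 2, ← map_mul, invOf_mul_self, map_one])).symm
  rw [exteriorSquare_apply, exteriorSquare_apply]
  simp [hφ]

end ProjectiveClass

end ExteriorSquare

end Idempotents

section KZero

open IdempotentMatrix

variable {R S T A : Type*} [CommRing R] [CommRing S] [CommRing T]

/-- The Grothendieck ring `K₀(R)` of finitely generated projective modules. -/
def KZero (R : Type*) [CommRing R] := ℤ ⊗[ℕ] ProjectiveClass R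

namespace KZero

noncomputable instance : CommRing (KZero R) :=
  inferInstanceAs (CommRing (ℤ ⊗[ℕ] ProjectiveClass R))

/-- The class in `K₀(R)` of an isomorphism class of modules. -/
noncomputable def of : ProjectiveClass R →+* KZero R :=
  (Algebra.TensorProduct.includeRight : ProjectiveClass R →ₐ[ℕ] ℤ ⊗[ℕ] ProjectiveClass R).toRingHom

/-- The class in `K₀(R)` of the image of an idempotent matrix. -/
noncomputable abbrev mk (e : IdempotentMatrix R) : KZero R := of (.mk e)

theorem tmul_eq (n : ℤ) (a : ProjectiveClass R) : (n ⊗ₜ[ℕ] a : KZero R) = (n • of a : KZero R) := by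
  change n ⊗ₜ[ℕ] a = n • ((1 : ℤ) ⊗ₜ[ℕ] a)
  rw [TensorProduct.smul_tmul', smul_eq_mul, mul_one]

theorem exists_sub (y : KZero R) : ∃ a b : ProjectiveClass R, y = of a - of b := by
  refine TensorProduct.induction_on (motive := fun y : ℤ ⊗[ℕ] ProjectiveClass R =>
    ∃ a b : ProjectiveClass R, (y : KZero R) = (of a - of b : KZero R)) y ?_ ?_ ?_
  · exact ⟨0, 0, (sub_self (of (0 : ProjectiveClass R))).symm⟩
  · intro n a
    rw [tmul_eq]
    obtain ⟨k, rfl | rfl⟩ := n.eq_nat_or_neg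
    · exact ⟨k • a, 0, by rw [natCast_zsmul, map_nsmul, map_zero, sub_zero]⟩
    · exact ⟨0, k • a, by rw [neg_smul, natCast_zsmul, map_nsmul, map_zero, zero_sub]⟩
  · rintro x y ⟨a, b, rfl⟩ ⟨c, d, rfl⟩
    refine ⟨a + c, b + d, ?_⟩
    change (of a - of b) + (of c - of d) = of (a + c) - of (b + d)
    rw [map_add, map_add, add_sub_add_comm]

@[elab_as_elim]
theorem induction_on {p : KZero R → Prop} (y : KZero R) (mk : ∀ e, p (mk e))
    (sub : ∀ y z, p y → p z → p (y - z)) : p y := by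
  obtain ⟨a, b, rfl⟩ := exists_sub y
  induction a using ProjectiveClass.ind with | _ a
  induction b using ProjectiveClass.ind with | _ b
  exact sub _ _ (mk a) (mk b)

theorem addHom_ext {G : Type*} [AddCommGroup G] {f g : KZero R →+ G}
    (h : ∀ e, f (mk e) = g (mk e)) : f = g := by
  ext y
  induction y using KZero.induction_on with
  | mk e => exact h e
  | sub y z hy hz => rw [map_sub, map_sub, hy, hz]

theorem ringHom_ext [CommRing A] {f g : KZero R →+* A} (h : ∀ e, f (mk e) = g (mk e)) : f = g :=
  RingHom.coe_addMonoidHom_injective (addHom_ext h)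

/-- The extension to `K₀(R)` of an additive invariant of modules. -/
noncomputable def liftAdd {G : Type*} [AddCommGroup G] (f : ProjectiveClass R →+ G) :
    KZero R →+ G :=
  (TensorProduct.lift (LinearMap.mk₂ ℕ (fun (n : ℤ) a => n • f a) (fun _ _ _ => add_smul _ _ _)
    (fun c m a => smul_assoc c m (f a)) (fun n a b => by rw [map_add, smul_add])
    (fun c n a => by rw [map_nsmul, smul_comm])) :
      ℤ ⊗[ℕ] ProjectiveClass R →ₗ[ℕ] G).toAddMonoidHom

@[simp]
theorem liftAdd_of {G : Type*} [AddCommGroup G] (f : ProjectiveClass R →+ G)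
    (a : ProjectiveClass R) : liftAdd f (of a) = f a :=
  one_smul ℤ (f a)

/-- The extension to `K₀(R)` of a multiplicative additive invariant of modules. -/
noncomputable def lift [CommRing A] (f : ProjectiveClass R →+* A) : KZero R →+* A :=
  (Algebra.TensorProduct.lift (Algebra.ofId ℤ A |>.restrictScalars ℕ) f.toNatAlgHom
    fun _ _ => Commute.all _ _ : ℤ ⊗[ℕ] ProjectiveClass R →ₐ[ℕ] A).toRingHom

@[simp]
theorem lift_of [CommRing A] (f : ProjectiveClass R →+* A) (a : ProjectiveClass R) :
    lift f (of a) = f a := by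
  change Algebra.TensorProduct.lift _ _ _ (1 ⊗ₜ a) = f a
  simp

/-- Extension of scalars on `K₀`. -/
noncomputable def map (φ : R →+* S) : KZero R →+* KZero S := lift (of.comp (ProjectiveClass.map φ))

@[simp]
theorem map_of (φ : R →+* S) (a : ProjectiveClass R) :
    map φ (of a) = of (ProjectiveClass.map φ a) :=
  lift_of _ a

theorem map_comp (φ : S →+* T) (χ : R →+* S) : map (φ.comp χ) = (map φ).comp (map χ) :=
  ringHom_ext fun e => by simp only [RingHom.comp_apply, map_of]; rfl

theorem map_id : map (RingHom.id R) = RingHom.id (KZero R) :=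
  ringHom_ext fun e => by simp only [RingHom.id_apply, map_of]; rfl

/-- The Hattori–Stallings trace, i.e. the rank. -/
noncomputable def trace : KZero R →+* R :=
  lift
    { toFun := Quotient.lift (fun e => e.toMatrix.trace) fun _ _ ⟨a, b, ha, hb⟩ => by
        rw [← ha, ← hb, Matrix.trace_mul_comm]
      map_one' := Matrix.trace_one.trans (by simp)
      map_zero' := Matrix.trace_one.trans (by simp)
      map_add' := fun a b => by
        induction a using ProjectiveClass.ind with | _ a
        induction b using ProjectiveClass.ind with | _ b
        exact Fintype.sum_sum_type _
      map_mul' := fun a b => by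
        induction a using ProjectiveClass.ind with | _ a
        induction b using ProjectiveClass.ind with | _ b
        exact Matrix.trace_kronecker _ _ }

@[simp]
theorem trace_mk (e : IdempotentMatrix R) : trace (mk e) = e.toMatrix.trace :=
  lift_of _ _

theorem exists_intCast_eq_trace {K : Type*} [Field K] (y : KZero K) : ∃ n : ℤ, n = trace y := by
  have nat (e : IdempotentMatrix K) : ∃ n : ℕ, n = trace (mk e) := by
    have h : IsIdempotentElem (Matrix.toLin' e.toMatrix) := by
      rw [IsIdempotentElem, Module.End.mul_eq_comp, ← Matrix.toLin'_mul, e.isIdempotentElem.eq]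
    refine ⟨Module.finrank K (LinearMap.range (Matrix.toLin' e.toMatrix)), ?_⟩
    rw [trace_mk, ← Matrix.trace_toLin'_eq, (LinearMap.IsIdempotentElem.isProj_range _ h).trace]
  obtain ⟨a, b, rfl⟩ := exists_sub y
  induction a using ProjectiveClass.ind with | _ a
  induction b using ProjectiveClass.ind with | _ b
  obtain ⟨m, hm⟩ := nat a
  obtain ⟨n, hn⟩ := nat b
  exact ⟨m - n, by rw [map_sub, ← hm, ← hn]; push_cast; rfl⟩

section Adams

variable [Invertible (2 : R)]

/-- The second Adams operation. -/
noncomputable def adams : KZero R →+ KZero R :=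
  liftAdd
    { toFun := fun a => of a ^ 2 - 2 * of a.exteriorSquare
      map_zero' := by
        have h : (0 : ProjectiveClass R).exteriorSquare = 0 :=
          ProjectiveClass.exteriorSquare_mk_of_isLine fun i => i.elim
        simp [h]
      map_add' := fun a b => by
        rw [ProjectiveClass.exteriorSquare_add]
        simp only [map_add, map_mul]
        ring }

theorem adams_of (a : ProjectiveClass R) : adams (of a) = of a ^ 2 - 2 * of a.exteriorSquare :=
  liftAdd_of _ a

theorem adams_mk_of_isLine {L : IdempotentMatrix R} (h : L.IsLine) : adams (mk L) = mk L ^ 2 := by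
  rw [adams_of, ProjectiveClass.exteriorSquare_mk_of_isLine h, map_zero, mul_zero, sub_zero]

theorem adams_one : adams (1 : KZero R) = 1 := by
  have h : (free R Unit).IsLine := fun _ _ _ _ => rfl
  have := adams_mk_of_isLine h
  rwa [show mk (free R Unit) = 1 from map_one of, one_pow] at this

theorem adams_mul_mk_of_isLine (y : KZero R) {L : IdempotentMatrix R} (h : L.IsLine) :
    adams (y * mk L) = adams y * mk L ^ 2 := by
  suffices adams.comp (AddMonoidHom.mulRight (mk L)) =
    (AddMonoidHom.mulRight (mk L ^ 2)).comp adams from DFunLike.congr_fun this y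
  refine addHom_ext fun e => ?_
  simp only [AddMonoidHom.comp_apply, AddMonoidHom.mulRight_apply, mk, ← map_mul, adams_of,
    ProjectiveClass.exteriorSquare_mul_of_isLine _ h]
  simp only [map_mul]
  ring

theorem adams_mul_mk_sub_one (y : KZero R) {L : IdempotentMatrix R} (h : L.IsLine)
    (hL : (mk L - 1) ^ 2 = 0) : adams (y * (mk L - 1)) = 2 * adams y * (mk L - 1) := by
  rw [mul_sub, map_sub, adams_mul_mk_of_isLine _ h, mul_one]
  linear_combination adams y * hL

theorem adams_map [Invertible (2 : S)] (φ : R →+* S) (y : KZero R) :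
    adams (map φ y) = map φ (adams y) := by
  suffices adams.comp (map φ).toAddMonoidHom = (map φ).toAddMonoidHom.comp adams from
    DFunLike.congr_fun this y
  refine addHom_ext fun e => ?_
  simp [adams_of, ProjectiveClass.exteriorSquare_map, map_ofNat (map φ) 2]

theorem two_mul_trace_exteriorSquare (e : IdempotentMatrix R) :
    2 * e.exteriorSquare.toMatrix.trace = e.toMatrix.trace ^ 2 - e.toMatrix.trace := by
  have hsq : ∑ i, ∑ j, e.toMatrix j i * e.toMatrix i j = e.toMatrix.trace := by
    rw [Finset.sum_comm]
    simp_rw [← Matrix.mul_apply, e.isIdempotentElem.eq, Matrix.trace, Matrix.diag_apply]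
  have hlam (i j) : 2 * e.exteriorSquare.toMatrix (i, j) (i, j) =
      e.toMatrix i i * e.toMatrix j j - e.toMatrix j i * e.toMatrix i j := by
    rw [exteriorSquare_apply, mul_invOf_cancel_left']
  rw [Matrix.trace, Finset.mul_sum, Fintype.sum_prod_type]
  simp only [Matrix.diag_apply, hlam, Finset.sum_sub_distrib, hsq, sq, Matrix.trace,
    Finset.sum_mul_sum]

theorem trace_adams (y : KZero R) : trace (adams y) = trace y := by
  suffices trace.toAddMonoidHom.comp adams = trace.toAddMonoidHom from DFunLike.congr_fun this y
  refine addHom_ext fun e => ?_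
  have h : adams (mk e) = mk e ^ 2 - 2 * mk e.exteriorSquare := adams_of _
  change trace (adams (mk e)) = trace (mk e)
  rw [h, map_sub, map_mul, map_pow, map_ofNat, trace_mk, trace_mk,
    two_mul_trace_exteriorSquare, sub_sub_cancel]

end Adams

end KZero

end KZero

section Hopf

variable {R : Type*} [CommRing R]

namespace IdempotentMatrix

/-- The complementary summand. -/
@[reducible] def compl (e : IdempotentMatrix R) : IdempotentMatrix R :=
  ⟨e.index, 1 - e.toMatrix, e.isIdempotentElem.one_sub⟩

end IdempotentMatrix

theorem ProjectiveClass.mk_add_mk_compl (e : IdempotentMatrix R) :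
    mk e + mk e.compl = Fintype.card e.index := by
  rw [← mk_free, mk_eq_add (C := .free R e.index) (A := e) (B := e.compl) e.toMatrix e.toMatrix
    (1 - e.toMatrix) (1 - e.toMatrix)]
  · rw [e.isIdempotentElem.eq, e.isIdempotentElem.one_sub.eq, add_sub_cancel]
  · exact e.isIdempotentElem
  · exact e.isIdempotentElem.one_sub
  · exact e.isIdempotentElem.mul_one_sub_self
  · exact e.isIdempotentElem.one_sub_mul_self

namespace IdempotentMatrix

/-- The rank one projection `!![t, c; d, 1 - t]`; over the Riemann sphere it is the tautological
line bundle. -/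
@[reducible] def hopf {c d t : R} (h : c * d = t * (1 - t)) : IdempotentMatrix R where
  index := Fin 2
  toMatrix := !![t, c; d, 1 - t]
  isIdempotentElem := by
    rw [IsIdempotentElem, Matrix.mul_fin_two]
    ext i j
    fin_cases i <;> fin_cases j <;> simp <;> grind

variable {c d t : R} (h : c * d = t * (1 - t))

theorem isLine_hopf : (hopf h).IsLine := by
  intro i j i' j'
  fin_cases i <;> fin_cases j <;> fin_cases i' <;> fin_cases j' <;> simp <;> grind

theorem isLine_compl_hopf : (hopf h).compl.IsLine := by
  intro i j i' j'
  fin_cases i <;> fin_cases j <;> fin_cases i' <;> fin_cases j' <;> simp <;> grind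

end IdempotentMatrix

open IdempotentMatrix

namespace KZero

theorem mk_compl (e : IdempotentMatrix R) : mk e.compl = Fintype.card e.index - mk e := by
  rw [eq_sub_iff_add_eq', ← map_add, ProjectiveClass.mk_add_mk_compl, map_natCast]

variable {c d t : R} (h : c * d = t * (1 - t))

theorem mk_hopf_mul_mk_compl : mk (hopf h) * mk (hopf h).compl = 1 := by
  have key : MurrayVonNeumann ((hopf h).mul (hopf h).compl).toMatrix
      (free R Unit).toMatrix := by
    refine ⟨.of fun i _ => ![![c, -t], ![1 - t, -d]] i.1 i.2,
      .of fun _ i => ![![d, -t], ![1 - t, -c]] i.1 i.2, ?_, ?_⟩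
    · ext ⟨i, j⟩ ⟨i', j'⟩
      fin_cases i <;> fin_cases j <;> fin_cases i' <;> fin_cases j' <;>
        simp [Matrix.mul_apply] <;> grind
    · ext i j
      simp only [Matrix.mul_apply, Fintype.sum_prod_type, Fin.sum_univ_two, of_apply, cons_val_zero,
        cons_val_one, one_apply_eq, mul_neg, neg_mul, neg_neg]
      linear_combination 2 * h
  rw [← map_mul, ← ProjectiveClass.mk_mul, ProjectiveClass.mk_eq_mk.2 key]
  exact map_one of

theorem sq_mk_hopf_sub_one : (mk (hopf h) - 1) ^ 2 = 0 := by
  have hmul := mk_hopf_mul_mk_compl h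
  rw [mk_compl, Fintype.card_fin, Nat.cast_two] at hmul
  linear_combination -hmul

end KZero

end Hopf

section Diagonal

variable {R : Type*} [CommRing R] {ι κ : Type} [Fintype ι] [DecidableEq ι] [Fintype κ]
  [DecidableEq κ]

theorem IdempotentMatrix.IsLine.mul_mul_self {L : IdempotentMatrix R} (h : L.IsLine)
    (X : Matrix L.index L.index R) :
    L.toMatrix * X * L.toMatrix = (X * L.toMatrix).trace • L.toMatrix := by
  ext i j
  simp only [Matrix.mul_apply, Matrix.smul_apply, Matrix.trace, Matrix.diag_apply, smul_eq_mul,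
    Finset.sum_mul]
  rw [Finset.sum_comm]
  refine Finset.sum_congr rfl fun k _ => Finset.sum_congr rfl fun l _ => ?_
  linear_combination X k l * h i l k j

theorem MurrayVonNeumann.of_mul_eq {p q z M N : Matrix κ κ R}
    (hz : IsUnit z) (hzM : Commute z M) (hp : N * M = z * p) (hq : M * N = z * q) :
    MurrayVonNeumann p q := by
  obtain ⟨z, rfl⟩ := hz
  have h := hzM.units_inv_left.eq
  refine ⟨(↑z⁻¹ : Matrix κ κ R) * N, M, ?_, ?_⟩
  · rw [Matrix.mul_assoc, hp, z.inv_mul_cancel_left]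
  · rw [← Matrix.mul_assoc, ← h, Matrix.mul_assoc, hq, z.inv_mul_cancel_left]

theorem sub_sq_mul_of_isIdempotentElem {A : Type*} [Ring A] {e f : A} (he : IsIdempotentElem e)
    (hf : IsIdempotentElem f) : (e - f) ^ 2 * e = e - e * f * e := by
  simp only [sq, sub_mul, mul_sub, mul_assoc, he.eq, hf.mul_self_mul]
  abel

theorem commute_sub_sq_of_isIdempotentElem {A : Type*} [Ring A] {e f : A}
    (he : IsIdempotentElem e) (hf : IsIdempotentElem f) : Commute ((e - f) ^ 2) e := by
  rw [Commute, SemiconjBy, sub_sq_mul_of_isIdempotentElem he hf]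
  simp only [sq, sub_mul, mul_sub, ← mul_assoc, he.eq, hf.mul_mul_self]
  abel

omit [DecidableEq κ] in
/-- The module `(e ⊗ Q) ⊕ (f ⊗ P)` does not change when `e` and `f` are exchanged: lines `P` and
`Q` are isomorphic where `tr (P Q)` is invertible, and `e` and `f` are where `1 - (e - f)²` is. -/
theorem MurrayVonNeumann.exchange {e f : Matrix ι ι R} {P Q : Matrix κ κ R} {k C : R}
    (he : IsIdempotentElem e) (hf : IsIdempotentElem f)
    (hP : IsIdempotentElem P) (hQ : IsIdempotentElem Q)
    (hPQP : P * Q * P = k • P) (hQPQ : Q * P * Q = k • Q)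
    (hz : IsUnit (1 + (C * k) • 1 - (e - f) ^ 2)) :
    MurrayVonNeumann (Matrix.fromBlocks (e ⊗ₖ Q) 0 0 (f ⊗ₖ P))
      (Matrix.fromBlocks (f ⊗ₖ Q) 0 0 (e ⊗ₖ P)) := by
  classical
  set z := 1 + (C * k) • 1 - (e - f) ^ 2 with z_def
  have hsq : (e - f) ^ 2 = (f - e) ^ 2 := by rw [← neg_sub, neg_sq]
  have hze : z * e = e * f * e + (C * k) • e := by
    rw [z_def, sub_mul, sub_sq_mul_of_isIdempotentElem he hf, add_mul, one_mul, smul_mul_assoc,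
      one_mul]
    abel
  have hzf : z * f = f * e * f + (C * k) • f := by
    rw [z_def, hsq, sub_mul, sub_sq_mul_of_isIdempotentElem hf he, add_mul, one_mul,
      smul_mul_assoc, one_mul]
    abel
  have hscalar (A : Matrix ι ι R) : Commute (1 + (C * k) • 1) A :=
    (Commute.one_left A).add_left ((Commute.one_left A).smul_left _)
  have hce : Commute z e := (hscalar e).sub_left (commute_sub_sq_of_isIdempotentElem he hf)
  have hcf : Commute z f :=
    (hscalar f).sub_left (hsq ▸ commute_sub_sq_of_isIdempotentElem hf he)
  have hZ : IsUnit (Matrix.fromBlocks (z ⊗ₖ (1 : Matrix κ κ R)) 0 0 (z ⊗ₖ (1 : Matrix κ κ R))) := by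
    rw [Matrix.isUnit_iff_isUnit_det] at hz ⊢
    rw [det_fromBlocks_zero₂₁, det_kronecker, det_one, one_pow, mul_one]
    exact (hz.pow _).mul (hz.pow _)
  rw [Matrix.mul_assoc] at hPQP hQPQ
  refine of_mul_eq hZ
    (M := Matrix.fromBlocks ((f * e) ⊗ₖ Q) (C • f ⊗ₖ (Q * P)) (-(e ⊗ₖ (P * Q))) ((e * f) ⊗ₖ P))
    (N := Matrix.fromBlocks ((e * f) ⊗ₖ Q) (-(C • e ⊗ₖ (Q * P))) (f ⊗ₖ (P * Q)) ((f * e) ⊗ₖ P))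
    ?_ ?_ ?_
  · rw [Commute, SemiconjBy, fromBlocks_multiply, fromBlocks_multiply]
    simp [← mul_kronecker_mul, hce.eq, hcf.eq, (hce.mul_right hcf).eq, (hcf.mul_right hce).eq]
  all_goals
    simp [fromBlocks_multiply, ← mul_kronecker_mul, hze, hzf, Matrix.mul_assoc, he.eq, hf.eq, hP.eq,
      hQ.eq, hPQP, hQPQ, he.mul_self_mul, hf.mul_self_mul, hP.mul_self_mul, hQ.mul_self_mul,
      add_kronecker, kronecker_smul, smul_kronecker, smul_smul, add_comm]

end Diagonal

/-- The complex topological K-theory `K⁰(X)`, in terms of idempotent matrices of functions. -/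
abbrev KTheory (X : Type*) [TopologicalSpace X] := KZero C(X, ℂ)

section KTheory

open IdempotentMatrix

variable {X Y Z : Type*} [TopologicalSpace X] [TopologicalSpace Y] [TopologicalSpace Z]

noncomputable instance : Invertible (2 : C(X, ℂ)) where
  invOf := .const X 2⁻¹
  invOf_mul_self := ContinuousMap.ext fun _ => inv_mul_cancel₀ two_ne_zero
  mul_invOf_self := ContinuousMap.ext fun _ => mul_inv_cancel₀ two_ne_zero

/-- Pullback of matrices of functions along a continuous map. -/
noncomputable def pullback (f : C(X, Y)) : C(Y, ℂ) →+* C(X, ℂ) :=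
  (ContinuousMap.compRightAlgHom ℂ ℂ f).toRingHom

namespace KTheory

/-- The ring homomorphism `K⁰(Y) → K⁰(X)` induced by a continuous map `X → Y`. -/
noncomputable def pull (f : C(X, Y)) : KTheory Y →+* KTheory X := KZero.map (pullback f)

theorem pull_pull (f : C(X, Y)) (g : C(Y, Z)) (y : KTheory Z) :
    pull f (pull g y) = pull (g.comp f) y :=
  (DFunLike.congr_fun (KZero.map_comp (pullback f) (pullback g)) y).symm

@[simp]
theorem pull_id (y : KTheory X) : pull (.id X) y = y :=
  DFunLike.congr_fun KZero.map_id y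

theorem pull_mk (f : C(X, Y)) (e : IdempotentMatrix C(Y, ℂ)) :
    pull f (KZero.mk e) = KZero.mk (e.map (pullback f)) :=
  KZero.map_of _ _

end KTheory

/-- The sphere as the space of rank one projections `!![t, z; conj z, 1 - t]`. -/
abbrev BlochSphere := {p : ℂ × ℝ // Complex.normSq p.1 = p.2 * (1 - p.2)}

namespace BlochSphere

/-- The point of height `t` and longitude `z`. -/
@[simps]
noncomputable def polar : C(Circle × unitInterval, BlochSphere) where
  toFun p := ⟨(√(p.2 * (1 - p.2) : ℝ) * p.1, p.2), by
    have : 0 ≤ (p.2 : ℝ) * (1 - p.2) := mul_nonneg p.2.2.1 (sub_nonneg.2 p.2.2.2)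
    simp [Complex.normSq_ofReal, Real.mul_self_sqrt this]⟩
  continuous_toFun := by fun_prop

theorem polar_surjective : Function.Surjective polar := by
  rintro ⟨⟨w, t⟩, h⟩
  have hw : ‖w‖ ^ 2 = t * (1 - t) := by rw [← Complex.normSq_eq_norm_sq]; exact h
  have ht : t ∈ Set.Icc (0 : ℝ) 1 := by constructor <;> nlinarith [sq_nonneg ‖w‖]
  refine ⟨(Circle.exp w.arg, ⟨t, ht⟩), Subtype.ext (Prod.ext ?_ rfl)⟩
  simp only [polar_apply_coe, ← hw, Real.sqrt_sq (norm_nonneg w), Circle.coe_exp]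
  exact Complex.norm_mul_exp_arg_mul_I w

instance : CompactSpace BlochSphere := polar_surjective.compactSpace polar.continuous

/-- The point at which the longitude is undefined and the height is `1`. -/
def pole : BlochSphere := ⟨(0, 1), by simp⟩

/-- The tautological line bundle. -/
@[reducible] noncomputable def tautological : IdempotentMatrix C(BlochSphere, ℂ) :=
  hopf (c := ⟨fun p => p.1.1, by fun_prop⟩) (d := ⟨fun p => star p.1.1, by fun_prop⟩)
    (t := ⟨fun p => p.1.2, by fun_prop⟩) <| ContinuousMap.ext fun p => by
      simpa [Complex.mul_conj] using congrArg Complex.ofReal p.2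

/-- The reduced class of the tautological line bundle, a generator of `K⁰(S², pt)`. -/
noncomputable def bott : KTheory BlochSphere := KZero.mk tautological - 1

theorem bott_sq : bott ^ 2 = 0 := KZero.sq_mk_hopf_sub_one _

theorem isLine_tautological : tautological.IsLine := isLine_hopf _

theorem isLine_compl_tautological : tautological.compl.IsLine := isLine_compl_hopf _

theorem trace_compl_mul (f g : C(X, BlochSphere)) (x : X) :
    ((tautological.compl.map (pullback g)).toMatrix *
      (tautological.map (pullback f)).toMatrix).trace x =
      (Complex.normSq ((f x).1.1 - (g x).1.1) + ((f x).1.2 - (g x).1.2) ^ 2 : ℝ) := by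
  have hf := (Complex.normSq_eq_conj_mul_self (z := (f x).1.1)).symm.trans
    (congrArg Complex.ofReal (f x).2)
  have hg := (Complex.normSq_eq_conj_mul_self (z := (g x).1.1)).symm.trans
    (congrArg Complex.ofReal (g x).2)
  rw [Complex.ofReal_mul, Complex.ofReal_sub, Complex.ofReal_one] at hf hg
  calc _ = (1 - (g x).1.2 : ℂ) * (f x).1.2 - (g x).1.1 * star (f x).1.1 +
        (-(star (g x).1.1 * (f x).1.1) + (g x).1.2 * (1 - (f x).1.2)) := by
        simp [Matrix.trace_fin_two, Matrix.mul_apply, pullback, sub_eq_add_neg]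
    _ = _ := by
        rw [Complex.ofReal_add, Complex.normSq_eq_conj_mul_self, map_sub, Complex.ofReal_pow,
          Complex.ofReal_sub, RCLike.star_def]
        linear_combination -hf - hg

end BlochSphere

end KTheory

section Exchange

open IdempotentMatrix BlochSphere
open scoped Matrix.Norms.L2Operator

variable {X Y : Type*} [TopologicalSpace X] [TopologicalSpace Y]

theorem IdempotentMatrix.IsLine.map {R S : Type*} [CommRing R] [CommRing S]
    {L : IdempotentMatrix R} (h : L.IsLine) (φ : R →+* S) : (L.map φ).IsLine := fun i j i' j' => by
  simp only [Matrix.map_apply, ← map_mul, h i j]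

theorem exists_forall_lt_one_add_mul [CompactSpace X] {f k : X → ℝ} (hf : Continuous f)
    (hk : Continuous k) (hk0 : ∀ x, 0 ≤ k x) (h : ∀ x, k x = 0 → f x < 1) :
    ∃ C : ℝ, ∀ x, f x < 1 + C * k x := by
  have hmono : Monotone fun (n : ℕ) => {x | f x < 1 + n * k x} := fun m n hmn x hx =>
    lt_of_lt_of_le (show f x < 1 + m * k x from hx) <| by have := hk0 x; gcongr
  have hcover : Set.univ ⊆ ⋃ n : ℕ, {x | f x < 1 + n * k x} := fun x _ => by
    obtain hx | hx := (hk0 x).eq_or_lt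
    · exact Set.mem_iUnion.2 ⟨0, by simpa [← hx] using h x hx.symm⟩
    · obtain ⟨n, hn⟩ := exists_nat_gt ((f x - 1) / k x)
      exact Set.mem_iUnion.2 ⟨n, sub_lt_iff_lt_add'.1 ((div_lt_iff₀ hx).1 hn)⟩
  obtain ⟨n, hn⟩ := isCompact_univ.elim_directed_cover _
    (fun n => isOpen_lt (by fun_prop) (by fun_prop)) hcover hmono.directed_le
  exact ⟨n, fun x => hn (Set.mem_univ x)⟩

theorem isUnit_matrix_iff_forall {ι : Type} [Fintype ι] [DecidableEq ι]
    {A : Matrix ι ι C(X, ℂ)} :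
    IsUnit A ↔ ∀ x, IsUnit (A.map fun a => a x) := by
  simp only [Matrix.isUnit_iff_isUnit_det, ContinuousMap.isUnit_iff_forall_ne_zero,
    isUnit_iff_ne_zero]
  refine forall_congr' fun x => ?_
  rw [show A.det x = _ from (ContinuousMap.evalAlgHom ℂ ℂ x).toRingHom.map_det A]
  rfl

theorem isUnit_one_add_smul_sub_sq [CompactSpace X] {ι : Type} [Fintype ι] [DecidableEq ι]
    (D : Matrix ι ι C(X, ℂ)) {k : C(X, ℂ)} {k' : X → ℝ} (hk : ∀ x, k x = k' x)
    (hk' : Continuous k') (hk0 : ∀ x, 0 ≤ k' x)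
    (hD : ∀ x, k' x = 0 → D.map (fun a => a x) = 0) :
    ∃ C : C(X, ℂ), IsUnit (1 + (C * k) • 1 - D ^ 2) := by
  have hDcont : Continuous fun x => D.map fun a => a x := by
    refine continuous_matrix fun i j => ?_
    exact (D i j).continuous
  obtain ⟨C, hC⟩ := exists_forall_lt_one_add_mul
    (f := fun x => ‖(D.map fun a => a x) ^ 2‖ * ‖(1 : Matrix ι ι ℂ)‖) (by fun_prop) hk' hk0
    fun x hx => by simp [hD x hx]
  refine ⟨.const X C, isUnit_matrix_iff_forall.2 fun x => ?_⟩
  have hpos : ‖(D.map fun a => a x) ^ 2‖ * ‖(1 : Matrix ι ι ℂ)‖ < ‖((1 + C * k' x : ℝ) : ℂ)‖ :=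
    (hC x).trans_le (by rw [Complex.norm_real]; exact Real.le_norm_self _)
  convert spectrum.mem_resolventSet_iff.1 (spectrum.mem_resolventSet_of_norm_lt_mul hpos) using 1
  let ev := (ContinuousMap.evalAlgHom ℂ ℂ x : C(X, ℂ) →ₐ[ℂ] ℂ).toRingHom.mapMatrix (m := ι)
  have hev : ev ((ContinuousMap.const X (C : ℂ) * k) • (1 : Matrix ι ι C(X, ℂ))) =
      (C * k' x : ℂ) • 1 := by
    ext i j
    obtain rfl | hij := eq_or_ne i j <;> simp [ev, *]
  change ev (1 + _ - D ^ 2) = _ - ev D ^ 2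
  rw [map_sub, map_add, map_one, map_pow, hev, Algebra.algebraMap_eq_smul_one]
  push_cast
  rw [add_smul, one_smul]

namespace KTheory

theorem exchange_of_matrix [CompactSpace Y] {p q : C(Y, BlochSphere)} {ι : Type} [Fintype ι]
    [DecidableEq ι] {e f : Matrix ι ι C(Y, ℂ)} (he : IsIdempotentElem e) (hf : IsIdempotentElem f)
    (h : ∀ y, p y = q y → e.map (fun a => a y) = f.map (fun a => a y)) :
    (KZero.mk ⟨ι, e, he⟩ - KZero.mk ⟨ι, f, hf⟩) * (pull p bott + pull q bott) = 0 := by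
  let P := tautological.map (pullback p)
  let Q := tautological.compl.map (pullback q)
  have hP : P.IsLine := isLine_tautological.map _
  have hQ : Q.IsLine := isLine_compl_tautological.map _
  have hPp : KZero.of (.mk P) = 1 + pull p bott := by
    rw [bott, map_sub, map_one, pull_mk, add_sub_cancel]
  have hQq : KZero.of (.mk Q) = 1 - pull q bott := (pull_mk q _).symm.trans <| by
    rw [KZero.mk_compl, bott, Fintype.card_fin, map_sub, map_sub, map_natCast, map_one]
    push_cast
    ring
  have hpq (y : Y) (hy : Complex.normSq ((p y).1.1 - (q y).1.1) +
      ((p y).1.2 - (q y).1.2) ^ 2 = 0) : p y = q y := by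
    obtain ⟨h₁, h₂⟩ := (add_eq_zero_iff_of_nonneg (Complex.normSq_nonneg _) (sq_nonneg _)).1 hy
    exact Subtype.ext (Prod.ext (sub_eq_zero.1 (Complex.normSq_eq_zero.1 h₁))
      (sub_eq_zero.1 (pow_eq_zero_iff two_ne_zero |>.1 h₂)))
  obtain ⟨C, hC⟩ := isUnit_one_add_smul_sub_sq (e - f) (trace_compl_mul p q) (by fun_prop)
    (fun y => add_nonneg (Complex.normSq_nonneg _) (sq_nonneg _)) fun y hy => by
      rw [Matrix.map_sub _ (fun _ _ => rfl), h y (hpq y hy), sub_self]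
  have key := congrArg KZero.of <| ProjectiveClass.mk_eq_mk
    (A := (IdempotentMatrix.mul ⟨ι, e, he⟩ Q).add (.mul ⟨ι, f, hf⟩ P))
    (B := (IdempotentMatrix.mul ⟨ι, f, hf⟩ Q).add (.mul ⟨ι, e, he⟩ P)) |>.2 <|
    MurrayVonNeumann.exchange he hf P.isIdempotentElem Q.isIdempotentElem (hP.mul_mul_self _)
      ((hQ.mul_mul_self _).trans (by rw [Matrix.trace_mul_comm])) hC
  simp only [ProjectiveClass.mk_add, ProjectiveClass.mk_mul, map_add, map_mul, hPp, hQq] at key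
  linear_combination -key

theorem exchange [CompactSpace Y] {f g : C(Y, X)} {p q : C(Y, BlochSphere)}
    (h : ∀ y, p y = q y → f y = g y) (κ : KTheory X) :
    (pull f κ - pull g κ) * (pull p bott + pull q bott) = 0 := by
  induction κ using KZero.induction_on with
  | mk e =>
    rw [pull_mk, pull_mk]
    exact exchange_of_matrix (e.map (pullback f)).isIdempotentElem
      (e.map (pullback g)).isIdempotentElem fun y hy => by
        ext i j; exact congrArg (e.toMatrix i j) (h y hy)
  | sub κ κ' hκ hκ' =>
    rw [map_sub, map_sub, sub_sub_sub_comm, sub_mul, hκ, hκ', sub_zero]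

end KTheory

end Exchange

section Newton

variable {A : Type*} [NormedRing A]

/-- One Newton step for the equation `a² = a`. -/
def idempotentStep (a : A) : A := 3 * a ^ 2 - 2 * a ^ 3

theorem norm_idempotentStep_sub_le (a : A) :
    ‖idempotentStep a - a‖ ≤ (2 * ‖a‖ + 1) * ‖a ^ 2 - a‖ := by
  have h : idempotentStep a - a = (a ^ 2 - a) - (a * (a ^ 2 - a) + a * (a ^ 2 - a)) := by
    simp only [idempotentStep]; noncomm_ring
  have hmul := norm_mul_le a (a ^ 2 - a)
  rw [h]
  refine (norm_sub_le _ _).trans ?_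
  linarith [norm_add_le (a * (a ^ 2 - a)) (a * (a ^ 2 - a))]

theorem norm_sq_idempotentStep_sub_le {a : A} (h : ‖a ^ 2 - a‖ ≤ 1 / 12) :
    ‖idempotentStep a ^ 2 - idempotentStep a‖ ≤ ‖a ^ 2 - a‖ / 2 := by
  have hstep : idempotentStep a ^ 2 - idempotentStep a =
      (4 : ℤ) • ((a ^ 2 - a) * ((a ^ 2 - a) * (a ^ 2 - a))) -
        (3 : ℤ) • ((a ^ 2 - a) * (a ^ 2 - a)) := by
    simp only [idempotentStep]; noncomm_ring
  have h₂ := norm_mul_le (a ^ 2 - a) (a ^ 2 - a)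
  have h₃ := norm_mul_le (a ^ 2 - a) ((a ^ 2 - a) * (a ^ 2 - a))
  have h₄ := norm_zsmul_le (4 : ℤ) ((a ^ 2 - a) * ((a ^ 2 - a) * (a ^ 2 - a)))
  have h₅ := norm_zsmul_le (3 : ℤ) ((a ^ 2 - a) * (a ^ 2 - a))
  rw [hstep]
  refine (norm_sub_le _ _).trans ?_
  simp only [Int.norm_eq_abs, Nat.abs_ofNat, Int.cast_ofNat] at h₄ h₅
  nlinarith [norm_nonneg (a ^ 2 - a)]

theorem iterate_idempotentStep_bounds {a : A} {M δ : ℝ} (ha : ‖a‖ ≤ M) (hδ : ‖a ^ 2 - a‖ ≤ δ)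
    (h : 4 * (2 * M + 3) * δ ≤ 1) (k : ℕ) :
    ‖(idempotentStep^[k] a) ^ 2 - idempotentStep^[k] a‖ ≤ δ / 2 ^ k ∧
      ‖idempotentStep^[k] a - a‖ ≤ 2 * (2 * M + 3) * δ * (1 - 1 / 2 ^ k) ∧
      ‖idempotentStep^[k + 1] a - idempotentStep^[k] a‖ ≤ 2 * (2 * M + 3) * δ / 2 / 2 ^ k := by
  have hM : 0 ≤ M := (norm_nonneg a).trans ha
  have hδ0 : 0 ≤ δ := (norm_nonneg _).trans hδ
  set C := 2 * (2 * M + 3) * δ with hC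
  let s (k : ℕ) : A := idempotentStep^[k] a
  have hs (k : ℕ) : s (k + 1) = idempotentStep (s k) := Function.iterate_succ_apply' ..
  have hstep {k : ℕ} (h₁ : ‖s k ^ 2 - s k‖ ≤ δ / 2 ^ k) (h₂ : ‖s k - a‖ ≤ C * (1 - 1 / 2 ^ k)) :
      ‖s (k + 1) - s k‖ ≤ C / 2 / 2 ^ k := by
    have hsk : ‖s k‖ ≤ M + 1 / 2 := by
      have : C * (1 - 1 / 2 ^ k) ≤ C :=
        mul_le_of_le_one_right (by positivity) (sub_le_self _ (by positivity))
      linarith [norm_sub_norm_le (s k) a]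
    calc ‖s (k + 1) - s k‖
        ≤ (2 * ‖s k‖ + 1) * ‖s k ^ 2 - s k‖ := hs k ▸ norm_idempotentStep_sub_le _
      _ ≤ (2 * (M + 1 / 2) + 2) * (δ / 2 ^ k) := by gcongr; norm_num
      _ = C / 2 / 2 ^ k := by rw [hC]; ring
  suffices key : ‖s k ^ 2 - s k‖ ≤ δ / 2 ^ k ∧ ‖s k - a‖ ≤ C * (1 - 1 / 2 ^ k) from
    ⟨key.1, key.2, hstep key.1 key.2⟩
  induction k with
  | zero => simpa [s] using hδ
  | succ k ih =>
    have hpow : δ / 2 ^ k ≤ δ := div_le_self hδ0 (one_le_pow₀ one_le_two)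
    constructor
    · rw [hs, pow_succ _ k, ← div_div]
      refine (norm_sq_idempotentStep_sub_le ?_).trans (by linarith [ih.1])
      nlinarith [ih.1]
    · have htri := norm_sub_le_norm_sub_add_norm_sub (s (k + 1)) (s k) a
      have hsum : C / 2 / 2 ^ k + C * (1 - 1 / 2 ^ k) = C * (1 - 1 / 2 ^ (k + 1)) := by
        rw [pow_succ]; field_simp; ring
      linarith [hstep ih.1 ih.2, ih.2]

theorem exists_isIdempotentElem_norm_sub_le [CompleteSpace A] {a : A} {M δ : ℝ} (ha : ‖a‖ ≤ M)
    (hδ : ‖a ^ 2 - a‖ ≤ δ) (h : 4 * (2 * M + 3) * δ ≤ 1) :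
    ∃ p : A, IsIdempotentElem p ∧ ‖p - a‖ ≤ 2 * (2 * M + 3) * δ := by
  have hbound := iterate_idempotentStep_bounds ha hδ h
  have hdist (k : ℕ) : dist (idempotentStep^[k] a) (idempotentStep^[k + 1] a) ≤
      2 * (2 * M + 3) * δ / 2 / 2 ^ k := by
    rw [dist_comm, dist_eq_norm]; exact (hbound k).2.2
  obtain ⟨p, hp⟩ := cauchySeq_tendsto_of_complete (cauchySeq_of_le_geometric_two hdist)
  refine ⟨p, sub_eq_zero.1 ?_, ?_⟩
  · rw [← sq]
    refine tendsto_nhds_unique ((hp.pow 2).sub hp) (squeeze_zero_norm (fun k => (hbound k).1) ?_)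
    simpa [div_eq_mul_inv] using
      (tendsto_pow_atTop_nhds_zero_of_lt_one (r := (2 : ℝ)⁻¹) (by norm_num)
        (by norm_num)).const_mul δ
  · have := dist_le_of_le_geometric_two_of_tendsto₀ hdist hp
    rwa [dist_comm, dist_eq_norm] at this

end Newton

section AsymptoticHom

open Filter Topology

/-- A sequence of additive maps from a ring to normed rings that is multiplicative in the limit. -/
structure AsymptoticHom (A : Type*) [Ring A] (R : ℕ → Type*) [∀ n, NormedRing (R n)] where
  /-- The `n`-th map. -/
  toFun (n : ℕ) : A →+ R n
  map_one (n : ℕ) : toFun n 1 = 1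
  exists_norm_le (a : A) : ∃ C, ∀ n, ‖toFun n a‖ ≤ C
  tendsto_map_mul (a b : A) :
    Tendsto (fun n => ‖toFun n a * toFun n b - toFun n (a * b)‖) atTop (𝓝 0)

namespace AsymptoticHom

variable {A : Type*} [Ring A] {R : ℕ → Type*} [∀ n, NormedRing (R n)] (φ : AsymptoticHom A R)
  {ι κ μ : Type*}

/-- The sequence `x` is asymptotic to the images of `a`. -/
def Lifts (x : ∀ n, R n) (a : A) : Prop :=
  Tendsto (fun n => ‖x n - φ.toFun n a‖) atTop (𝓝 0)

/-- The sequence of matrices `x` is entrywise asymptotic to the images of `a`. -/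
def MatrixLifts (x : ∀ n, Matrix ι κ (R n)) (a : Matrix ι κ A) : Prop :=
  ∀ i j, φ.Lifts (fun n => x n i j) (a i j)

variable {φ}

theorem lifts_self (a : A) : φ.Lifts (fun n => φ.toFun n a) a := by
  simp [Lifts]

theorem Lifts.sub {x y : ∀ n, R n} {a b : A} (hx : φ.Lifts x a) (hy : φ.Lifts y b) :
    φ.Lifts (fun n => x n - y n) (a - b) := by
  refine squeeze_zero (fun n => norm_nonneg _) (fun n => ?_) (by simpa using Tendsto.add hx hy)
  rw [map_sub, sub_sub_sub_comm]
  exact norm_sub_le _ _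

theorem Lifts.mul {x y : ∀ n, R n} {a b : A} (hx : φ.Lifts x a) (hy : φ.Lifts y b) :
    φ.Lifts (fun n => x n * y n) (a * b) := by
  obtain ⟨C, hC⟩ := φ.exists_norm_le a
  obtain ⟨D, hD⟩ := φ.exists_norm_le b
  have hlim : Tendsto (fun n => ‖x n - φ.toFun n a‖ * (‖y n - φ.toFun n b‖ + D) +
      C * ‖y n - φ.toFun n b‖ + ‖φ.toFun n a * φ.toFun n b - φ.toFun n (a * b)‖) atTop (𝓝 0) := by
    simpa using ((Tendsto.mul hx (Tendsto.add_const D hy)).add (Tendsto.const_mul C hy)).add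
      (φ.tendsto_map_mul a b)
  refine squeeze_zero (fun n => norm_nonneg _) (fun n => ?_) hlim
  have hdecomp : x n * y n - φ.toFun n (a * b) =
      (x n - φ.toFun n a) * ((y n - φ.toFun n b) + φ.toFun n b) +
        φ.toFun n a * (y n - φ.toFun n b) +
        (φ.toFun n a * φ.toFun n b - φ.toFun n (a * b)) := by noncomm_ring
  rw [hdecomp]
  refine norm_add₃_le.trans ?_
  gcongr
  · exact (norm_mul_le _ _).trans (mul_le_mul_of_nonneg_left
      ((norm_add_le _ _).trans (by gcongr; exact hD n)) (norm_nonneg _))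
  · exact (norm_mul_le _ _).trans (by gcongr; exact hC n)

theorem Lifts.sum [Fintype ι] {x : ∀ n, ι → R n} {a : ι → A}
    (h : ∀ i, φ.Lifts (fun n => x n i) (a i)) :
    φ.Lifts (fun n => ∑ i, x n i) (∑ i, a i) := by
  have hlim : Tendsto (fun n => ∑ i, ‖x n i - φ.toFun n (a i)‖) atTop (𝓝 0) := by
    simpa using tendsto_finsetSum Finset.univ fun i _ => h i
  refine squeeze_zero (fun n => norm_nonneg _) (fun n => ?_) hlim
  rw [map_sum, ← Finset.sum_sub_distrib]
  exact norm_sum_le _ _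

theorem MatrixLifts.mul [Fintype κ] {x : ∀ n, Matrix ι κ (R n)} {y : ∀ n, Matrix κ μ (R n)}
    {a : Matrix ι κ A} {b : Matrix κ μ A} (hx : φ.MatrixLifts x a) (hy : φ.MatrixLifts y b) :
    φ.MatrixLifts (fun n => x n * y n) (a * b) := fun i j => by
  simp only [Matrix.mul_apply]
  exact Lifts.sum fun k => (hx i k).mul (hy k j)

theorem MatrixLifts.sub {x y : ∀ n, Matrix ι κ (R n)} {a b : Matrix ι κ A}
    (hx : φ.MatrixLifts x a) (hy : φ.MatrixLifts y b) :
    φ.MatrixLifts (fun n => x n - y n) (a - b) :=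
  fun i j => (hx i j).sub (hy i j)

theorem matrixLifts_map (a : Matrix ι κ A) : φ.MatrixLifts (fun n => a.map (φ.toFun n)) a :=
  fun i j => lifts_self (a i j)

section Norm

attribute [local instance] Matrix.linftyOpNormedRing

variable [Fintype ι] [DecidableEq ι]

theorem completeSpace_matrix (B : Type*) [NormedRing B] [CompleteSpace B] :
    @CompleteSpace (Matrix ι ι B) PseudoMetricSpace.toUniformSpace :=
  inferInstanceAs (CompleteSpace (ι → ι → B))

theorem linfty_opNorm_le_sum {B : Type*} [NormedRing B] (x : Matrix ι ι B) :
    ‖x‖ ≤ ∑ i, ∑ j, ‖x i j‖ := by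
  have hle : (Finset.univ.sup fun i => ∑ j, ‖x i j‖₊) ≤ ∑ i, ∑ j, ‖x i j‖₊ :=
    Finset.sup_le fun i hi =>
      Finset.single_le_sum (f := fun i => ∑ j, ‖x i j‖₊) (fun _ _ => zero_le) hi
  rw [Matrix.linfty_opNorm_def]
  simpa only [NNReal.coe_sum, coe_nnnorm] using NNReal.coe_le_coe.2 hle

theorem norm_apply_le_linfty_opNorm {B : Type*} [NormedRing B] (x : Matrix ι ι B) (i j : ι) :
    ‖x i j‖ ≤ ‖x‖ := by
  have hle : ‖x i j‖₊ ≤ Finset.univ.sup fun i => ∑ j, ‖x i j‖₊ :=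
    (Finset.single_le_sum (f := fun j => ‖x i j‖₊) (fun _ _ => zero_le)
      (Finset.mem_univ j)).trans (Finset.le_sup (f := fun i => ∑ j, ‖x i j‖₊) (Finset.mem_univ i))
  rw [Matrix.linfty_opNorm_def]
  exact_mod_cast hle

theorem matrixLifts_iff {x : ∀ n, Matrix ι ι (R n)} {a : Matrix ι ι A} :
    φ.MatrixLifts x a ↔ Tendsto (fun n => ‖x n - a.map (φ.toFun n)‖) atTop (𝓝 0) := by
  refine ⟨fun h => ?_, fun h i j => ?_⟩
  · refine squeeze_zero (fun n => norm_nonneg _) (fun n => linfty_opNorm_le_sum _) ?_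
    simpa using tendsto_finsetSum Finset.univ fun i _ =>
      tendsto_finsetSum Finset.univ fun j _ => h i j
  · exact squeeze_zero (fun n => norm_nonneg _)
      (fun n => norm_apply_le_linfty_opNorm (x n - a.map (φ.toFun n)) i j) h

theorem exists_matrix_norm_le (a : Matrix ι ι A) : ∃ M, ∀ n, ‖a.map (φ.toFun n)‖ ≤ M := by
  choose C hC using φ.exists_norm_le
  exact ⟨∑ i, ∑ j, C (a i j), fun n => (linfty_opNorm_le_sum _).trans <|
    Finset.sum_le_sum fun i _ => Finset.sum_le_sum fun j _ => hC (a i j) n⟩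

omit [DecidableEq ι] in
theorem exists_isIdempotentElem_matrixLifts [∀ n, CompleteSpace (R n)] {e : Matrix ι ι A}
    (he : IsIdempotentElem e) :
    ∃ p : ∀ n, Matrix ι ι (R n), (∀ n, IsIdempotentElem (p n)) ∧ φ.MatrixLifts p e := by
  classical
  obtain ⟨M, hM⟩ := exists_matrix_norm_le (φ := φ) e
  let a (n : ℕ) : Matrix ι ι (R n) := e.map (φ.toFun n)
  let δ (n : ℕ) : ℝ := ‖a n ^ 2 - a n‖
  have hδ : Tendsto δ atTop (𝓝 0) := by
    have h := (matrixLifts_map (φ := φ) e).mul (matrixLifts_map e)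
    rw [he.eq] at h
    simpa only [δ, sq] using matrixLifts_iff.1 h
  have hp (n : ℕ) : ∃ p : Matrix ι ι (R n), IsIdempotentElem p ∧
      (4 * (2 * M + 3) * δ n ≤ 1 → ‖p - a n‖ ≤ 2 * (2 * M + 3) * δ n) := by
    by_cases h : 4 * (2 * M + 3) * δ n ≤ 1
    · have := completeSpace_matrix (ι := ι) (R n)
      obtain ⟨p, hp, hpa⟩ := exists_isIdempotentElem_norm_sub_le (hM n) le_rfl h
      exact ⟨p, hp, fun _ => hpa⟩
    · exact ⟨0, mul_zero _, fun h' => absurd h' h⟩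
  choose p hp hpa using hp
  refine ⟨p, hp, matrixLifts_iff.2 (squeeze_zero' (.of_forall fun n => norm_nonneg _) ?_
    (by simpa using hδ.const_mul (2 * (2 * M + 3))))⟩
  have hsmall : ∀ᶠ n in atTop, 4 * (2 * M + 3) * δ n < 1 :=
    (hδ.const_mul (4 * (2 * M + 3))).eventually_lt_const (by simp)
  exact hsmall.mono fun n hn => hpa n hn.le

theorem eventually_isUnit_add_one_sub [∀ n, CompleteSpace (R n)] {x p : ∀ n, Matrix ι ι (R n)}
    {e : Matrix ι ι A} (hx : φ.MatrixLifts x e) (hp : φ.MatrixLifts p e) :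
    ∀ᶠ n in atTop, IsUnit (x n + (1 - p n)) := by
  have h := hp.sub hx
  rw [sub_self, matrixLifts_iff] at h
  filter_upwards [h.eventually_lt_const one_pos] with n hn
  rw [Matrix.map_zero _ (map_zero _), sub_zero] at hn
  have := completeSpace_matrix (ι := ι) (R n)
  convert isUnit_one_sub_of_norm_lt_one hn using 1
  abel

end Norm

theorem eventually_murrayVonNeumann {ι κ : Type} [Fintype ι] [Fintype κ]
    [∀ n, CompleteSpace (R n)] {e : Matrix ι ι A} {f : Matrix κ κ A}
    (he : IsIdempotentElem e) (hf : IsIdempotentElem f)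
    (h : MurrayVonNeumann e f) {p : ∀ n, Matrix ι ι (R n)} {q : ∀ n, Matrix κ κ (R n)}
    (hp : ∀ n, IsIdempotentElem (p n)) (hq : ∀ n, IsIdempotentElem (q n))
    (hpe : φ.MatrixLifts p e) (hqf : φ.MatrixLifts q f) :
    ∀ᶠ n in atTop, MurrayVonNeumann (p n) (q n) := by
  classical
  obtain ⟨a, b, rfl, rfl⟩ := h
  let u (n : ℕ) : Matrix ι κ (R n) := p n * a.map (φ.toFun n) * q n
  let v (n : ℕ) : Matrix κ ι (R n) := q n * b.map (φ.toFun n) * p n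
  have hu : φ.MatrixLifts u (a * b * a * (b * a)) := (hpe.mul (matrixLifts_map a)).mul hqf
  have hv : φ.MatrixLifts v (b * a * b * (a * b)) := (hqf.mul (matrixLifts_map b)).mul hpe
  have huv := hu.mul hv
  have hvu := hv.mul hu
  have he' : a * b * a * b = a * b := (Matrix.mul_assoc ..).trans he
  have hf' : b * a * b * a = b * a := (Matrix.mul_assoc ..).trans hf
  simp only [← Matrix.mul_assoc, he', hf'] at huv hvu
  filter_upwards [eventually_isUnit_add_one_sub huv hpe, eventually_isUnit_add_one_sub hvu hqf]
    with n hnp hnq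
  refine .of_isUnit (hp n) (hq n) ?_ ?_ ?_ ?_ hnp hnq
  · simp only [u, ← Matrix.mul_assoc, (hp n).eq]
  · simp only [u, Matrix.mul_assoc, (hq n).eq]
  · simp only [v, ← Matrix.mul_assoc, (hq n).eq]
  · simp only [v, Matrix.mul_assoc, (hp n).eq]

end AsymptoticHom

end AsymptoticHom

section Quantization

open Filter Topology
open scoped Matrix.Norms.L2Operator

/-- A sequence of unital contractions from the functions on a space to matrix algebras that is
multiplicative in the limit. -/
structure Quantization (S : Type*) [TopologicalSpace S] [CompactSpace S] (J : ℕ → Type)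
    [∀ n, Fintype (J n)] [∀ n, DecidableEq (J n)] where
  /-- The `n`-th contraction. -/
  toFun (n : ℕ) : C(S, ℂ) →ₗ[ℂ] Matrix (J n) (J n) ℂ
  map_one (n : ℕ) : toFun n 1 = 1
  norm_map_le (n : ℕ) (f : C(S, ℂ)) : ‖toFun n f‖ ≤ ‖f‖
  tendsto_map_mul (f g : C(S, ℂ)) :
    Tendsto (fun n => ‖toFun n f * toFun n g - toFun n (f * g)‖) atTop (𝓝 0)

namespace Quantization

variable {S : Type*} [TopologicalSpace S] [CompactSpace S] {J : ℕ → Type}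
  [∀ n, Fintype (J n)] [∀ n, DecidableEq (J n)] (T : Quantization S J)

theorem continuous_toFun (n : ℕ) : Continuous (T.toFun n) :=
  ((T.toFun n).mkContinuous 1 fun f => (T.norm_map_le n f).trans (one_mul _).ge).continuous

theorem norm_defect_sub_le (n : ℕ) (f g f' g' : C(S, ℂ)) :
    ‖T.toFun n f * T.toFun n g - T.toFun n (f * g)‖ ≤
      ‖T.toFun n f' * T.toFun n g' - T.toFun n (f' * g')‖ +
        2 * (‖f - f'‖ * ‖g‖ + ‖f'‖ * ‖g - g'‖) := by
  have hle (a b : C(S, ℂ)) : ‖T.toFun n a * T.toFun n b - T.toFun n (a * b)‖ ≤ 2 * (‖a‖ * ‖b‖) := by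
    refine (norm_sub_le _ _).trans ?_
    rw [two_mul]
    exact add_le_add ((norm_mul_le _ _).trans (by gcongr <;> exact T.norm_map_le n _))
      ((T.norm_map_le n _).trans (norm_mul_le _ _))
  have hsplit : T.toFun n f * T.toFun n g - T.toFun n (f * g) =
      (T.toFun n f' * T.toFun n g' - T.toFun n (f' * g')) +
        (T.toFun n (f - f') * T.toFun n g - T.toFun n ((f - f') * g)) +
        (T.toFun n f' * T.toFun n (g - g') - T.toFun n (f' * (g - g'))) := by
    simp only [sub_mul, mul_sub, map_sub]
    abel
  rw [hsplit, mul_add, ← add_assoc]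
  exact norm_add₃_le.trans (add_le_add_three le_rfl (hle _ _) (hle _ _))

variable (X : Type*) {Y : Type*} [TopologicalSpace X] [CompactSpace X] [TopologicalSpace Y]
  [CompactSpace Y]

variable {X} in
theorem eventually_forall_norm_defect_lt (f g : C(X, C(S, ℂ))) {ε : ℝ} (hε : 0 < ε) :
    ∀ᶠ n in atTop, ∀ x,
      ‖T.toFun n (f x) * T.toFun n (g x) - T.toFun n (f x * g x)‖ < ε := by
  have hloc (x₀ : X) : ∀ᶠ q : ℕ × X in atTop ×ˢ 𝓝 x₀,
      ‖T.toFun q.1 (f q.2) * T.toFun q.1 (g q.2) - T.toFun q.1 (f q.2 * g q.2)‖ < ε := by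
    have hx : Tendsto (fun x => 2 * (‖f x - f x₀‖ * ‖g x‖ + ‖f x₀‖ * ‖g x - g x₀‖)) (𝓝 x₀)
        (𝓝 0) := by
      have : Continuous fun x => 2 * (‖f x - f x₀‖ * ‖g x‖ + ‖f x₀‖ * ‖g x - g x₀‖) := by fun_prop
      simpa using this.tendsto x₀
    have h := ((T.tendsto_map_mul (f x₀) (g x₀)).comp tendsto_fst).add (hx.comp tendsto_snd)
    rw [add_zero] at h
    exact (h.eventually_lt_const hε).mono fun q hq => (T.norm_defect_sub_le ..).trans_lt hq
  have h := isCompact_univ.mem_prod_nhdsSet_of_forall (fun x _ => hloc x)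
  rw [nhdsSet_univ, ← principal_univ, ← eventually_iff, eventually_prod_principal_iff] at h
  exact h.mono fun n hn x => hn x (Set.mem_univ x)

/-- Fibrewise application of a quantization to functions on `X × S`. -/
noncomputable def asymptoticHom :
    AsymptoticHom C(X × S, ℂ) (fun n => C(X, Matrix (J n) (J n) ℂ)) where
  toFun n :=
    { toFun f := ⟨fun x => T.toFun n (f.curry x), (T.continuous_toFun n).comp f.curry.continuous⟩
      map_zero' := by ext1; exact map_zero (T.toFun n)
      map_add' f g := by ext1 x; exact map_add (T.toFun n) (f.curry x) (g.curry x) }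
  map_one n := by ext1; exact T.map_one n
  exists_norm_le f := ⟨‖f‖, fun n => (ContinuousMap.norm_le _ (norm_nonneg f)).2 fun x =>
    (T.norm_map_le n _).trans <| (ContinuousMap.norm_le _ (norm_nonneg f)).2 fun s =>
      f.norm_coe_le_norm (x, s)⟩
  tendsto_map_mul f g := by
    refine tendsto_order.2 ⟨fun ε hε => .of_forall fun n => hε.trans_le (norm_nonneg _),
      fun ε hε => ?_⟩
    exact (T.eventually_forall_norm_defect_lt f.curry g.curry hε).mono fun n hn =>
      (ContinuousMap.norm_lt_iff _ hε).2 hn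

end Quantization

/-- Matrices of matrix valued functions as matrices of scalar functions. -/
noncomputable def flatten {X : Type*} [TopologicalSpace X] {ι κ J : Type}
    (p : Matrix ι κ C(X, Matrix J J ℂ)) :
    Matrix (ι × J) (κ × J) C(X, ℂ) :=
  .of fun i j => ⟨fun x => p i.1 j.1 x i.2 j.2, by
    exact (continuous_apply_apply i.2 j.2).comp (p i.1 j.1).continuous⟩

section Flatten

variable {X : Type*} [TopologicalSpace X] {ι κ J : Type}

variable [Fintype κ] [Fintype J]

theorem flatten_mul {μ : Type} (p : Matrix ι κ C(X, Matrix J J ℂ))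
    (q : Matrix κ μ C(X, Matrix J J ℂ)) : flatten (p * q) = flatten p * flatten q := by
  ext i j x
  simp [flatten, Matrix.mul_apply, ContinuousMap.sum_apply, Fintype.sum_prod_type, Matrix.sum_apply]

theorem isIdempotentElem_flatten {p : Matrix κ κ C(X, Matrix J J ℂ)} (hp : IsIdempotentElem p) :
    IsIdempotentElem (flatten p) := by
  rw [IsIdempotentElem, ← flatten_mul, hp.eq]

theorem MurrayVonNeumann.flatten [Fintype ι] [DecidableEq J] {p : Matrix ι ι C(X, Matrix J J ℂ)}
    {q : Matrix κ κ C(X, Matrix J J ℂ)} (h : MurrayVonNeumann p q) :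
    MurrayVonNeumann (flatten p) (flatten q) := by
  obtain ⟨a, b, rfl, rfl⟩ := h
  exact ⟨_, _, (flatten_mul a b).symm, (flatten_mul b a).symm⟩

end Flatten

namespace Quantization

variable {S : Type*} [TopologicalSpace S] [CompactSpace S] {J : ℕ → Type}
  [∀ n, Fintype (J n)] [∀ n, DecidableEq (J n)] (T : Quantization S J)
  {X Y : Type*} [TopologicalSpace X] [CompactSpace X] [TopologicalSpace Y] [CompactSpace Y]

/-- A sequence of idempotents lifting `e`, obtained from Newton's iteration. -/
noncomputable def lift (e : IdempotentMatrix C(X × S, ℂ)) (n : ℕ) :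
    Matrix e.index e.index C(X, Matrix (J n) (J n) ℂ) :=
  (AsymptoticHom.exists_isIdempotentElem_matrixLifts (φ := T.asymptoticHom X)
    e.isIdempotentElem).choose n

theorem isIdempotentElem_lift (e : IdempotentMatrix C(X × S, ℂ)) (n : ℕ) :
    IsIdempotentElem (T.lift e n) :=
  (AsymptoticHom.exists_isIdempotentElem_matrixLifts (φ := T.asymptoticHom X)
    e.isIdempotentElem).choose_spec.1 n

theorem matrixLifts_lift (e : IdempotentMatrix C(X × S, ℂ)) :
    (T.asymptoticHom X).MatrixLifts (T.lift e) e.toMatrix :=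
  (AsymptoticHom.exists_isIdempotentElem_matrixLifts (φ := T.asymptoticHom X)
    e.isIdempotentElem).choose_spec.2

/-- The germ at infinity of the classes of the values of a sequence of idempotents. -/
noncomputable def classGerm {ι : Type} [Fintype ι] [DecidableEq ι]
    (p : ∀ n, Matrix ι ι C(X, Matrix (J n) (J n) ℂ)) (hp : ∀ n, IsIdempotentElem (p n)) :
    Germ (atTop : Filter ℕ) (KTheory X) :=
  ((fun n => KZero.mk ⟨ι × J n, flatten (p n), isIdempotentElem_flatten (hp n)⟩ : ℕ → KTheory X) :
    Germ (atTop : Filter ℕ) (KTheory X))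

variable {T} in
theorem classGerm_eq_of_matrixLifts {ι κ : Type} [Fintype ι] [DecidableEq ι] [Fintype κ]
    [DecidableEq κ] {e : Matrix ι ι C(X × S, ℂ)} {f : Matrix κ κ C(X × S, ℂ)}
    (he : IsIdempotentElem e) (hf : IsIdempotentElem f) (h : MurrayVonNeumann e f)
    {p : ∀ n, Matrix ι ι C(X, Matrix (J n) (J n) ℂ)}
    {q : ∀ n, Matrix κ κ C(X, Matrix (J n) (J n) ℂ)}
    (hp : ∀ n, IsIdempotentElem (p n)) (hq : ∀ n, IsIdempotentElem (q n))
    (hpe : (T.asymptoticHom X).MatrixLifts p e) (hqf : (T.asymptoticHom X).MatrixLifts q f) :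
    classGerm p hp = classGerm q hq :=
  Germ.coe_eq.2 <| (AsymptoticHom.eventually_murrayVonNeumann he hf h hp hq hpe hqf).mono
    fun _ hn => congrArg KZero.of (ProjectiveClass.mk_eq_mk.2 hn.flatten)

variable {T} in
theorem matrixLifts_fromBlocks {ι κ : Type} {e : Matrix ι ι C(X × S, ℂ)}
    {f : Matrix κ κ C(X × S, ℂ)} {p : ∀ n, Matrix ι ι C(X, Matrix (J n) (J n) ℂ)}
    {q : ∀ n, Matrix κ κ C(X, Matrix (J n) (J n) ℂ)}
    (hp : (T.asymptoticHom X).MatrixLifts p e) (hq : (T.asymptoticHom X).MatrixLifts q f) :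
    (T.asymptoticHom X).MatrixLifts (fun n => fromBlocks (p n) 0 0 (q n))
      (fromBlocks e 0 0 f) := by
  rintro (i | i) (j | j)
  · exact hp i j
  · simp [AsymptoticHom.Lifts]
  · simp [AsymptoticHom.Lifts]
  · exact hq i j

/-- The pushforward along `X × S → X` determined by a quantization of `S`. -/
noncomputable def pushforward : KTheory (X × S) →+ Germ (atTop : Filter ℕ) (KTheory X) :=
  KZero.liftAdd
    { toFun := Quotient.lift (fun e => classGerm (T.lift e) (T.isIdempotentElem_lift e))
        fun e f h => classGerm_eq_of_matrixLifts e.isIdempotentElem f.isIdempotentElem h _ _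
          (T.matrixLifts_lift e) (T.matrixLifts_lift f)
      map_zero' := Germ.coe_eq.2 <| .of_forall fun n => by
        exact (congrArg KZero.of <| ProjectiveClass.mk_eq_zero <| Matrix.ext
          fun (i : Empty × J n) => i.1.elim).trans (map_zero KZero.of)
      map_add' := by
        rintro ⟨e⟩ ⟨f⟩
        refine (classGerm_eq_of_matrixLifts (e.add f).isIdempotentElem (e.add f).isIdempotentElem
          (.refl (e.add f).isIdempotentElem) (T.isIdempotentElem_lift (e.add f)) ?_
          (T.matrixLifts_lift (e.add f))
          (matrixLifts_fromBlocks (T.matrixLifts_lift e) (T.matrixLifts_lift f))).trans ?_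
        · intro n
          rw [IsIdempotentElem, fromBlocks_multiply]
          simp [(T.isIdempotentElem_lift e n).eq, (T.isIdempotentElem_lift f n).eq]
        · refine Germ.coe_eq.2 <| .of_forall fun n => ?_
          refine .trans ?_ (map_add KZero.of _ _)
          refine congrArg KZero.of <| ProjectiveClass.mk_eq_mk_of_equiv (Equiv.sumProdDistrib ..) ?_
          rintro ⟨i | i, j⟩ ⟨i' | i', j'⟩ <;> rfl }

theorem pushforward_mk {e : IdempotentMatrix C(X × S, ℂ)}
    {p : ∀ n, Matrix e.index e.index C(X, Matrix (J n) (J n) ℂ)} (hp : ∀ n, IsIdempotentElem (p n))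
    (hpe : (T.asymptoticHom X).MatrixLifts p e.toMatrix) :
    T.pushforward (KZero.mk e) = classGerm p hp :=
  (KZero.liftAdd_of _ _).trans <| classGerm_eq_of_matrixLifts e.isIdempotentElem e.isIdempotentElem
    (.refl e.isIdempotentElem) (T.isIdempotentElem_lift e) hp (T.matrixLifts_lift e) hpe

theorem pushforward_one :
    T.pushforward (1 : KTheory (X × S)) =
      ((fun n => (Fintype.card (J n) : KTheory X) : ℕ → KTheory X) : Germ atTop (KTheory X)) := by
  refine (T.pushforward_mk (e := .free _ Unit) (p := fun n => 1) (fun n => .one) ?_).trans ?_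
  · rintro ⟨⟩ ⟨⟩
    simp [AsymptoticHom.Lifts, (T.asymptoticHom X).map_one]
  · refine Germ.coe_eq.2 <| .of_forall fun n => ?_
    refine (congrArg KZero.of (ProjectiveClass.mk_eq_mk_of_equiv
      (B := .free C(X, ℂ) (Unit × J n)) (.refl (Unit × J n)) ?_)).trans ?_
    · rintro ⟨⟨⟩, i⟩ ⟨⟨⟩, j⟩
      ext x
      simp [flatten, Matrix.one_apply, apply_ite (fun f : C(X, ℂ) => f x)]
    · rw [ProjectiveClass.mk_free, map_natCast, Fintype.card_prod, Fintype.card_unit, one_mul]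

theorem asymptoticHom_pullback_fst_mul (a : C(X, ℂ)) (f : C(X × S, ℂ)) (n : ℕ) :
    (T.asymptoticHom X).toFun n (pullback .fst a * f) = a • (T.asymptoticHom X).toFun n f := by
  ext1 x
  exact map_smul (T.toFun n) (a x) (f.curry x)

variable {T} in
theorem lifts_pullback_fst_mul (a : C(X, ℂ)) {f : C(X × S, ℂ)}
    {x : ∀ n, C(X, Matrix (J n) (J n) ℂ)} (hx : (T.asymptoticHom X).Lifts x f) :
    (T.asymptoticHom X).Lifts (fun n => a • x n) (pullback .fst a * f) := by
  refine squeeze_zero (fun n => norm_nonneg _) (fun n => ?_)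
    (by simpa using Tendsto.const_mul ‖a‖ hx)
  rw [asymptoticHom_pullback_fst_mul]
  refine (ContinuousMap.norm_le _ (by positivity)).2 fun y => ?_
  have hsub : (a • x n - a • (T.asymptoticHom X).toFun n f) y =
      a y • (x n - (T.asymptoticHom X).toFun n f) y := (smul_sub (a y) (x n y) _).symm
  rw [hsub]
  refine (norm_smul_le (a y) _).trans ?_
  gcongr
  · exact a.norm_coe_le_norm y
  · exact ContinuousMap.norm_coe_le_norm _ y

omit [CompactSpace X] in
theorem isIdempotentElem_kroneckerMap_smul {ι κ J : Type} [Fintype ι] [Fintype κ] [Fintype J]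
    {e : Matrix ι ι C(X, ℂ)} {p : Matrix κ κ C(X, Matrix J J ℂ)}
    (he : IsIdempotentElem e) (hp : IsIdempotentElem p) :
    IsIdempotentElem (Matrix.kroneckerMap (fun a b => a • b) e p) := by
  classical
  have h := Matrix.kroneckerMapBilinear_mul_mul (LinearMap.lsmul C(X, ℂ) C(X, Matrix J J ℂ))
    (fun a b a' b' => by ext1 x; simp [smul_smul, mul_comm]) e e p p
  rw [he.eq, hp.eq] at h
  exact h.symm

theorem pushforward_pull_fst_mul (a : KTheory X) (y : KTheory (X × S)) :
    T.pushforward (KTheory.pull .fst a * y) = (a : Germ atTop (KTheory X)) * T.pushforward y := by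
  induction a using KZero.induction_on with
  | sub a b ha hb =>
    rw [map_sub, sub_mul, map_sub, ha, hb, ← sub_mul]
    rfl
  | mk e =>
    induction y using KZero.induction_on with
    | sub y z hy hz => rw [mul_sub, map_sub, hy, hz, map_sub, mul_sub]
    | mk f =>
      rw [KTheory.pull_mk, KZero.mk, KZero.mk, ← map_mul, ← ProjectiveClass.mk_mul]
      refine (T.pushforward_mk (e := .mul _ _) (p := fun n => Matrix.kroneckerMap
        (fun a b => a • b) e.toMatrix (T.lift f n)) (fun n => isIdempotentElem_kroneckerMap_smul
          e.isIdempotentElem (T.isIdempotentElem_lift f n)) ?_).trans ?_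
      · exact fun i j => lifts_pullback_fst_mul _ (T.matrixLifts_lift f i.2 j.2)
      · rw [T.pushforward_mk (T.isIdempotentElem_lift f) (T.matrixLifts_lift f)]
        refine Germ.coe_eq.2 <| .of_forall fun n => ?_
        refine .trans ?_ (map_mul KZero.of _ _)
        exact congrArg KZero.of <| ProjectiveClass.mk_eq_mk_of_equiv (Equiv.prodAssoc ..)
          fun i j => rfl

theorem pushforward_pull_prodMap (f : C(X, Y)) (y : KTheory (Y × S)) :
    T.pushforward (KTheory.pull (f.prodMap (.id S)) y) =
      (T.pushforward y).map (KTheory.pull f) := by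
  induction y using KZero.induction_on with
  | sub y z hy hz =>
    rw [map_sub, map_sub, hy, hz, map_sub]
    induction T.pushforward y, T.pushforward z using Germ.inductionOn₂ with
    | h a b => exact Germ.coe_eq.2 <| .of_forall fun n => (map_sub (KTheory.pull f) _ _).symm
  | mk e =>
    rw [KTheory.pull_mk, T.pushforward_mk (T.isIdempotentElem_lift e) (T.matrixLifts_lift e)]
    let F (n : ℕ) : C(Y, Matrix (J n) (J n) ℂ) →+* C(X, Matrix (J n) (J n) ℂ) :=
      (ContinuousMap.compRightAlgHom ℂ (Matrix (J n) (J n) ℂ) f).toRingHom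
    refine (T.pushforward_mk (e := e.map (pullback _)) (p := fun n => (T.lift e n).map (F n))
      (fun n => (T.isIdempotentElem_lift e n).map (F n).mapMatrix) fun i j => ?_).trans ?_
    · refine squeeze_zero (fun n => norm_nonneg _) (fun n => ?_) (T.matrixLifts_lift e i j)
      exact (ContinuousMap.norm_le _ (norm_nonneg _)).2 fun x =>
        ContinuousMap.norm_coe_le_norm (T.lift e n i j - (T.asymptoticHom Y).toFun n _) (f x)
    · exact Germ.coe_eq.2 <| .of_forall fun n => (KTheory.pull_mk f
        ⟨e.index × J n, flatten (T.lift e n),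
          isIdempotentElem_flatten (T.isIdempotentElem_lift e n)⟩).symm

end Quantization

end Quantization

section Compression

open Filter Topology
open scoped Matrix.Norms.L2Operator

variable {S : Type*} [TopologicalSpace S] {G J : Type} [Fintype G] [DecidableEq G]

/-- Compression of multiplication operators on a discrete set of points along an isometry `V`. -/
noncomputable def compression (V : Matrix G J ℂ) (p : G → S) : C(S, ℂ) →ₗ[ℂ] Matrix J J ℂ where
  toFun f := Vᴴ * diagonal (f ∘ p) * V
  map_add' f g := by
    rw [← Matrix.add_mul, ← Matrix.mul_add, diagonal_add]
    rfl
  map_smul' c f := by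
    rw [RingHom.id_apply, ← Matrix.smul_mul, ← Matrix.mul_smul, ← diagonal_smul]
    rfl

theorem compression_apply (V : Matrix G J ℂ) (p : G → S) (f : C(S, ℂ)) :
    compression V p f = Vᴴ * diagonal (f ∘ p) * V := rfl

theorem compression_star (V : Matrix G J ℂ) (p : G → S) (f : C(S, ℂ)) :
    compression V p (star f) = (compression V p f)ᴴ := by
  simp only [compression_apply, conjTranspose_mul, diagonal_conjTranspose,
    conjTranspose_conjTranspose, Matrix.mul_assoc]
  rfl

variable [Fintype J] [DecidableEq J]

/-- The distance of multiplication by `f` from leaving the range of the isometry `V` invariant. -/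
noncomputable def compressionDefect (V : Matrix G J ℂ) (p : G → S) (f : C(S, ℂ)) : ℝ :=
  ‖diagonal (f ∘ p) * V - V * compression V p f‖

theorem norm_diagonal_comp_le [CompactSpace S] (f : C(S, ℂ)) (p : G → S) :
    ‖diagonal (f ∘ p)‖ ≤ ‖f‖ := by
  rw [l2_opNorm_diagonal]
  exact (pi_norm_le_iff_of_nonneg (norm_nonneg f)).2 fun x => f.norm_coe_le_norm (p x)

theorem compressionDefect_add_le (V : Matrix G J ℂ) (p : G → S) (f g : C(S, ℂ)) :
    compressionDefect V p (f + g) ≤ compressionDefect V p f + compressionDefect V p g := by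
  have : diagonal ((f + g) ∘ p) = diagonal (f ∘ p) + diagonal (g ∘ p) := (diagonal_add ..).symm
  rw [compressionDefect, this, map_add, Matrix.add_mul, Matrix.mul_add, add_sub_add_comm]
  exact norm_add_le _ _

variable {V : Matrix G J ℂ} (hV : Vᴴ * V = 1) (p : G → S)
include hV

omit [DecidableEq G] in
theorem l2_opNorm_le_one_of_conjTranspose_mul_self : ‖V‖ ≤ 1 := by
  have h : ‖V‖ * ‖V‖ ≤ 1 := by
    rw [← l2_opNorm_conjTranspose_mul_self, hV, ← diagonal_one, l2_opNorm_diagonal]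
    exact (pi_norm_le_iff_of_nonneg zero_le_one).2 fun _ => norm_one.le
  nlinarith [norm_nonneg V]

omit [DecidableEq G] in
theorem norm_conjTranspose_mul_le_of_isometry {κ : Type} [Fintype κ] [DecidableEq κ]
    (A : Matrix G κ ℂ) : ‖Vᴴ * A‖ ≤ ‖A‖ := by
  classical
  exact (l2_opNorm_mul _ _).trans <| mul_le_of_le_one_left (norm_nonneg A) <|
    (l2_opNorm_conjTranspose V).trans_le (l2_opNorm_le_one_of_conjTranspose_mul_self hV)

omit [DecidableEq G] in
theorem norm_mul_le_of_isometry {κ : Type} [Fintype κ] [DecidableEq κ] (A : Matrix J κ ℂ) :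
    ‖V * A‖ ≤ ‖A‖ :=
  (l2_opNorm_mul _ _).trans <| mul_le_of_le_one_left (norm_nonneg A)
    (l2_opNorm_le_one_of_conjTranspose_mul_self hV)

omit [Fintype J] in
theorem compression_one : compression V p 1 = 1 := by
  have : diagonal ((1 : C(S, ℂ)) ∘ p) = (1 : Matrix G G ℂ) := diagonal_one
  rw [compression_apply, this, Matrix.mul_one, hV]

theorem norm_compression_sub_le (f : C(S, ℂ)) (A : Matrix J J ℂ) :
    ‖compression V p f - A‖ ≤ ‖diagonal (f ∘ p) * V - V * A‖ := by
  have : compression V p f - A = Vᴴ * (diagonal (f ∘ p) * V - V * A) := by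
    rw [Matrix.mul_sub, ← Matrix.mul_assoc, ← Matrix.mul_assoc, hV, Matrix.one_mul,
      compression_apply]
  rw [this]
  exact norm_conjTranspose_mul_le_of_isometry hV _

theorem compressionDefect_le (f : C(S, ℂ)) (A : Matrix J J ℂ) :
    compressionDefect V p f ≤ 2 * ‖diagonal (f ∘ p) * V - V * A‖ := by
  have : diagonal (f ∘ p) * V - V * compression V p f =
      (diagonal (f ∘ p) * V - V * A) - V * (compression V p f - A) := by
    rw [Matrix.mul_sub]
    abel
  rw [compressionDefect, this, two_mul]
  exact (norm_sub_le _ _).trans <| add_le_add_right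
    ((norm_mul_le_of_isometry hV _).trans (norm_compression_sub_le hV p f A)) _

variable [CompactSpace S]

theorem norm_compression_le (f : C(S, ℂ)) : ‖compression V p f‖ ≤ ‖f‖ := by
  refine (l2_opNorm_mul _ _).trans ?_
  refine (mul_le_of_le_one_right (norm_nonneg _)
    (l2_opNorm_le_one_of_conjTranspose_mul_self hV)).trans ?_
  exact (norm_conjTranspose_mul_le_of_isometry hV _).trans (norm_diagonal_comp_le f p)

theorem compressionDefect_le_add (f g : C(S, ℂ)) :
    compressionDefect V p f ≤ 2 * (‖f - g‖ + compressionDefect V p g) := by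
  have : diagonal (f ∘ p) * V - V * compression V p g =
      diagonal ((f - g) ∘ p) * V + (diagonal (g ∘ p) * V - V * compression V p g) := by
    rw [← add_sub_assoc, ← Matrix.add_mul, diagonal_add]
    congr
    exact funext fun x => (sub_add_cancel (f (p x)) (g (p x))).symm
  refine (compressionDefect_le hV p f (compression V p g)).trans ?_
  rw [this]
  gcongr
  refine (norm_add_le _ _).trans ?_
  rw [compressionDefect]
  gcongr
  refine (l2_opNorm_mul _ _).trans <| (mul_le_of_le_one_right (norm_nonneg _)
    (l2_opNorm_le_one_of_conjTranspose_mul_self hV)).trans (norm_diagonal_comp_le _ p)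

theorem compressionDefect_mul_le (f g : C(S, ℂ)) :
    compressionDefect V p (f * g) ≤
      2 * (‖f‖ * compressionDefect V p g + compressionDefect V p f * ‖g‖) := by
  have hfg : diagonal ((f * g) ∘ p) = diagonal (f ∘ p) * diagonal (g ∘ p) :=
    (diagonal_mul_diagonal ..).symm
  have : diagonal ((f * g) ∘ p) * V - V * (compression V p f * compression V p g) =
      diagonal (f ∘ p) * (diagonal (g ∘ p) * V - V * compression V p g) +
        (diagonal (f ∘ p) * V - V * compression V p f) * compression V p g := by
    simp only [hfg, Matrix.mul_sub, Matrix.sub_mul, Matrix.mul_assoc]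
    abel
  refine (compressionDefect_le hV p _ (compression V p f * compression V p g)).trans ?_
  rw [this]
  gcongr
  refine (norm_add_le _ _).trans (add_le_add ?_ ?_)
  · exact (l2_opNorm_mul _ _).trans (by gcongr; exacts [norm_diagonal_comp_le f p, le_rfl])
  · exact (l2_opNorm_mul _ _).trans
      (mul_le_mul_of_nonneg_left (norm_compression_le hV p g) (norm_nonneg _))

theorem norm_compression_mul_sub_le (f g : C(S, ℂ)) :
    ‖compression V p f * compression V p g - compression V p (f * g)‖ ≤
      ‖f‖ * compressionDefect V p g := by
  have hfg : diagonal ((f * g) ∘ p) = diagonal (f ∘ p) * diagonal (g ∘ p) :=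
    (diagonal_mul_diagonal ..).symm
  have : compression V p (f * g) - compression V p f * compression V p g =
      Vᴴ * (diagonal (f ∘ p) * (diagonal (g ∘ p) * V - V * compression V p g)) := by
    rw [compression_apply V p (f * g), compression_apply V p f, hfg]
    simp only [Matrix.mul_sub, Matrix.mul_assoc]
  rw [norm_sub_rev, this]
  refine (norm_conjTranspose_mul_le_of_isometry hV _).trans ((l2_opNorm_mul _ _).trans ?_)
  gcongr
  exacts [norm_diagonal_comp_le f p, le_rfl]

end Compression

section AsymptoticallyInvariant

open Filter Topology
open scoped Matrix.Norms.L2Operator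

variable {S : Type*} [TopologicalSpace S] [CompactSpace S] {G J : ℕ → Type} [∀ n, Fintype (G n)]
  [∀ n, DecidableEq (G n)] [∀ n, Fintype (J n)] [∀ n, DecidableEq (J n)]
  (V : ∀ n, Matrix (G n) (J n) ℂ) (hV : ∀ n, (V n)ᴴ * V n = 1) (p : ∀ n, G n → S)

variable {V p} in
omit [CompactSpace S] in
theorem tendsto_compressionDefect {f : C(S, ℂ)} {A : ∀ n, Matrix (J n) (J n) ℂ}
    (hV : ∀ n, (V n)ᴴ * V n = 1)
    (h : Tendsto (fun n => ‖diagonal (f ∘ p n) * V n - V n * A n‖) atTop (𝓝 0)) :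
    Tendsto (fun n => compressionDefect (V n) (p n) f) atTop (𝓝 0) :=
  squeeze_zero (fun _ => norm_nonneg _) (fun n => compressionDefect_le (hV n) (p n) f (A n))
    (by simpa using h.const_mul 2)

/-- The functions such that multiplication by them and by their conjugates leaves the ranges of a
sequence of isometries invariant in the limit. -/
noncomputable def asymptoticallyInvariant : StarSubalgebra ℂ C(S, ℂ) where
  carrier := {f | Tendsto (fun n => compressionDefect (V n) (p n) f) atTop (𝓝 0) ∧
    Tendsto (fun n => compressionDefect (V n) (p n) (star f)) atTop (𝓝 0)}
  mul_mem' {f g} hf hg := by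
    have hmul {f g : C(S, ℂ)} (hf : Tendsto (fun n => compressionDefect (V n) (p n) f) atTop (𝓝 0))
        (hg : Tendsto (fun n => compressionDefect (V n) (p n) g) atTop (𝓝 0)) :
        Tendsto (fun n => compressionDefect (V n) (p n) (f * g)) atTop (𝓝 0) :=
      squeeze_zero (fun _ => norm_nonneg _) (fun n => compressionDefect_mul_le (hV n) (p n) f g)
        (by simpa using ((hg.const_mul ‖f‖).add (hf.mul_const ‖g‖)).const_mul 2)
    exact ⟨hmul hf.1 hg.1, by rw [star_mul]; exact hmul hg.2 hf.2⟩
  add_mem' {f g} hf hg := by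
    have hadd {f g : C(S, ℂ)} (hf : Tendsto (fun n => compressionDefect (V n) (p n) f) atTop (𝓝 0))
        (hg : Tendsto (fun n => compressionDefect (V n) (p n) g) atTop (𝓝 0)) :
        Tendsto (fun n => compressionDefect (V n) (p n) (f + g)) atTop (𝓝 0) :=
      squeeze_zero (fun _ => norm_nonneg _) (fun n => compressionDefect_add_le (V n) (p n) f g)
        (by simpa using hf.add hg)
    exact ⟨hadd hf.1 hg.1, by rw [star_add]; exact hadd hf.2 hg.2⟩
  algebraMap_mem' c := by
    have hc (c : ℂ) :
        Tendsto (fun n => compressionDefect (V n) (p n) (algebraMap ℂ C(S, ℂ) c)) atTop (𝓝 0) := by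
      refine tendsto_compressionDefect (A := fun n => c • 1) hV ?_
      have (n : ℕ) : diagonal (algebraMap ℂ C(S, ℂ) c ∘ p n) * V n =
          V n * (c • (1 : Matrix (J n) (J n) ℂ)) := by
        ext i j
        simp [diagonal_mul]
      simp [this]
    exact ⟨hc c, by rw [← algebraMap_star_comm]; exact hc _⟩
  star_mem' := fun h => ⟨h.2, by rw [star_star]; exact h.1⟩

theorem tendsto_compressionDefect_of_separatesPoints
    (h : (asymptoticallyInvariant V hV p).SeparatesPoints) (f : C(S, ℂ)) :
    Tendsto (fun n => compressionDefect (V n) (p n) f) atTop (𝓝 0) := by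
  refine tendsto_order.2 ⟨fun ε hε => .of_forall fun n => hε.trans_le (norm_nonneg _),
    fun ε hε => ?_⟩
  have hf : f ∈ (asymptoticallyInvariant V hV p).topologicalClosure := by
    rw [ContinuousMap.starSubalgebra_topologicalClosure_eq_top_of_separatesPoints _ h]
    trivial
  obtain ⟨g, hg, hfg⟩ := Metric.mem_closure_iff.1 hf (ε / 4) (by positivity)
  refine (hg.1.eventually_lt_const (show 0 < ε / 4 by positivity)).mono fun n hn => ?_
  rw [dist_eq_norm] at hfg
  linarith [compressionDefect_le_add (hV n) (p n) f g]

/-- The quantization given by compressions along asymptotically invariant isometries. -/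
noncomputable def Quantization.ofCompression
    (h : (asymptoticallyInvariant V hV p).SeparatesPoints) : Quantization S J where
  toFun n := compression (V n) (p n)
  map_one n := compression_one (hV n) (p n)
  norm_map_le n f := norm_compression_le (hV n) (p n) f
  tendsto_map_mul f g :=
    squeeze_zero (fun _ => norm_nonneg _)
      (fun n => norm_compression_mul_sub_le (hV n) (p n) f g)
      (by simpa using (tendsto_compressionDefect_of_separatesPoints V hV p h g).const_mul ‖f‖)

end AsymptoticallyInvariant

namespace Quantization

open Filter Topology
open scoped Matrix.Norms.L2Operator

variable {S : Type*} [TopologicalSpace S] [CompactSpace S] {J κ : ℕ → Type}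
  [∀ n, Fintype (J n)] [∀ n, DecidableEq (J n)] [∀ n, Fintype (κ n)] [∀ n, DecidableEq (κ n)]
  (T : Quantization S J) {X : Type*} [TopologicalSpace X] [CompactSpace X]

theorem pushforward_pull_snd_mk (e : IdempotentMatrix C(S, ℂ))
    (B : ∀ n, e.index → Matrix (J n) (κ n) ℂ) (hB : ∀ n, ∑ i, (B n i)ᴴ * B n i = 1)
    (hlim : ∀ i j,
      Tendsto (fun n => ‖B n i * (B n j)ᴴ - T.toFun n (e.toMatrix i j)‖) atTop (𝓝 0)) :
    T.pushforward (KTheory.pull .snd (KZero.mk e) : KTheory (X × S)) =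
      ((fun n => (Fintype.card (κ n) : KTheory X) : ℕ → KTheory X) : Germ atTop (KTheory X)) := by
  let p (n : ℕ) : Matrix e.index e.index C(X, Matrix (J n) (J n) ℂ) :=
    .of fun i j => .const X (B n i * (B n j)ᴴ)
  have hp (n : ℕ) : IsIdempotentElem (p n) := by
    ext1 i j
    ext1 x
    simp only [p, Matrix.mul_apply, of_apply, ContinuousMap.sum_apply, ContinuousMap.mul_apply,
      ContinuousMap.const_apply, Matrix.mul_assoc]
    simp only [← Matrix.mul_assoc (B n _)ᴴ, ← Matrix.mul_sum, ← Matrix.sum_mul, hB n,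
      Matrix.one_mul]
  rw [KTheory.pull_mk]
  refine (T.pushforward_mk (e := e.map (pullback .snd)) hp fun i j => ?_).trans ?_
  · refine squeeze_zero (fun n => norm_nonneg _) (fun n => ?_) (hlim i j)
    exact (ContinuousMap.norm_le _ (norm_nonneg _)).2 fun x => le_rfl
  · refine Germ.coe_eq.2 <| .of_forall fun n => ?_
    let b : Matrix (e.index × J n) (κ n) C(X, ℂ) := .of fun i k => .const X (B n i.1 i.2 k)
    let b' : Matrix (κ n) (e.index × J n) C(X, ℂ) := .of fun k i => .const X (star (B n i.1 i.2 k))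
    have h : MurrayVonNeumann (flatten (p n)) (1 : Matrix (κ n) (κ n) C(X, ℂ)) := by
      refine ⟨b, b', ?_, ?_⟩ <;> ext k l x
      · simp [flatten, b, b', p, Matrix.mul_apply, ContinuousMap.sum_apply]
      · have := congrFun₂ (hB n) k l
        simp only [Matrix.sum_apply, Matrix.mul_apply, conjTranspose_apply,
          Complex.star_def] at this
        simp [b, b', Matrix.mul_apply, ContinuousMap.sum_apply, Fintype.sum_prod_type, this,
          Matrix.one_apply, apply_ite (fun f : C(X, ℂ) => f x)]
    exact (congrArg KZero.of (ProjectiveClass.mk_eq_mk (B := .free C(X, ℂ) (κ n)).2 h)).trans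
      (by rw [ProjectiveClass.mk_free, map_natCast])

end Quantization

section BlochQuantization

open Filter Topology
open scoped Matrix.Norms.L2Operator

/-- The matrix whose columns are products of characters of `ZMod M` with functions on `R`. -/
noncomputable def wave {M : ℕ} [NeZero M] {R J : Type} (a : J → R → ℝ) (σ : J → ZMod M) :
    Matrix (ZMod M × R) J ℂ :=
  .of fun x j => a j x.2 * ZMod.stdAddChar (x.1 * σ j) / (√M : ℝ)

theorem conjTranspose_wave_mul_wave {M : ℕ} [NeZero M] {R J : Type} [Fintype R] [DecidableEq J]
    (a : J → R → ℝ) {σ : J → ZMod M} (hσ : Function.Injective σ) :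
    (wave a σ)ᴴ * wave a σ = diagonal fun j => ((∑ r, a j r ^ 2 : ℝ) : ℂ) := by
  ext i j
  have hM : (√M : ℂ) * √M = M := by
    rw [← Complex.ofReal_mul, Real.mul_self_sqrt M.cast_nonneg, Complex.ofReal_natCast]
  have hM0 : (M : ℂ) ≠ 0 := Nat.cast_ne_zero.2 (NeZero.ne M)
  calc ((wave a σ)ᴴ * wave a σ) i j
      = ∑ m : ZMod M, ∑ r, (a i r * a j r : ℂ) / M * ZMod.stdAddChar (m * (σ j - σ i)) := by
        rw [Matrix.mul_apply, Fintype.sum_prod_type]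
        refine Finset.sum_congr rfl fun m _ => Finset.sum_congr rfl fun r _ => ?_
        have hχ : (ZMod.stdAddChar (m * (σ j - σ i)) : ℂ) =
            star (ZMod.stdAddChar (m * σ i)) * ZMod.stdAddChar (m * σ j) := by
          rw [mul_sub, sub_eq_add_neg, AddChar.map_add_eq_mul, AddChar.map_neg_eq_conj, mul_comm]
          rfl
        simp only [wave, conjTranspose_apply, of_apply, star_div₀, star_mul', Complex.star_def,
          Complex.conj_ofReal, hχ, ← hM]
        ring
    _ = _ := by
        rw [Finset.sum_comm]
        simp only [← Finset.mul_sum, AddChar.sum_mulShift _ (ZMod.isPrimitive_stdAddChar M),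
          sub_eq_zero, hσ.eq_iff, ZMod.card]
        obtain rfl | h := eq_or_ne i j
        · simp [hM0, sq]
        · simp [h, h.symm]

theorem norm_wave_le {M : ℕ} [NeZero M] {R J : Type} [Fintype R] [Fintype J] [DecidableEq J]
    {a : J → R → ℝ} {σ : J → ZMod M} (hσ : Function.Injective σ) {C : ℝ}
    (hC : 0 ≤ C) (h : ∀ j, ∑ r, a j r ^ 2 ≤ C) : ‖wave a σ‖ ≤ √C := by
  refine Real.le_sqrt_of_sq_le ?_
  rw [sq, ← l2_opNorm_conjTranspose_mul_self, conjTranspose_wave_mul_wave a hσ, l2_opNorm_diagonal]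
  refine (pi_norm_le_iff_of_nonneg hC).2 fun j => ?_
  rw [Complex.norm_real, Real.norm_of_nonneg (Finset.sum_nonneg fun _ _ => sq_nonneg _)]
  exact h j

/-- The normalized indicator function of the interval `[j, j + L)`. -/
noncomputable def window {N : ℕ} (L : ℕ) (j : ℤ) (r : Fin N) : ℝ :=
  if j ≤ r ∧ r < j + L then (√L)⁻¹ else 0

theorem sum_window_sq {N L j : ℕ} (hL : 0 < L) (hj : j + L ≤ N) :
    ∑ r : Fin N, window L j r ^ 2 = 1 := by
  have hr (r : Fin N) :
      window L j r ^ 2 = if r.val ∈ Finset.Ico j (j + L) then (L : ℝ)⁻¹ else 0 := by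
    rw [window, ite_pow, zero_pow two_ne_zero, inv_pow, Real.sq_sqrt L.cast_nonneg]
    exact if_congr (by rw [Finset.mem_Ico]; norm_cast) rfl rfl
  simp only [hr]
  rw [Fin.sum_univ_eq_sum_range (fun r => if r ∈ Finset.Ico j (j + L) then (L : ℝ)⁻¹ else 0) N,
    ← Finset.sum_filter]
  have hfilter : (Finset.range N).filter (· ∈ Finset.Ico j (j + L)) = Finset.Ico j (j + L) := by
    grind
  rw [hfilter, Finset.sum_const, Nat.card_Ico, Nat.add_sub_cancel_left, nsmul_eq_mul]
  exact mul_inv_cancel₀ (Nat.cast_ne_zero.2 hL.ne')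

theorem sum_window_sub_window_sq_le {N : ℕ} (L : ℕ) (j : ℤ) {k : ℤ} (hk : |k| ≤ 1) :
    ∑ r : Fin N, (window L j r - window L (j + k) r) ^ 2 ≤ 2 / L := by
  have hsingle (c : ℤ) : ∑ r : Fin N, (if (r : ℤ) = c then (L : ℝ)⁻¹ else 0) ≤ (L : ℝ)⁻¹ := by
    rw [← Finset.sum_filter, Finset.sum_const, nsmul_eq_mul]
    refine mul_le_of_le_one_left (by positivity) ?_
    exact_mod_cast Finset.card_le_one.2 fun a ha b hb => by grind
  calc ∑ r : Fin N, (window L j r - window L (j + k) r) ^ 2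
      ≤ ∑ r : Fin N, ((if (r : ℤ) = min j (j + k) then (L : ℝ)⁻¹ else 0) +
          (if (r : ℤ) = min j (j + k) + L then (L : ℝ)⁻¹ else 0)) := by
        refine Finset.sum_le_sum fun r _ => ?_
        have hL : ((√L)⁻¹ : ℝ) ^ 2 = (L : ℝ)⁻¹ := by rw [inv_pow, Real.sq_sqrt L.cast_nonneg]
        rw [abs_le] at hk
        simp only [window]
        split_ifs <;> first | (exfalso; omega) | simp [hL]
    _ ≤ (L : ℝ)⁻¹ + (L : ℝ)⁻¹ := by
        rw [Finset.sum_add_distrib]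
        exact add_le_add (hsingle _) (hsingle _)
    _ = 2 / L := by ring

/-- The height `r / K`, cut off at the ends of the unit interval. -/
noncomputable def height (K : ℕ) (r : ℤ) : unitInterval :=
  Set.projIcc 0 1 zero_le_one (r / K)

theorem dist_height_le (K : ℕ) (r s : ℤ) : dist (height K r) (height K s) ≤ |(r - s : ℝ)| / K := by
  refine (LipschitzWith.projIcc zero_le_one).dist_le_mul _ _ |>.trans_eq ?_
  rw [NNReal.coe_one, one_mul, Real.dist_eq, ← sub_div, abs_div, Nat.abs_cast]

variable (K L : ℕ)

/-- The grid of points of the sphere on which functions are sampled. -/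
noncomputable def gridPoint (x : ZMod (K + 1) × Fin (K + L)) : BlochSphere :=
  BlochSphere.polar (ZMod.toCircle x.1, height K x.2)

/-- The isometry whose `j`-th column has longitudinal frequency `j` and is supported on the
latitudes in a window at `j`. -/
noncomputable def latitudeFrame : Matrix (ZMod (K + 1) × Fin (K + L)) (Fin (K + 1)) ℂ :=
  wave (fun j => window L j) fun j => (j : ℕ)

theorem natCast_zmod_injective :
    Function.Injective fun j : Fin (K + 1) => ((j : ℕ) : ZMod (K + 1)) := fun i j h =>
  Fin.ext <| by
    have := congrArg ZMod.val h
    rwa [ZMod.val_natCast, ZMod.val_natCast, Nat.mod_eq_of_lt i.2, Nat.mod_eq_of_lt j.2] at this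

theorem conjTranspose_latitudeFrame_mul_latitudeFrame (hL : 0 < L) :
    (latitudeFrame K L)ᴴ * latitudeFrame K L = 1 := by
  rw [latitudeFrame, conjTranspose_wave_mul_wave _ (natCast_zmod_injective K), ← diagonal_one]
  congr with j
  exact_mod_cast sum_window_sq hL (by omega)

/-- The matrix that shifts by `k` with weight `c`. -/
noncomputable def weightedShift (M N : ℕ) (c : ℤ → ℝ) (k : ℤ) : Matrix (Fin M) (Fin N) ℂ :=
  .of fun i j => if (i : ℤ) = j + k then (c j : ℂ) else 0

variable {K L}

theorem diagonal_mul_latitudeFrame_sub {f : C(BlochSphere, ℂ)} {φ : C(unitInterval, ℝ)} {k : ℤ}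
    (hf : ∀ z t, f (BlochSphere.polar (z, t)) = φ t * (z : ℂ) ^ k)
    (hφ : ∀ j : Fin (K + 1), ¬(0 ≤ j + k ∧ j + k ≤ K) → φ (height K j) = 0) :
    diagonal (f ∘ gridPoint K L) * latitudeFrame K L -
        latitudeFrame K L * weightedShift (K + 1) (K + 1) (φ ∘ height K) k =
      wave (fun (j : Fin (K + 1)) (r : Fin (K + L)) =>
          φ (height K r) * window L j r - φ (height K j) * window L (j + k) r)
        (fun j => ((j : ℕ) : ZMod (K + 1)) + (k : ZMod (K + 1))) := by
  ext ⟨m, r⟩ j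
  have hχ : (ZMod.stdAddChar (m * (((j : ℕ) : ZMod (K + 1)) + (k : ZMod (K + 1)))) : ℂ) =
      ZMod.stdAddChar (m * ((j : ℕ) : ZMod (K + 1))) * (ZMod.toCircle m : ℂ) ^ k := by
    rw [mul_add, AddChar.map_add_eq_mul, mul_comm m k, ← zsmul_eq_mul, AddChar.map_zsmul_eq_zpow]
    rfl
  have hshift : (latitudeFrame K L * weightedShift (K + 1) (K + 1) (φ ∘ height K) k) (m, r) j =
      φ (height K j) * window L (j + k) r *
        ZMod.stdAddChar (m * (((j : ℕ) : ZMod (K + 1)) + (k : ZMod (K + 1)))) /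
          (√(K + 1 : ℕ) : ℝ) := by
    by_cases hj : 0 ≤ (j : ℤ) + k ∧ (j : ℤ) + k ≤ K
    · rw [Matrix.mul_apply, Finset.sum_eq_single ⟨((j : ℤ) + k).toNat, by omega⟩]
      · have hcast : ((((j : ℤ) + k).toNat : ℕ) : ℤ) = j + k := Int.toNat_of_nonneg hj.1
        have hcast' : ((((j : ℤ) + k).toNat : ℕ) : ZMod (K + 1)) =
            ((j : ℕ) : ZMod (K + 1)) + (k : ZMod (K + 1)) := by
          exact_mod_cast congrArg (Int.cast : ℤ → ZMod (K + 1)) hcast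
        simp only [latitudeFrame, wave, weightedShift, of_apply, hcast, hcast', if_true,
          Function.comp_apply]
        push_cast
        ring
      · intro i _ hi
        rw [weightedShift, of_apply, if_neg fun h => hi (Fin.ext (by grind)), mul_zero]
      · simp
    · simp [Matrix.mul_apply, weightedShift, hφ j hj]
  rw [Matrix.sub_apply, hshift, diagonal_mul]
  simp only [Function.comp_apply, gridPoint, hf, latitudeFrame, wave, of_apply, hχ]
  push_cast
  ring

theorem norm_diagonal_mul_latitudeFrame_sub_le {f : C(BlochSphere, ℂ)} {φ : C(unitInterval, ℝ)}
    {k : ℤ} (hk : |k| ≤ 1) (hf : ∀ z t, f (BlochSphere.polar (z, t)) = φ t * (z : ℂ) ^ k)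
    (hφ : ∀ j : Fin (K + 1), ¬(0 ≤ j + k ∧ j + k ≤ K) → φ (height K j) = 0) (hL : 0 < L) {ε : ℝ}
    (hε : ∀ s t, dist s t ≤ L / K → |φ s - φ t| ≤ ε) :
    ‖diagonal (f ∘ gridPoint K L) * latitudeFrame K L -
        latitudeFrame K L * weightedShift (K + 1) (K + 1) (φ ∘ height K) k‖ ≤
      √(2 * ε ^ 2 + 4 * ‖φ‖ ^ 2 / L) := by
  rw [diagonal_mul_latitudeFrame_sub hf hφ]
  have hσ : Function.Injective fun j : Fin (K + 1) =>
      ((j : ℕ) : ZMod (K + 1)) + (k : ZMod (K + 1)) :=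
    (add_left_injective _).comp (natCast_zmod_injective K)
  refine norm_wave_le hσ (by positivity) fun j => ?_
  have hterm (r : Fin (K + L)) :
      (φ (height K r) * window L j r - φ (height K j) * window L (j + k) r) ^ 2 ≤
        2 * ε ^ 2 * window L j r ^ 2 + 2 * ‖φ‖ ^ 2 * (window L j r - window L (j + k) r) ^ 2 := by
    have hosc :
        ((φ (height K r) - φ (height K j)) * window L j r) ^ 2 ≤ ε ^ 2 * window L j r ^ 2 := by
      by_cases hr : (j : ℤ) ≤ r ∧ (r : ℤ) < j + L
      · rw [mul_pow]
        gcongr ?_ * _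
        refine sq_le_sq.2 ((hε _ _ ((dist_height_le K r j).trans ?_)).trans (le_abs_self ε))
        have hrj : |(r : ℤ) - j| ≤ L := abs_le.2 (by omega)
        gcongr
        exact_mod_cast hrj
      · simp only [window, if_neg hr, mul_zero, zero_pow two_ne_zero, le_refl]
    have hnorm : φ (height K j) ^ 2 ≤ ‖φ‖ ^ 2 :=
      sq_le_sq.2 ((φ.norm_coe_le_norm _).trans (le_abs_self _))
    nlinarith [mul_le_mul_of_nonneg_right hnorm (sq_nonneg (window L j r - window L (j + k) r)),
      sq_nonneg ((φ (height K r) - φ (height K j)) * window L j r -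
        φ (height K j) * (window L j r - window L (j + k) r))]
  calc _ ≤ ∑ r : Fin (K + L), (2 * ε ^ 2 * window L j r ^ 2 +
          2 * ‖φ‖ ^ 2 * (window L j r - window L (j + k) r) ^ 2) :=
        Finset.sum_le_sum fun r _ => hterm r
    _ ≤ 2 * ε ^ 2 * 1 + 2 * ‖φ‖ ^ 2 * (2 / L) := by
        rw [Finset.sum_add_distrib, ← Finset.mul_sum, ← Finset.mul_sum,
          sum_window_sq hL (by omega)]
        gcongr
        exact sum_window_sub_window_sq_le L j hk
    _ = 2 * ε ^ 2 + 4 * ‖φ‖ ^ 2 / L := by ring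

end BlochQuantization

section BlochQuantization

open Filter Topology BlochSphere
open scoped Matrix.Norms.L2Operator

theorem tendsto_norm_diagonal_mul_latitudeFrame_sub {f : C(BlochSphere, ℂ)}
    {φ : C(unitInterval, ℝ)} {k : ℤ} (hk : |k| ≤ 1)
    (hf : ∀ z t, f (polar (z, t)) = φ t * (z : ℂ) ^ k) (hφ : k ≠ 0 → φ 0 = 0 ∧ φ 1 = 0) :
    Tendsto (fun n : ℕ => ‖diagonal (f ∘ gridPoint ((n + 1) ^ 2) (n + 1)) *
      latitudeFrame ((n + 1) ^ 2) (n + 1) -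
        latitudeFrame ((n + 1) ^ 2) (n + 1) * weightedShift _ _ (φ ∘ height ((n + 1) ^ 2)) k‖)
      atTop (𝓝 0) := by
  refine tendsto_order.2 ⟨fun ε hε => .of_forall fun n => hε.trans_le (norm_nonneg _),
    fun ε hε => ?_⟩
  obtain ⟨δ, hδ, hφδ⟩ := Metric.uniformContinuous_iff.1
    (CompactSpace.uniformContinuous_of_continuous φ.continuous) (ε / 2) (half_pos hε)
  have hdecay : Tendsto (fun n : ℕ => 4 * ‖φ‖ ^ 2 / ((n + 1 : ℕ) : ℝ)) atTop (𝓝 0) :=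
    (tendsto_const_div_atTop_nhds_zero_nat _).comp (tendsto_add_atTop_nat 1)
  have hmesh : Tendsto (fun n : ℕ => ((n + 1 : ℕ) : ℝ) / ((n + 1) ^ 2 : ℕ)) atTop (𝓝 0) :=
    (tendsto_one_div_add_atTop_nhds_zero_nat (𝕜 := ℝ)).congr fun n => by
      push_cast
      field_simp
  filter_upwards [hdecay.eventually_lt_const (show 0 < ε ^ 2 / 2 by positivity),
    hmesh.eventually_lt_const hδ] with n hn hnδ
  refine (norm_diagonal_mul_latitudeFrame_sub_le hk hf (fun j hj => ?_) n.succ_pos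
    fun s t hst => (hφδ (hst.trans_lt hnδ)).le).trans_lt ?_
  · have hK : (((n + 1) ^ 2 : ℕ) : ℝ) ≠ 0 := by positivity
    obtain ⟨h0, h1⟩ := hφ fun h => hj (by omega)
    rw [abs_le] at hk
    obtain h | h : (j : ℤ) = 0 ∨ (j : ℤ) = ((n + 1) ^ 2 : ℕ) := by omega
    · rw [h, height, Int.cast_zero, zero_div, Set.projIcc_left]
      exact h0
    · rw [h, height, Int.cast_natCast, div_self hK, Set.projIcc_right]
      exact h1
  · rw [Real.sqrt_lt' hε]
    linarith

theorem tendsto_norm_weightedShift_sub_compression {f : C(BlochSphere, ℂ)}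
    {φ : C(unitInterval, ℝ)} {k : ℤ} (hk : |k| ≤ 1)
    (hf : ∀ z t, f (polar (z, t)) = φ t * (z : ℂ) ^ k) (hφ : k ≠ 0 → φ 0 = 0 ∧ φ 1 = 0) :
    Tendsto (fun n : ℕ => ‖weightedShift _ _ (φ ∘ height ((n + 1) ^ 2)) k -
      compression (latitudeFrame ((n + 1) ^ 2) (n + 1)) (gridPoint ((n + 1) ^ 2) (n + 1)) f‖)
      atTop (𝓝 0) :=
  squeeze_zero (fun _ => norm_nonneg _)
    (fun n => (norm_sub_rev _ _).trans_le (norm_compression_sub_le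
      (conjTranspose_latitudeFrame_mul_latitudeFrame _ _ n.succ_pos) _ f _))
    (tendsto_norm_diagonal_mul_latitudeFrame_sub hk hf hφ)

/-- The height coordinate on the sphere. -/
def altitude : C(BlochSphere, ℂ) := ⟨fun p => p.1.2, by fun_prop⟩

/-- The complex coordinate on the sphere. -/
def equatorial : C(BlochSphere, ℂ) := ⟨fun p => p.1.1, by fun_prop⟩

/-- The height, as a function on the unit interval. -/
def profile : C(unitInterval, ℝ) := ⟨fun t => t, by fun_prop⟩

/-- The radius of the circle of latitude at a given height. -/
noncomputable def latitudeRadius : C(unitInterval, ℝ) := ⟨fun t => √(t * (1 - t)), by fun_prop⟩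

theorem altitude_polar (z : Circle) (t : unitInterval) :
    altitude (polar (z, t)) = profile t * (z : ℂ) ^ (0 : ℤ) := by
  simp [altitude, profile]

theorem equatorial_polar (z : Circle) (t : unitInterval) :
    equatorial (polar (z, t)) = latitudeRadius t * (z : ℂ) ^ (1 : ℤ) := by
  simp [equatorial, latitudeRadius]

theorem star_equatorial_polar (z : Circle) (t : unitInterval) :
    star equatorial (polar (z, t)) = latitudeRadius t * (z : ℂ) ^ (-1 : ℤ) := by
  simp [equatorial, latitudeRadius, ← Circle.coe_inv_eq_conj]

theorem latitudeRadius_zero_and_one : latitudeRadius 0 = 0 ∧ latitudeRadius 1 = 0 := by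
  simp [latitudeRadius]

theorem separatesPoints_asymptoticallyInvariant_latitudeFrame :
    (asymptoticallyInvariant (fun n : ℕ => latitudeFrame ((n + 1) ^ 2) (n + 1))
      (fun n => conjTranspose_latitudeFrame_mul_latitudeFrame _ _ n.succ_pos)
      fun n => gridPoint ((n + 1) ^ 2) (n + 1)).SeparatesPoints := by
  have hiso (n : ℕ) := conjTranspose_latitudeFrame_mul_latitudeFrame ((n + 1) ^ 2) _ n.succ_pos
  have halt := tendsto_compressionDefect hiso <|
    tendsto_norm_diagonal_mul_latitudeFrame_sub (by simp) altitude_polar fun h => absurd rfl h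
  have heq := tendsto_compressionDefect hiso <|
    tendsto_norm_diagonal_mul_latitudeFrame_sub (by simp) equatorial_polar
      fun _ => latitudeRadius_zero_and_one
  have hstar := tendsto_compressionDefect hiso <|
    tendsto_norm_diagonal_mul_latitudeFrame_sub (by simp) star_equatorial_polar
      fun _ => latitudeRadius_zero_and_one
  have hself : star altitude = altitude := ContinuousMap.ext fun p => Complex.conj_ofReal _
  intro p q hpq
  by_cases h : p.1.1 = q.1.1
  · refine ⟨altitude, ⟨altitude, ⟨halt, hself.symm ▸ halt⟩, rfl⟩, fun h' => hpq ?_⟩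
    exact Subtype.ext (Prod.ext h (Complex.ofReal_injective h'))
  · exact ⟨equatorial, ⟨equatorial, ⟨heq, hstar⟩, rfl⟩, h⟩

/-- The quantization of the sphere by compressions along the latitude frames. -/
noncomputable def blochQuantization : Quantization BlochSphere fun n => Fin ((n + 1) ^ 2 + 1) :=
  .ofCompression _ _ _ separatesPoints_asymptoticallyInvariant_latitudeFrame

theorem weightedShift_apply {M N : ℕ} (c : ℤ → ℝ) (k : ℤ) (i : Fin M) (j : Fin N) :
    weightedShift M N c k i j = if (i : ℤ) = j + k then (c j : ℂ) else 0 := rfl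

theorem weightedShift_mul_conjTranspose_apply {M N P : ℕ} (c d : ℤ → ℝ) (k l : ℤ) (i : Fin M)
    (j : Fin P) :
    (weightedShift M N c k * (weightedShift P N d l)ᴴ) i j =
        if (i : ℤ) - k = j - l ∧ 0 ≤ (j : ℤ) - l ∧ (j : ℤ) - l < N then
          ((c (j - l) * d (j - l) : ℝ) : ℂ) else 0 := by
  rw [Matrix.mul_apply]
  split_ifs with h
  · have hcast : ((((j : ℤ) - l).toNat : ℕ) : ℤ) = j - l := Int.toNat_of_nonneg h.2.1
    rw [Finset.sum_eq_single ⟨((j : ℤ) - l).toNat, by omega⟩]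
    · have hi : (i : ℤ) = j - l + k := by rw [← h.1, sub_add_cancel]
      simp only [weightedShift, of_apply, conjTranspose_apply, hcast, if_pos hi,
        if_pos (sub_add_cancel (j : ℤ) l).symm, Complex.star_def, Complex.conj_ofReal,
        Complex.ofReal_mul]
    · intro m _ hm
      have : (j : ℤ) ≠ m + l := fun hj => hm (Fin.ext (by grind))
      simp [weightedShift, this]
    · simp
  · refine Finset.sum_eq_zero fun m _ => ?_
    by_cases hj : (j : ℤ) = m + l
    · have : (i : ℤ) ≠ m + k := fun hi => h (by omega)
      simp [weightedShift, this]
    · simp [weightedShift, hj]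

theorem conjTranspose_weightedShift_mul_self {K : ℕ} (c : ℤ → ℝ) {k : ℤ} (h0 : 0 ≤ k)
    (h1 : k ≤ 1) :
    (weightedShift (K + 1) K c k)ᴴ * weightedShift (K + 1) K c k =
      diagonal fun j : Fin K => ((c j ^ 2 : ℝ) : ℂ) := by
  ext i j
  rw [Matrix.mul_apply, Finset.sum_eq_single ⟨((j : ℤ) + k).toNat, by omega⟩]
  · have hcast : ((((j : ℤ) + k).toNat : ℕ) : ℤ) = j + k := Int.toNat_of_nonneg (by omega)
    obtain rfl | hij := eq_or_ne i j
    · simp [weightedShift, hcast, sq]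
    · have : (j : ℤ) ≠ i := fun h => hij (Fin.ext (by omega))
      simp [weightedShift, hcast, hij, this]
  · intro m _ hm
    have : (m : ℤ) ≠ j + k := fun h => hm (Fin.ext (by grind))
    simp [weightedShift, this]
  · simp

/-- The rows of an isometry whose range is asymptotically that of the quantized tautological
projection. -/
noncomputable def tautologicalFactor (K : ℕ) : Fin 2 → Matrix (Fin (K + 1)) (Fin K) ℂ :=
  ![weightedShift _ _ (fun r => √(height K r)) 1, weightedShift _ _ (fun r => √(1 - height K r)) 0]

theorem sum_conjTranspose_mul_tautologicalFactor (K : ℕ) :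
    ∑ i, (tautologicalFactor K i)ᴴ * tautologicalFactor K i = 1 := by
  rw [Fin.sum_univ_two]
  simp only [tautologicalFactor, cons_val_zero, cons_val_one]
  rw [conjTranspose_weightedShift_mul_self _ zero_le_one le_rfl,
    conjTranspose_weightedShift_mul_self _ le_rfl zero_le_one, diagonal_add, ← diagonal_one]
  congr with j
  rw [Real.sq_sqrt (height K j).2.1, Real.sq_sqrt (sub_nonneg.2 (height K j).2.2)]
  push_cast
  ring

theorem tautologicalFactor_zero_mul_one (K : ℕ) :
    tautologicalFactor K 0 * (tautologicalFactor K 1)ᴴ =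
      weightedShift _ _ (latitudeRadius ∘ height K) 1 := by
  ext i j
  simp only [tautologicalFactor, cons_val_zero, cons_val_one,
    weightedShift_mul_conjTranspose_apply, sub_zero, weightedShift_apply, Function.comp_apply,
    ← Real.sqrt_mul (height K j).2.1]
  exact if_congr (by omega) rfl rfl

theorem height_natCast_self {K : ℕ} (hK : K ≠ 0) : height K K = 1 := by
  rw [height, Int.cast_natCast, div_self (Nat.cast_ne_zero.2 hK), Set.projIcc_right]
  rfl

theorem tautologicalFactor_one_mul_one {K : ℕ} (hK : K ≠ 0) :
    tautologicalFactor K 1 * (tautologicalFactor K 1)ᴴ =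
      weightedShift _ _ (((1 : C(unitInterval, ℝ)) - profile) ∘ height K) 0 := by
  ext i j
  simp only [tautologicalFactor, cons_val_zero, cons_val_one,
    weightedShift_mul_conjTranspose_apply, sub_zero, weightedShift_apply, Function.comp_apply,
    Real.mul_self_sqrt (sub_nonneg.2 (height K j).2.2), add_zero]
  obtain h | h : (j : ℕ) < K ∨ (j : ℕ) = K := by omega
  · exact if_congr (by omega) rfl rfl
  · simp [h, profile, height_natCast_self hK]

theorem norm_tautologicalFactor_zero_mul_zero_sub_le (K : ℕ) :
    ‖tautologicalFactor K 0 * (tautologicalFactor K 0)ᴴ -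
        weightedShift _ _ (profile ∘ height K) 0‖ ≤
      1 / K := by
  have : tautologicalFactor K 0 * (tautologicalFactor K 0)ᴴ -
        weightedShift _ _ (profile ∘ height K) 0 =
      diagonal fun j : Fin (K + 1) => ((height K (j - 1) - height K j : ℝ) : ℂ) := by
    ext i j
    simp only [Matrix.sub_apply, tautologicalFactor, cons_val_zero,
      weightedShift_mul_conjTranspose_apply, Real.mul_self_sqrt (height K _).2.1]
    obtain rfl | hij := eq_or_ne i j
    · obtain h | h : (i : ℕ) = 0 ∨ 1 ≤ (i : ℕ) := by omega
      · have h0 : height K (-1) = 0 := Set.projIcc_of_le_left _ <|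
          div_nonpos_of_nonpos_of_nonneg (by norm_num) K.cast_nonneg
        simp [h, h0, weightedShift, profile]
      · rw [if_pos (by omega)]
        simp [weightedShift, profile]
    · have : (i : ℤ) ≠ j := fun h => hij (Fin.ext (by omega))
      simp [weightedShift_apply, hij, this, -Nat.cast_inj]
  rw [this, l2_opNorm_diagonal]
  refine (pi_norm_le_iff_of_nonneg (by positivity)).2 fun j => ?_
  rw [Complex.norm_real]
  exact (dist_height_le K _ _).trans_eq (by push_cast; simp)

theorem tendsto_norm_tautologicalFactor_sub (i j : Fin 2) :
    Tendsto (fun n : ℕ => ‖tautologicalFactor ((n + 1) ^ 2) i *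
      (tautologicalFactor ((n + 1) ^ 2) j)ᴴ -
        blochQuantization.toFun n (tautological.toMatrix i j)‖) atTop (𝓝 0) := by
  have h01 := tendsto_norm_weightedShift_sub_compression (by simp) equatorial_polar
    fun _ => latitudeRadius_zero_and_one
  have h11 := tendsto_norm_weightedShift_sub_compression (k := 0) (f := 1 - altitude)
    (φ := 1 - profile) (by simp) (fun z t => by simp [altitude, profile]) fun h => absurd rfl h
  simp only [← tautologicalFactor_zero_mul_one] at h01
  fin_cases i <;> fin_cases j
  · have hmesh : Tendsto (fun n : ℕ => 1 / (((n + 1) ^ 2 : ℕ) : ℝ)) atTop (𝓝 0) :=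
      tendsto_one_div_atTop_nhds_zero_nat.comp <|
        (tendsto_pow_atTop two_ne_zero).comp (tendsto_add_atTop_nat 1)
    have h00 := tendsto_norm_weightedShift_sub_compression (by simp) altitude_polar
      fun h => absurd rfl h
    refine squeeze_zero (fun _ => norm_nonneg _) (fun n => ?_) (add_zero (0 : ℝ) ▸ hmesh.add h00)
    exact (norm_sub_le_norm_sub_add_norm_sub _ _ _).trans
      (add_le_add_left (norm_tautologicalFactor_zero_mul_zero_sub_le _) _)
  · exact h01
  · refine h01.congr fun n => ?_
    rw [← l2_opNorm_conjTranspose, conjTranspose_sub, ← compression_star, conjTranspose_mul,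
      conjTranspose_conjTranspose]
    rfl
  · refine h11.congr fun n => ?_
    rw [← tautologicalFactor_one_mul_one (by positivity)]
    rfl

end BlochQuantization

namespace KTheory

section Periodicity

open Filter BlochSphere IdempotentMatrix

variable {X : Type*} [TopologicalSpace X]

theorem pull_const_pole_bott : pull (.const X pole) bott = 0 := by
  have h : MurrayVonNeumann (tautological.map (pullback (.const X pole))).toMatrix
      (1 : Matrix (Fin 1) (Fin 1) C(X, ℂ)) := by
    refine ⟨!![1; 0], !![1, 0], ?_, ?_⟩ <;> ext i j x <;> fin_cases i <;> fin_cases j <;>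
      simp [pullback, pole, Matrix.mul_apply]
  have hone : KZero.mk (tautological.map (pullback (.const X pole))) = 1 :=
    (congrArg KZero.of (ProjectiveClass.mk_eq_mk (B := .free C(X, ℂ) (Fin 1)).2 h)).trans
      (by rw [ProjectiveClass.mk_free, Fintype.card_fin, Nat.cast_one, map_one])
  rw [bott, map_sub, map_one, pull_mk, hone, sub_self]

variable [CompactSpace X]

theorem pushforward_pull_snd_bott :
    blochQuantization.pushforward (pull .snd bott : KTheory (X × BlochSphere)) = -1 := by
  have hone : blochQuantization.pushforward (1 : KTheory (X × BlochSphere)) =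
      ((fun n : ℕ => (((n + 1) ^ 2 + 1 : ℕ) : KTheory X)) : Germ atTop (KTheory X)) := by
    rw [Quantization.pushforward_one]
    simp only [Fintype.card_fin]
  have hmk : blochQuantization.pushforward
      (pull .snd (KZero.mk tautological) : KTheory (X × BlochSphere)) =
        ((fun n : ℕ => (((n + 1) ^ 2 : ℕ) : KTheory X)) : Germ atTop (KTheory X)) := by
    rw [Quantization.pushforward_pull_snd_mk _ _
      (fun n => tautologicalFactor ((n + 1) ^ 2))
      (fun n => sum_conjTranspose_mul_tautologicalFactor _) tendsto_norm_tautologicalFactor_sub]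
    simp only [Fintype.card_fin]
  rw [bott, map_sub, map_one, map_sub, hone, hmk]
  refine Germ.coe_eq.2 <| .of_forall fun n => ?_
  change (((n + 1) ^ 2 : ℕ) : KTheory X) - ((n + 1) ^ 2 + 1 : ℕ) = -1
  push_cast
  ring

theorem pushforward_pull_fst_mul_bott (a : KTheory X) :
    blochQuantization.pushforward (pull .fst a * pull .snd bott : KTheory (X × BlochSphere)) =
      ((-a : KTheory X) : Germ atTop (KTheory X)) := by
  rw [Quantization.pushforward_pull_fst_mul, pushforward_pull_snd_bott, mul_neg, mul_one]
  rfl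

theorem eq_zero_of_pull_fst_mul_bott_eq_zero {a : KTheory X}
    (h : (pull .fst a * pull .snd bott : KTheory (X × BlochSphere)) = 0) : a = 0 := by
  have := pushforward_pull_fst_mul_bott a
  rw [h, map_zero] at this
  exact neg_eq_zero.1 (Germ.const_inj.1 this).symm

theorem pushforward_exchange (y : KTheory (X × BlochSphere)) :
    ((y * pull .snd bott : KTheory (X × BlochSphere)) : Germ atTop (KTheory (X × BlochSphere))) *
        blochQuantization.pushforward (1 : KTheory ((X × BlochSphere) × BlochSphere)) -
      (y : Germ atTop (KTheory (X × BlochSphere))) -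
      ((pull .snd bott : KTheory (X × BlochSphere)) : Germ atTop (KTheory (X × BlochSphere))) *
        (blochQuantization.pushforward y).map (pull .fst) -
      (blochQuantization.pushforward (y * pull .snd bott)).map (pull .fst) = 0 := by
  have h := exchange (Y := (X × BlochSphere) × BlochSphere) (f := .fst)
    (g := ContinuousMap.fst.prodMap (.id BlochSphere)) (p := ContinuousMap.snd.comp .fst)
    (q := .snd) (fun z hz => Prod.ext rfl hz) y
  have hsnd : pull (ContinuousMap.fst.prodMap (.id BlochSphere)) (pull .snd bott) =
      (pull .snd bott : KTheory ((X × BlochSphere) × BlochSphere)) := pull_pull _ _ _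
  have hexpand : pull .fst (y * pull .snd bott) * 1 - pull .fst (-y) * pull .snd bott -
      pull .fst (pull .snd bott) * pull (ContinuousMap.fst.prodMap (.id BlochSphere)) y -
      pull (ContinuousMap.fst.prodMap (.id BlochSphere)) (y * pull .snd bott) =
        (0 : KTheory ((X × BlochSphere) × BlochSphere)) := by
    rw [map_mul, map_mul, pull_pull, hsnd, map_neg, ← h]
    ring
  have := congrArg blochQuantization.pushforward hexpand
  rw [map_sub, map_sub, map_sub, map_zero, Quantization.pushforward_pull_fst_mul,
    pushforward_pull_fst_mul_bott, neg_neg, Quantization.pushforward_pull_fst_mul,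
    Quantization.pushforward_pull_prodMap, Quantization.pushforward_pull_prodMap] at this
  exact this

/-- Half of Bott periodicity: pushing the exchange relation on `(X × S²) × S²` forward along the
second sphere expresses `y` through classes on `X`. -/
theorem exists_eq_pull_fst_add_pull_fst_mul_bott (y : KTheory (X × BlochSphere)) :
    ∃ a b : KTheory X, y = pull .fst a + pull .fst b * pull .snd bott := by
  have hsq : (pull .snd bott * pull .snd bott : KTheory (X × BlochSphere)) = 0 := by
    rw [← map_mul, ← sq, bott_sq, map_zero]
  have h := pushforward_exchange y
  have h' := pushforward_exchange (y * pull .snd bott)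
  rw [mul_assoc, hsq, mul_zero, map_zero] at h'
  rw [Quantization.pushforward_one] at h h'
  obtain ⟨f, hf⟩ := Quot.exists_rep (blochQuantization.pushforward y)
  obtain ⟨g, hg⟩ := Quot.exists_rep (blochQuantization.pushforward (y * pull .snd bott))
  rw [← hf, ← hg] at h
  rw [← hg] at h'
  obtain ⟨n, hn, hn'⟩ := ((Germ.coe_eq.1 h).and (Germ.coe_eq.1 h')).exists
  simp only [Fintype.card_fin] at hn hn'
  refine ⟨-g n, -f n - ((n + 1) ^ 2 + 1 : ℕ) * g n, ?_⟩
  change _ * ((_ : ℕ) : KTheory (X × BlochSphere)) - y - _ * pull .fst (f n) - pull .fst (g n) = 0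
    at hn
  change 0 * ((_ : ℕ) : KTheory (X × BlochSphere)) - _ - _ * pull .fst (g n) - pull .fst 0 = 0
    at hn'
  rw [map_sub, map_mul, map_neg, map_neg, map_natCast]
  rw [map_zero] at hn'
  linear_combination -hn - ((n + 1) ^ 2 + 1 : ℕ) * hn'

end Periodicity

end KTheory

namespace KTheory

section AdamsOperation

open BlochSphere

variable {X Y : Type*} [TopologicalSpace X] [TopologicalSpace Y]

theorem adams_pull (f : C(X, Y)) (y : KTheory Y) :
    KZero.adams (pull f y) = pull f (KZero.adams y) :=
  KZero.adams_map _ y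

theorem adams_mul_pull_bott (y : KTheory X) (p : C(X, BlochSphere)) :
    KZero.adams (y * pull p bott) = 2 * KZero.adams y * pull p bott := by
  have h : pull p bott = KZero.mk (tautological.map (pullback p)) - 1 := by
    rw [bott, map_sub, map_one, pull_mk]
  rw [h]
  exact KZero.adams_mul_mk_sub_one y (isLine_tautological.map _)
    (by rw [← h, ← map_pow, bott_sq, map_zero])

theorem pull_bott_mul_self (p : C(X, BlochSphere)) : pull p bott * pull p bott = 0 := by
  rw [← map_mul, ← sq, bott_sq, map_zero]

theorem adams_pull_bott (p : C(X, BlochSphere)) :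
    KZero.adams (pull p bott) = 2 * pull p bott := by
  simpa [KZero.adams_one] using adams_mul_pull_bott 1 p

theorem adams_sub_sq (p₁ p₂ q₁ q₂ : C(X, BlochSphere)) (x : KTheory X) :
    KZero.adams (2 + 2 * (pull p₁ bott * pull q₁ bott) + 2 * (pull p₂ bott * pull q₂ bott) +
        x * pull q₁ bott * pull q₂ bott) -
      ((2 + 2 * (pull p₁ bott * pull q₁ bott) + 2 * (pull p₂ bott * pull q₂ bott) +
        x * pull q₁ bott * pull q₂ bott) ^ 2 - 2) =
    (4 * KZero.adams x - (8 * (pull p₁ bott * pull p₂ bott) + 4 * x)) * pull q₁ bott *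
      pull q₂ bott := by
  have two_mul_eq (y : KTheory X) : 2 * y = 2 • y := (two_nsmul y).symm ▸ two_mul y
  have adams_two : KZero.adams (2 : KTheory X) = 2 := by
    rw [← one_add_one_eq_two, map_add, KZero.adams_one]
  rw [two_mul_eq (pull p₁ bott * _), two_mul_eq (pull p₂ bott * _), map_add, map_add, map_add,
    map_nsmul, map_nsmul, adams_two]
  simp only [adams_mul_pull_bott, adams_pull_bott, nsmul_eq_mul, Nat.cast_ofNat]
  have hq₁ := pull_bott_mul_self q₁
  have hq₂ := pull_bott_mul_self q₂
  generalize pull q₁ bott = s₁ at *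
  generalize pull q₂ bott = s₂ at *
  generalize pull p₁ bott = r₁
  generalize pull p₂ bott = r₂
  linear_combination
    -(4 * r₁ ^ 2 + 4 * r₁ * x * s₂ + x ^ 2 * s₂ ^ 2) * hq₁ - (4 * r₂ ^ 2 + 4 * r₂ * x * s₁) * hq₂

/-- The inclusion of `X` as a section of `X × S²`. -/
noncomputable def atPole (X : Type*) [TopologicalSpace X] : C(X, X × BlochSphere) :=
  .prodMk (.id X) (.const X pole)

@[simp]
theorem pull_atPole_pull_fst (a : KTheory X) : pull (atPole X) (pull .fst a) = a :=
  (pull_pull _ _ _).trans (pull_id a)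

@[simp]
theorem pull_atPole_bott : pull (atPole X) (pull .snd bott) = 0 :=
  (pull_pull _ _ _).trans pull_const_pole_bott

theorem pull_fst_add_pull_fst_mul_bott_inj [CompactSpace X] {a b a' b' : KTheory X} :
    (pull .fst a + pull .fst b * pull .snd bott : KTheory (X × BlochSphere)) =
      pull .fst a' + pull .fst b' * pull .snd bott ↔ a = a' ∧ b = b' := by
  refine ⟨fun h => ?_, by rintro ⟨rfl, rfl⟩; rfl⟩
  have ha : a = a' := by simpa using congrArg (pull (atPole X)) h
  refine ⟨ha, sub_eq_zero.1 (eq_zero_of_pull_fst_mul_bott_eq_zero ?_)⟩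
  rw [map_sub]
  rw [ha] at h
  linear_combination h

theorem pull_fst_mul_bott_inj [CompactSpace X] {b b' : KTheory X} :
    (pull .fst b * pull .snd bott : KTheory (X × BlochSphere)) =
      pull .fst b' * pull .snd bott ↔ b = b' := by
  simpa using pull_fst_add_pull_fst_mul_bott_inj (X := X) (a := 0) (a' := 0)

theorem exists_eq_of_pull_atPole [CompactSpace X] {q₁ q₂ : KTheory X}
    {E : KTheory ((X × BlochSphere) × BlochSphere)}
    (h₂ : pull (atPole (X × BlochSphere)) E = 2 + 2 * (pull .fst q₁ * pull .snd bott))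
    (h₁ : pull ((atPole X).prodMap (.id BlochSphere)) E =
      2 + 2 * (pull .fst q₂ * pull .snd bott)) :
    ∃ x : KTheory X, E = 2 + 2 * (pull .fst (pull .fst q₁) * pull .fst (pull .snd bott)) +
      2 * (pull .fst (pull .fst q₂) * pull .snd bott) +
      pull .fst (pull .fst x) * pull .fst (pull .snd bott) * pull .snd bott := by
  obtain ⟨a, b, rfl⟩ := exists_eq_pull_fst_add_pull_fst_mul_bott E
  obtain ⟨b₀, x, rfl⟩ := exists_eq_pull_fst_add_pull_fst_mul_bott b
  obtain rfl : a = _ := by simpa using h₂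
  have hfst (z : KTheory (X × BlochSphere)) :
      pull ((atPole X).prodMap (.id BlochSphere)) (pull .fst z) =
        pull .fst (pull (atPole X) z) := by rw [pull_pull, pull_pull]; rfl
  have hsnd : pull ((atPole X).prodMap (.id BlochSphere)) (pull .snd bott) =
      (pull .snd bott : KTheory (X × BlochSphere)) := pull_pull _ _ _
  obtain rfl : b₀ = 2 * q₂ := by
    refine pull_fst_mul_bott_inj.1 ?_
    simp only [map_add, map_mul, hfst, hsnd, map_ofNat, pull_atPole_pull_fst, pull_atPole_bott,
      map_zero, mul_zero, add_zero] at h₁ ⊢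
    linear_combination h₁
  refine ⟨x, ?_⟩
  simp only [map_add, map_mul, map_ofNat]
  ring

theorem exists_four_mul_adams_eq [CompactSpace X] (p₁ p₂ : C(X, BlochSphere))
    {E : KTheory ((X × BlochSphere) × BlochSphere)} (hE : KZero.adams E = E ^ 2 - 2)
    (h₂ : pull (atPole (X × BlochSphere)) E = 2 + 2 * (pull .fst (pull p₁ bott) * pull .snd bott))
    (h₁ : pull ((atPole X).prodMap (.id BlochSphere)) E =
      2 + 2 * (pull .fst (pull p₂ bott) * pull .snd bott)) :
    ∃ x : KTheory X, 4 * KZero.adams x = 8 * (pull p₁ bott * pull p₂ bott) + 4 * x := by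
  obtain ⟨x, rfl⟩ := exists_eq_of_pull_atPole h₂ h₁
  refine ⟨x, pull_fst_mul_bott_inj.1 (pull_fst_mul_bott_inj.1 ?_)⟩
  simp only [pull_pull, ← sub_eq_zero (b := _ - (2 : KTheory _)), adams_sub_sq] at hE
  simp only [map_add, map_mul, map_ofNat, ← adams_pull, pull_pull]
  linear_combination hE

theorem adams_pull_fst_add (a b : KTheory X) :
    KZero.adams (pull .fst a + pull .fst b * pull .snd bott : KTheory (X × BlochSphere)) =
      pull .fst (KZero.adams a) + pull .fst (2 * KZero.adams b) * pull .snd bott := by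
  rw [map_add, adams_mul_pull_bott, adams_pull, adams_pull, map_mul, map_ofNat]

theorem sixteen_mul_adams_ne (y : KTheory Unit) : 16 * KZero.adams y ≠ 8 + 4 * y := by
  intro hy
  let : Invertible (2 : ℂ) := invertibleOfNonzero two_ne_zero
  let ev := (ContinuousMap.evalAlgHom ℂ ℂ ()).toRingHom
  have h : (KZero.map ev (16 * KZero.adams y)).trace = (KZero.map ev (8 + 4 * y)).trace := by
    rw [hy]
  obtain ⟨n, hn⟩ := KZero.exists_intCast_eq_trace (KZero.map ev y)
  simp only [map_mul, map_add, map_ofNat, ← KZero.adams_map, KZero.trace_adams, ← hn] at h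
  norm_cast at h
  omega

theorem not_exists_four_mul_adams_eq :
    ¬∃ x : KTheory ((Unit × BlochSphere) × BlochSphere), 4 * KZero.adams x =
      8 * (pull (.comp .snd .fst) bott * pull .snd bott) + 4 * x := by
  rintro ⟨x, hx⟩
  obtain ⟨a, b, rfl⟩ := exists_eq_pull_fst_add_pull_fst_mul_bott x
  rw [adams_pull_fst_add, ← pull_pull] at hx
  have hb : 4 * (2 * KZero.adams b) = 8 * pull .snd bott + 4 * b := by
    refine (pull_fst_add_pull_fst_mul_bott_inj (a := 4 * KZero.adams a) (a' := 4 * a)).1 ?_ |>.2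
    simp only [map_add, map_mul, map_ofNat] at hx ⊢
    linear_combination hx
  obtain ⟨c, d, rfl⟩ := exists_eq_pull_fst_add_pull_fst_mul_bott b
  rw [adams_pull_fst_add] at hb
  refine sixteen_mul_adams_ne d <|
    (pull_fst_add_pull_fst_mul_bott_inj (a := 8 * KZero.adams c) (a' := 4 * c)).1 ?_ |>.2
  simp only [map_add, map_mul, map_ofNat] at hb ⊢
  linear_combination hb

theorem not_adams_eq
    {E : KTheory ((((Unit × BlochSphere) × BlochSphere) × BlochSphere) × BlochSphere)}
    (h₂ : pull (atPole _) E = 2 + 2 * (pull .fst (pull (.comp .snd .fst) bott) * pull .snd bott))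
    (h₁ : pull ((atPole _).prodMap (.id BlochSphere)) E =
      2 + 2 * (pull .fst (pull .snd bott) * pull .snd bott)) :
    KZero.adams E ≠ E ^ 2 - 2 := fun hE =>
  not_exists_four_mul_adams_eq <| exists_four_mul_adams_eq _ _ hE h₂ h₁

end AdamsOperation

end KTheory

section Frames

open Topology IdempotentMatrix

variable {X Y : Type*} [TopologicalSpace X] [TopologicalSpace Y] {π : C(Y, X)}
variable {ι κ : Type}

theorem exists_matrix_of_isQuotientMap (hπ : IsQuotientMap π) (f : C(Y, Matrix ι κ ℂ))
    (hf : ∀ a b, π a = π b → f a = f b) :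
    ∃ m : Matrix ι κ C(X, ℂ), ∀ y, m.map (fun g => g (π y)) = f y := by
  have h (i j) : Function.FactorsThrough (fun y => f y i j) π := fun a b hab => by
    exact congrFun₂ (hf a b hab) i j
  refine ⟨.of fun i j => IsQuotientMap.lift hπ ⟨fun y => f y i j, by fun_prop⟩ (h i j),
    fun y => ?_⟩
  ext i j
  exact DFunLike.congr_fun (IsQuotientMap.lift_comp hπ ⟨fun y => f y i j, by fun_prop⟩ (h i j)) y

theorem matrix_ext_of_surjective (hπ : Function.Surjective π) {m m' : Matrix ι κ C(X, ℂ)}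
    (h : ∀ y, m.map (fun g => g (π y)) = m'.map (fun g => g (π y))) : m = m' := by
  ext i j x
  obtain ⟨y, rfl⟩ := hπ x
  exact congrFun₂ (h y) i j

theorem map_eval_mul [Fintype κ] {μ : Type} (m : Matrix ι κ C(X, ℂ)) (n : Matrix κ μ C(X, ℂ))
    (x : X) :
    (m * n).map (fun g => g x) = m.map (fun g => g x) * n.map fun g => g x :=
  Matrix.map_mul (f := (ContinuousMap.evalAlgHom ℂ ℂ x).toRingHom)

theorem submatrix_det_mul (F : Matrix ι (Fin 2) ℂ) (g : Matrix (Fin 2) (Fin 2) ℂ) (i j : ι) :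
    ((F * g).submatrix ![i, j] id).det = (F.submatrix ![i, j] id).det * g.det := by
  rw [← det_mul]
  rfl

theorem submatrix_det_mul_star (F : Matrix ι (Fin 2) ℂ) (i j k l : ι) :
    (F.submatrix ![i, j] id).det * star (F.submatrix ![k, l] id).det =
      (F * Fᴴ) i k * (F * Fᴴ) j l - (F * Fᴴ) j k * (F * Fᴴ) i l := by
  have h : F.submatrix ![i, j] id * (F.submatrix ![k, l] id)ᴴ =
      (F * Fᴴ).submatrix ![i, j] ![k, l] := rfl
  rw [← det_conjTranspose, ← det_mul, h, det_fin_two]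
  exact congrArg _ (mul_comm _ _)

variable [Fintype ι] [DecidableEq ι]

omit [DecidableEq ι] in
theorem trace_eq_card_of_surjective [Fintype κ] [DecidableEq κ] (hπ : Function.Surjective π)
    {F : C(Y, Matrix ι κ ℂ)} (hF : ∀ y, (F y)ᴴ * F y = 1) {e : Matrix ι ι C(X, ℂ)}
    (heF : ∀ y, e.map (fun g => g (π y)) = F y * (F y)ᴴ) : e.trace = Fintype.card κ := by
  ext x
  obtain ⟨y, rfl⟩ := hπ x
  calc e.trace (π y) = (e.map fun g => g (π y)).trace := by simp [Matrix.trace]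
    _ = Fintype.card κ := by rw [heF, Matrix.trace_mul_comm, hF, trace_one]

/-- The `2 × 2` minors of the frame are invariant under the structure group, so they descend to a
trivialization of the determinant line. -/
theorem mk_exteriorSquare_eq_one (hπ : IsQuotientMap π) {F : C(Y, Matrix ι (Fin 2) ℂ)}
    (hF : ∀ y, (F y)ᴴ * F y = 1)
    (h : ∀ a b, π a = π b → ∃ g ∈ specialUnitaryGroup (Fin 2) ℂ, F a = F b * g)
    {e : Matrix ι ι C(X, ℂ)} (he : IsIdempotentElem e)
    (heF : ∀ y, e.map (fun g => g (π y)) = F y * (F y)ᴴ) :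
    ProjectiveClass.mk (exteriorSquare ⟨ι, e, he⟩) = 1 := by
  let minor (y) (i : ι × ι) : ℂ := ((F y).submatrix ![i.1, i.2] id).det
  have hminor (x y) (hxy : π x = π y) (i) : minor x i = minor y i := by
    obtain ⟨g, hg, hgF⟩ := h x y hxy
    change ((F x).submatrix _ id).det = ((F y).submatrix _ id).det
    rw [hgF, submatrix_det_mul, (mem_specialUnitaryGroup_iff.1 hg).2, mul_one]
  obtain ⟨a, ha⟩ := exists_matrix_of_isQuotientMap hπ
    (⟨fun y => .of fun i _ => minor y i, by fun_prop⟩ : C(Y, Matrix (ι × ι) Unit ℂ))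
    fun x y hxy => by ext i; exact hminor x y hxy i
  obtain ⟨b, hb⟩ := exists_matrix_of_isQuotientMap hπ
    (⟨fun y => .of fun _ i => 2⁻¹ * star (minor y i), by fun_prop⟩ : C(Y, Matrix Unit (ι × ι) ℂ))
    fun x y hxy => by ext _ i; exact congrArg (2⁻¹ * star ·) (hminor x y hxy i)
  let E : IdempotentMatrix C(X, ℂ) := ⟨ι, e, he⟩
  have hab : a * b = E.exteriorSquare.toMatrix := matrix_ext_of_surjective hπ.surjective fun y => by
    rw [map_eval_mul, ha, hb]
    ext i j
    have hE (k l) : (F y * (F y)ᴴ) k l = e k l (π y) := (congrFun₂ (heF y) k l).symm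
    change ∑ _ : Unit, minor y i * (2⁻¹ * star (minor y j)) = E.exteriorSquare.toMatrix i j (π y)
    rw [Fintype.sum_unique, mul_left_comm, submatrix_det_mul_star, hE, hE, hE, hE,
      exteriorSquare_apply]
    rfl
  have htrace : e.trace = 2 := by
    rw [trace_eq_card_of_surjective hπ.surjective hF heF, Fintype.card_fin, Nat.cast_two]
  refine ProjectiveClass.mk_eq_mk.2 ⟨a, b, hab, ?_⟩
  refine Matrix.ext fun _ _ => ?_
  have h := KZero.two_mul_trace_exteriorSquare E
  rw [← hab, trace_mul_comm, htrace] at h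
  change 2 * (∑ k : Unit, (b * a) k k) = _ at h
  rw [Fintype.sum_unique] at h
  exact (isUnit_of_invertible (2 : C(X, ℂ))).mul_left_cancel (h.trans <|
    (by norm_num : (2 ^ 2 - 2 : C(X, ℂ)) = 2 * 1))

theorem exists_exteriorSquare_eq_one (hπ : IsQuotientMap π) (F : C(Y, Matrix ι (Fin 2) ℂ))
    (hF : ∀ y, (F y)ᴴ * F y = 1)
    (h : ∀ a b, π a = π b → ∃ g ∈ specialUnitaryGroup (Fin 2) ℂ, F a = F b * g) :
    ∃ (e : Matrix ι ι C(X, ℂ)) (he : IsIdempotentElem e),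
      (∀ y, e.map (fun g => g (π y)) = F y * (F y)ᴴ) ∧
      ProjectiveClass.mk (exteriorSquare ⟨ι, e, he⟩) = 1 := by
  obtain ⟨e, he⟩ := exists_matrix_of_isQuotientMap hπ ⟨fun y => F y * (F y)ᴴ, by fun_prop⟩
    fun a b hab => by
      obtain ⟨g, hg, hgF⟩ := h a b hab
      change F a * (F a)ᴴ = F b * (F b)ᴴ
      rw [hgF, conjTranspose_mul, Matrix.mul_assoc, ← Matrix.mul_assoc g,
        show g * gᴴ = 1 from mem_unitaryGroup_iff.1 (mem_specialUnitaryGroup_iff.1 hg).1,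
        Matrix.one_mul]
  have hidem : IsIdempotentElem e := matrix_ext_of_surjective hπ.surjective fun y => by
    rw [map_eval_mul, he y]
    change F y * (F y)ᴴ * (F y * (F y)ᴴ) = _
    rw [Matrix.mul_assoc, ← Matrix.mul_assoc (F y)ᴴ, hF, Matrix.one_mul]
    rfl
  exact ⟨e, hidem, he, mk_exteriorSquare_eq_one hπ hF h hidem he⟩

end Frames

section Join

variable {R : Type*} {ι κ μ : Type}

/-- The matrix with the rows of `F` and of `G`, indexed so that stacking the blocks of a Kronecker
product with a `2 × 2` matrix is of this form. -/
def stackRows (F G : Matrix ι κ R) : Matrix (Fin 2 × ι) κ R := .of fun i => ![F, G] i.1 i.2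

theorem stackRows_mul [Fintype κ] [Semiring R] (F G : Matrix ι κ R) (A : Matrix κ μ R) :
    stackRows F G * A = stackRows (F * A) (G * A) := by
  ext ⟨i, j⟩ k
  fin_cases i <;> rfl

theorem one_kronecker_mul_stackRows [Fintype ι] [CommSemiring R] (A : Matrix μ ι R)
    (F G : Matrix ι κ R) :
    ((1 : Matrix (Fin 2) (Fin 2) R) ⊗ₖ A) * stackRows F G = stackRows (A * F) (A * G) := by
  ext ⟨i, j⟩ k
  fin_cases i <;> simp [stackRows, Matrix.mul_apply, Fintype.sum_prod_type]

theorem conjTranspose_stackRows_mul_stackRows [Fintype ι] [CommSemiring R] [StarRing R]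
    (F G : Matrix ι κ R) (F' G' : Matrix ι μ R) :
    (stackRows F G)ᴴ * stackRows F' G' = Fᴴ * F' + Gᴴ * G' := by
  ext i j
  simp [stackRows, Matrix.mul_apply, Fintype.sum_prod_type]

theorem conjTranspose_stackRows_one_zero [Fintype ι] [DecidableEq ι] [CommSemiring R] [StarRing R] :
    (stackRows (1 : Matrix ι ι R) (0 : Matrix ι ι R))ᴴ * stackRows (1 : Matrix ι ι R) 0 = 1 := by
  rw [conjTranspose_stackRows_mul_stackRows, conjTranspose_one, Matrix.one_mul, Matrix.mul_zero,
    add_zero]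

theorem stackRows_mul_conjTranspose_stackRows [Fintype κ] [Semiring R] [StarRing R]
    (F G : Matrix ι κ R) (F' G' : Matrix μ κ R) (i j) :
    (stackRows F G * (stackRows F' G')ᴴ) i j =
      !![F * F'ᴴ, F * G'ᴴ; G * F'ᴴ, G * G'ᴴ] i.1 j.1 i.2 j.2 := by
  obtain ⟨i, k⟩ := i
  obtain ⟨j, l⟩ := j
  fin_cases i <;> fin_cases j <;> rfl

end Join

section Frames

open unitInterval

variable {ι κ : Type}

/-- The join of two frames of planes with parameter `t`, a frame which is `F` at `t = 1` and `G` at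
`t = 0`. -/
noncomputable def joinFrames (t : I) (F G : Matrix ι κ ℂ) : Matrix (Fin 2 × ι) κ ℂ :=
  stackRows ((√t : ℂ) • F) ((√(1 - t) : ℂ) • G)

theorem joinFrames_mul [Fintype κ] (t : I) (F G : Matrix ι κ ℂ) (A : Matrix κ κ ℂ) :
    joinFrames t F G * A = joinFrames t (F * A) (G * A) := by
  simp only [joinFrames, stackRows_mul, Matrix.smul_mul]

theorem joinFrames_zero (F F' G : Matrix ι κ ℂ) : joinFrames 0 F G = joinFrames 0 F' G := by
  simp [joinFrames]

theorem joinFrames_one (F G G' : Matrix ι κ ℂ) : joinFrames 1 F G = joinFrames 1 F G' := by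
  simp [joinFrames]

theorem conjTranspose_joinFrames_mul_self [Fintype ι] [DecidableEq κ] (t : I) {F G : Matrix ι κ ℂ}
    (hF : Fᴴ * F = 1) (hG : Gᴴ * G = 1) : (joinFrames t F G)ᴴ * joinFrames t F G = 1 := by
  have h (s : I) : (√s * √s : ℂ) = s := by
    rw [← Complex.ofReal_mul, Real.mul_self_sqrt s.2.1]
  have h' := h (σ t)
  simp only [unitInterval.coe_symm_eq] at h'
  simp only [joinFrames, conjTranspose_stackRows_mul_stackRows, conjTranspose_smul,
    Matrix.smul_mul, Matrix.mul_smul, hF, hG, smul_smul, ← add_smul]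
  simp [h, h']

/-- The frame over `S² × S²` which is clutched along `u` in the first sphere and along `W t u v` in
the second one. -/
noncomputable def doubleFrame (W : C(I × (SU 2 × SU 2), SU 2)) (t₁ t₂ : I) (u v : SU 2) :
    Matrix (Fin 2 × (Fin 2 × Fin 2)) (Fin 2) ℂ :=
  joinFrames t₂ (joinFrames t₁ 1 u.1.1) (joinFrames t₁ 1 u.1.1 * (W (t₁, u, v)).1.1)

theorem exists_joinFrames_eq_mul {W : C(I × (SU 2 × SU 2), SU 2)}
    (hW₀ : ∀ u v, W (0, u, v) = u⁻¹ * v * u) (hW₁ : ∀ u v, W (1, u, v) = v) {t : I} {u u' : SU 2}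
    (hu : t = 0 ∨ t = 1 ∨ u = u') :
    ∃ g : SU 2, joinFrames t 1 u.1.1 = joinFrames t 1 u'.1.1 * g.1.1 ∧
      ∀ v, g * W (t, u, v) = W (t, u', v) * g := by
  obtain rfl | rfl | rfl := hu
  · refine ⟨u'⁻¹ * u, ?_, fun v => by rw [hW₀, hW₀]; group⟩
    rw [joinFrames_mul, Matrix.one_mul, joinFrames_zero _ (u'⁻¹ * u).1.1]
    exact congrArg (fun g : SU 2 => joinFrames 0 _ g.1.1) (mul_inv_cancel_left u' u).symm
  · refine ⟨1, ?_, fun v => by rw [hW₁, hW₁, one_mul, mul_one]⟩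
    exact (joinFrames_one _ _ _).trans (Matrix.mul_one _).symm
  · exact ⟨1, (Matrix.mul_one _).symm, fun v => by rw [one_mul, mul_one]⟩

theorem exists_doubleFrame_eq_mul {W : C(I × (SU 2 × SU 2), SU 2)}
    (hW₀ : ∀ u v, W (0, u, v) = u⁻¹ * v * u) (hW₁ : ∀ u v, W (1, u, v) = v)
    {t₁ t₂ : I} {u u' v v' : SU 2} (hu : t₁ = 0 ∨ t₁ = 1 ∨ u = u') (hv : t₂ = 0 ∨ t₂ = 1 ∨ v = v') :
    ∃ g : SU 2, doubleFrame W t₁ t₂ u v = doubleFrame W t₁ t₂ u' v' * g.1.1 := by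
  obtain ⟨k, hk, hkW⟩ := exists_joinFrames_eq_mul hW₀ hW₁ hu
  have mul_mul (g h : SU 2) : joinFrames t₁ 1 u'.1.1 * g.1.1 * h.1.1 =
      joinFrames t₁ 1 u'.1.1 * (g * h).1.1 := Matrix.mul_assoc _ _ _
  simp only [doubleFrame, hk, mul_mul, fun g : SU 2 =>
    joinFrames_mul t₂ (joinFrames t₁ 1 u'.1.1)
      (joinFrames t₁ 1 u'.1.1 * (W (t₁, u', v')).1.1) g.1.1]
  obtain rfl | rfl | rfl := hv
  · refine ⟨(W (t₁, u', v'))⁻¹ * (k * W (t₁, u, v)), ?_⟩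
    rw [mul_inv_cancel_left]
    exact joinFrames_zero _ _ _
  · exact ⟨k, joinFrames_one _ _ _⟩
  · exact ⟨k, by rw [hkW]⟩

theorem conjTranspose_doubleFrame_mul_self (W : C(I × (SU 2 × SU 2), SU 2)) (t₁ t₂ : I)
    (u v : SU 2) : (doubleFrame W t₁ t₂ u v)ᴴ * doubleFrame W t₁ t₂ u v = 1 := by
  have hSU (g : SU 2) : g.1.1ᴴ * g.1.1 = 1 := UnitaryGroup.star_mul_self g.1
  have h := conjTranspose_joinFrames_mul_self t₁ (F := 1) (by simp) (hSU u)
  refine conjTranspose_joinFrames_mul_self t₂ h ?_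
  rw [conjTranspose_mul, Matrix.mul_assoc, ← Matrix.mul_assoc _ _ (W _).1.1, h, Matrix.one_mul,
    hSU]

theorem doubleFrame_right_one (W : C(I × (SU 2 × SU 2), SU 2)) (t : I) (u v : SU 2) :
    doubleFrame W t 1 u v =
      stackRows (1 : Matrix (Fin 2 × Fin 2) (Fin 2 × Fin 2) ℂ) 0 * joinFrames t 1 u.1.1 := by
  rw [stackRows_mul, Matrix.one_mul, Matrix.zero_mul, doubleFrame, joinFrames]
  simp

theorem doubleFrame_left_one {W : C(I × (SU 2 × SU 2), SU 2)} (hW₁ : ∀ u v, W (1, u, v) = v)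
    (t : I) (u v : SU 2) :
    doubleFrame W 1 t u v =
      ((1 : Matrix (Fin 2) (Fin 2) ℂ) ⊗ₖ stackRows (1 : Matrix (Fin 2) (Fin 2) ℂ) 0) *
        joinFrames t 1 v.1.1 := by
  have h : joinFrames 1 (1 : Matrix (Fin 2) (Fin 2) ℂ) u.1.1 = stackRows 1 0 := by simp [joinFrames]
  rw [doubleFrame, h, hW₁, joinFrames, joinFrames, one_kronecker_mul_stackRows, Matrix.mul_smul,
    Matrix.mul_smul, Matrix.mul_one]

end Frames

section CrossSum

open IdempotentMatrix

variable {R : Type*} [CommRing R]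

namespace IdempotentMatrix

/-- The dual module. -/
@[reducible] def dual (e : IdempotentMatrix R) : IdempotentMatrix R where
  index := e.index
  toMatrix := e.toMatrixᵀ
  isIdempotentElem := (transpose_mul _ _).symm.trans (congrArg _ e.isIdempotentElem.eq)

theorem isIdempotentElem_crossSum (e f : IdempotentMatrix R) :
    IsIdempotentElem (e.toMatrix ⊗ₖ f.toMatrix + e.toMatrixᵀ ⊗ₖ (1 - f.toMatrix)) := by
  simp only [IsIdempotentElem, mul_add, add_mul, ← mul_kronecker_mul, e.isIdempotentElem.eq,
    e.dual.isIdempotentElem.eq, f.isIdempotentElem.eq, f.isIdempotentElem.one_sub.eq,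
    f.isIdempotentElem.mul_one_sub_self, f.isIdempotentElem.one_sub_mul_self, kronecker_zero,
    add_zero, zero_add]

/-- The sum of `e ⊗ f` and `e.dual ⊗ f.compl`, realised as a submodule of the tensor product of the
ambient free modules. -/
@[reducible] def crossSum (e f : IdempotentMatrix R) : IdempotentMatrix R :=
  ⟨e.index × f.index, _, isIdempotentElem_crossSum e f⟩

end IdempotentMatrix

theorem ProjectiveClass.mk_crossSum (e f : IdempotentMatrix R) :
    mk (e.crossSum f) = mk e * mk f + mk e.dual * mk f.compl := by
  rw [← mk_mul, ← mk_mul]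
  have h := (e.mul f).isIdempotentElem
  have h' := (e.dual.mul f.compl).isIdempotentElem
  refine mk_eq_add _ _ _ _ (by rw [h.eq, h'.eq]) h h' ?_ ?_
  · rw [← mul_kronecker_mul, f.isIdempotentElem.mul_one_sub_self, kronecker_zero]
  · rw [← mul_kronecker_mul, f.isIdempotentElem.one_sub_mul_self, kronecker_zero]

namespace KZero

theorem mk_crossSum (e f : IdempotentMatrix R) :
    mk (e.crossSum f) = mk e * mk f + mk e.dual * mk f.compl :=
  (congrArg of (ProjectiveClass.mk_crossSum e f)).trans (by rw [map_add, map_mul, map_mul])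

theorem mk_dual_hopf {c d t : R} (h : c * d = t * (1 - t)) :
    mk (hopf h).dual = 2 - mk (hopf h) := by
  have key : MurrayVonNeumann (hopf h).dual.toMatrix (hopf h).compl.toMatrix := by
    refine ⟨!![d, -t; 1 - t, -c], !![0, 1; -1, 0], ?_, ?_⟩ <;> ext i j <;>
      fin_cases i <;> fin_cases j <;> simp
  calc mk (hopf h).dual = mk (hopf h).compl := congrArg of (ProjectiveClass.mk_eq_mk.2 key)
    _ = 2 - mk (hopf h) := by rw [mk_compl, Fintype.card_fin, Nat.cast_two]

end KZero

namespace KTheory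

open BlochSphere

theorem mk_crossSum {X : Type*} [TopologicalSpace X] (p q : C(X, BlochSphere)) :
    KZero.mk ((tautological.map (pullback p)).crossSum (tautological.map (pullback q))) =
      2 + 2 * (pull q bott * pull p bott) := by
  have hmk (p : C(X, BlochSphere)) :
      KZero.mk (tautological.map (pullback p)) = 1 + pull p bott := by
    rw [bott, map_sub, map_one, pull_mk, add_sub_cancel]
  have hdual : KZero.mk (tautological.map (pullback p)).dual =
      2 - KZero.mk (tautological.map (pullback p)) := by
    rw [← pull_mk, ← map_ofNat (pull p) 2, ← map_sub, ← KZero.mk_dual_hopf, pull_mk]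
    rfl
  have hcompl : KZero.mk (tautological.map (pullback q)).compl =
      2 - KZero.mk (tautological.map (pullback q)) := by
    rw [KZero.mk_compl, Fintype.card_fin, Nat.cast_two]
  rw [KZero.mk_crossSum, hdual, hcompl, hmk, hmk]
  ring

end KTheory

end CrossSum

section Twist

open unitInterval

namespace BlochSphere

theorem eq_or_eq_of_polar_eq_polar {z z' : Circle} {t t' : I} (h : polar (z, t) = polar (z', t')) :
    t = t' ∧ (t = 0 ∨ t = 1 ∨ z = z') := by
  simp only [Subtype.ext_iff, polar_apply_coe, Prod.mk.injEq] at h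
  obtain ⟨hz, ht⟩ := h
  obtain rfl : t = t' := Subtype.ext ht
  refine ⟨rfl, ?_⟩
  obtain h0 | hz := mul_eq_mul_left_iff.1 hz |>.symm
  · rw [Complex.ofReal_eq_zero, Real.sqrt_eq_zero (mul_nonneg t.2.1 (sub_nonneg.2 t.2.2)),
      mul_eq_zero, sub_eq_zero] at h0
    exact h0.imp Subtype.ext fun h => .inl (Subtype.ext h.symm)
  · exact .inr (.inr (Circle.ext hz))

/-- The projection onto the fibre of the tautological line bundle at `p`. -/
noncomputable def projection (p : BlochSphere) : Matrix (Fin 2) (Fin 2) ℂ :=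
  !![(p.1.2 : ℂ), p.1.1; star p.1.1, 1 - p.1.2]

theorem projection_eq (p : BlochSphere) :
    projection p = tautological.toMatrix.map fun f => f p := by
  ext i j
  fin_cases i <;> fin_cases j <;> rfl

@[fun_prop]
theorem continuous_projection : Continuous projection := by
  refine continuous_matrix fun i j => ?_
  fin_cases i <;> fin_cases j <;> simp only [projection] <;> fun_prop

theorem isIdempotentElem_projection (p : BlochSphere) : IsIdempotentElem (projection p) := by
  rw [projection_eq]
  exact tautological.isIdempotentElem.map (ContinuousMap.evalAlgHom ℂ ℂ p).toRingHom.mapMatrix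

theorem conjTranspose_projection (p : BlochSphere) : (projection p)ᴴ = projection p := by
  ext i j
  fin_cases i <;> fin_cases j <;> simp [projection]

theorem det_add_projection (z : Circle) (p : BlochSphere) :
    (star (z : ℂ) • projection p + (z : ℂ) • (1 - projection p)).det = 1 := by
  have hp : p.1.1 * starRingEnd ℂ p.1.1 = p.1.2 * (1 - p.1.2) := by
    simpa [Complex.mul_conj] using congrArg Complex.ofReal p.2
  have hz : (z : ℂ) * starRingEnd ℂ z = 1 := by simp [Complex.mul_conj]
  rw [det_fin_two]
  simp only [RCLike.star_def, projection, smul_of, smul_cons, smul_eq_mul, smul_empty, Fin.isValue,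
    Matrix.add_apply, of_apply, cons_val', cons_val_zero, cons_val_fin_one, Matrix.smul_apply,
    Matrix.sub_apply, one_apply_eq, cons_val_one, sub_sub_cancel, ne_eq, zero_ne_one,
    not_false_eq_true, one_apply_ne, zero_sub, mul_neg, one_ne_zero]
  linear_combination (-((z : ℂ) - starRingEnd ℂ z) ^ 2) * hp + hz

/-- The unitary matrix which acts by `conj z` on the line `p` and by `z` on its complement. -/
noncomputable def twist : C(Circle × BlochSphere, SU 2) where
  toFun p := ⟨⟨star (p.1 : ℂ) • projection p.2 + (p.1 : ℂ) • (1 - projection p.2), by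
    have h := isIdempotentElem_projection p.2
    have hz : star (p.1 : ℂ) * p.1 = 1 := by
      simp [← Complex.normSq_eq_conj_mul_self]
    rw [mem_unitaryGroup_iff]
    simp only [star_eq_conjTranspose, conjTranspose_add, conjTranspose_smul, conjTranspose_sub,
      conjTranspose_projection, star_star, conjTranspose_one, mul_add, add_mul, smul_mul_smul,
      h.eq, h.one_sub.eq, h.mul_one_sub_self, h.one_sub_mul_self, smul_zero, hz, mul_comm (p.1 : ℂ)]
    simp⟩, det_add_projection p.1 p.2⟩
  continuous_toFun := by
    refine Continuous.subtype_mk (Continuous.subtype_mk ?_ _) _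
    fun_prop

end BlochSphere

open BlochSphere

theorem joinFrames_mul_conjTranspose_self {ι κ : Type} [Fintype κ] (t : I) (F G : Matrix ι κ ℂ)
    (i j) : (joinFrames t F G * (joinFrames t F G)ᴴ) i j =
      !![(t : ℂ) • (F * Fᴴ), (√(t * (1 - t)) : ℂ) • (F * Gᴴ);
        (√(t * (1 - t)) : ℂ) • (G * Fᴴ), (1 - t : ℂ) • (G * Gᴴ)] i.1 j.1 i.2 j.2 := by
  have ht : (√t * √t : ℂ) = t := by rw [← Complex.ofReal_mul, Real.mul_self_sqrt t.2.1]
  have ht' : (√(1 - t) * √(1 - t) : ℂ) = 1 - t := by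
    rw [← Complex.ofReal_mul, Real.mul_self_sqrt (sub_nonneg.2 t.2.2), Complex.ofReal_sub,
      Complex.ofReal_one]
  rw [joinFrames, stackRows_mul_conjTranspose_stackRows, Real.sqrt_mul t.2.1, Complex.ofReal_mul]
  simp only [conjTranspose_smul, Matrix.smul_mul, Matrix.mul_smul, smul_smul, RCLike.star_def,
    Complex.conj_ofReal, ht, ht', mul_comm (√(1 - t) : ℂ) √t]

theorem joinFrames_twist (z : Circle) (t : I) (p : BlochSphere) :
    joinFrames t 1 (twist (z, p)).1.1 * (joinFrames t 1 (twist (z, p)).1.1)ᴴ =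
      projection (polar (z, t)) ⊗ₖ projection p +
        (projection (polar (z, t)))ᵀ ⊗ₖ (1 - projection p) := by
  have hu : (twist (z, p)).1.1 = star (z : ℂ) • projection p + (z : ℂ) • (1 - projection p) := rfl
  have hu' : (twist (z, p)).1.1ᴴ = (z : ℂ) • projection p + star (z : ℂ) • (1 - projection p) := by
    simp only [hu, conjTranspose_add, conjTranspose_smul, conjTranspose_sub, star_star,
      conjTranspose_projection, conjTranspose_one]
  have hpolar : projection (polar (z, t)) =
      !![(t : ℂ), √(t * (1 - t)) * z; √(t * (1 - t)) * star (z : ℂ), 1 - t] := by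
    simp [projection]
  have huu : (twist (z, p)).1.1 * (twist (z, p)).1.1ᴴ = 1 :=
    mem_unitaryGroup_iff.1 (twist (z, p)).1.2
  have key (i j) : !![(t : ℂ) • ((1 : Matrix (Fin 2) (Fin 2) ℂ) * 1ᴴ),
        (√(t * (1 - t)) : ℂ) • (1 * (twist (z, p)).1.1ᴴ);
        (√(t * (1 - t)) : ℂ) • ((twist (z, p)).1.1 * 1ᴴ),
        (1 - t : ℂ) • ((twist (z, p)).1.1 * (twist (z, p)).1.1ᴴ)] i j =
      projection (polar (z, t)) i j • projection p +
        projection (polar (z, t)) j i • (1 - projection p) := by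
    rw [huu, conjTranspose_one, Matrix.one_mul, Matrix.one_mul, Matrix.mul_one, hu', hu, hpolar]
    generalize projection p = q
    fin_cases i <;> fin_cases j <;> ext <;> simp <;> ring
  ext i j
  exact (joinFrames_mul_conjTranspose_self t _ _ i j).trans (congrFun₂ (key i.1 j.1) i.2 j.2)

end Twist

section Samelson

open unitInterval Topology BlochSphere KTheory

theorem ProjectiveClass.mk_eq_mk_of_forall_conj {X : Type*} [TopologicalSpace X]
    {e f : IdempotentMatrix C(X, ℂ)} (V : Matrix e.index f.index ℂ) (hV : Vᴴ * V = 1)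
    (h : ∀ x, (e.toMatrix.map fun g => g x) = V * (f.toMatrix.map fun g => g x) * Vᴴ) :
    mk e = mk f := by
  let V' : Matrix e.index f.index C(X, ℂ) := V.map (ContinuousMap.const X)
  let Vs : Matrix f.index e.index C(X, ℂ) := Vᴴ.map (ContinuousMap.const X)
  have hV' : Vs * V' = 1 := by
    refine matrix_ext_of_surjective (π := .id X) Function.surjective_id fun x => ?_
    rw [map_eval_mul]
    exact hV.trans (Matrix.map_one _ rfl rfl).symm
  have he : V' * f.toMatrix * Vs = e.toMatrix := by
    refine matrix_ext_of_surjective (π := .id X) Function.surjective_id fun x => ?_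
    rw [map_eval_mul, map_eval_mul]
    exact (h x).symm
  refine mk_eq_mk.2 ⟨V' * f.toMatrix, f.toMatrix * Vs, ?_, ?_⟩
  · rw [← he, Matrix.mul_assoc, ← Matrix.mul_assoc f.toMatrix, f.isIdempotentElem.eq,
      Matrix.mul_assoc]
  · rw [Matrix.mul_assoc, ← Matrix.mul_assoc Vs, hV', Matrix.one_mul, f.isIdempotentElem.eq]

variable {Z : Type*} [TopologicalSpace Z]

/-- Polar coordinates on both spheres, as a quotient map. -/
noncomputable def polarPolar (Z : Type*) [TopologicalSpace Z] :
    C((Z × (Circle × I)) × (Circle × I), (Z × BlochSphere) × BlochSphere) :=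
  ((ContinuousMap.id Z).prodMap polar).prodMap polar

theorem isQuotientMap_polarPolar [CompactSpace Z] [T2Space Z] :
    IsQuotientMap (polarPolar Z) :=
  (polarPolar Z).continuous.isClosedMap.isQuotientMap (polarPolar Z).continuous
    ((Function.surjective_id.prodMap polar_surjective).prodMap polar_surjective)

theorem continuous_joinFrames {Y : Type*} [TopologicalSpace Y] {ι κ : Type} {t : Y → I}
    {F G : Y → Matrix ι κ ℂ} (ht : Continuous t) (hF : Continuous F) (hG : Continuous G) :
    Continuous fun y => joinFrames (t y) (F y) (G y) := by
  refine continuous_matrix fun ⟨i, k⟩ j => ?_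
  have := hF.matrix_elem k j
  have := hG.matrix_elem k j
  fin_cases i <;> simp only [joinFrames, stackRows, of_apply, Fin.zero_eta, Fin.mk_one,
    cons_val_zero, cons_val_one, Matrix.smul_apply] <;> fun_prop

theorem pull_mk_eq_of_joinFrames {X : Type*} [TopologicalSpace X] (p : C(Z, BlochSphere))
    (s : C(Z × BlochSphere, X)) {e : IdempotentMatrix C(X, ℂ)}
    (V : Matrix e.index (Fin 2 × Fin 2) ℂ) (hV : Vᴴ * V = 1)
    (h : ∀ z ζ t, (e.toMatrix.map fun g => g (s (z, polar (ζ, t)))) =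
      V * joinFrames t 1 (twist (ζ, p z)).1.1 * (V * joinFrames t 1 (twist (ζ, p z)).1.1)ᴴ) :
    pull s (KZero.mk e) = 2 + 2 * (pull .fst (pull p bott) * pull .snd bott) := by
  rw [pull_mk, pull_pull, ← mk_crossSum]
  refine congrArg KZero.of (ProjectiveClass.mk_eq_mk_of_forall_conj V hV ?_)
  rintro ⟨z, x⟩
  obtain ⟨⟨ζ, t⟩, rfl⟩ := polar_surjective x
  refine (h z ζ t).trans ?_
  rw [conjTranspose_mul, Matrix.mul_assoc, ← Matrix.mul_assoc (joinFrames _ _ _),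
    joinFrames_twist, ← Matrix.mul_assoc, projection_eq, projection_eq]
  refine congrArg (V * · * Vᴴ) (Matrix.ext fun ⟨i, k⟩ ⟨j, l⟩ => ?_)
  rcases eq_or_ne k l with rfl | hkl
  · simp only [Matrix.add_apply, kroneckerMap_apply, Matrix.sub_apply, one_apply_eq, map_apply]
    rfl
  · simp only [Matrix.add_apply, kroneckerMap_apply, Matrix.sub_apply, one_apply_ne hkl, map_apply]
    rfl

/-- The frame, in polar coordinates on both spheres, of the rank two bundle on `(Z × S²) × S²`
glued from the clutching functions `twist (·, p₁)` and `twist (·, p₂)` by means of the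
homotopy `W`. -/
noncomputable def twistedFrame (W : C(I × (SU 2 × SU 2), SU 2)) (p₁ p₂ : C(Z, BlochSphere)) :
    C((Z × (Circle × I)) × (Circle × I), Matrix (Fin 2 × (Fin 2 × Fin 2)) (Fin 2) ℂ) where
  toFun y := doubleFrame W y.1.2.2 y.2.2 (twist (y.1.2.1, p₁ y.1.1)) (twist (y.2.1, p₂ y.1.1))
  continuous_toFun := by
    have hu : Continuous fun y : (Z × (Circle × I)) × (Circle × I) =>
        (twist (y.1.2.1, p₁ y.1.1)).1.1 := by fun_prop
    have hj := continuous_joinFrames (t := fun y : (Z × (Circle × I)) × (Circle × I) => y.1.2.2)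
      (F := fun _ => 1) (by fun_prop) continuous_const hu
    exact continuous_joinFrames (by fun_prop) hj (hj.matrix_mul (by fun_prop))

theorem exists_twistedFrame_eq_mul {W : C(I × (SU 2 × SU 2), SU 2)}
    (hW₀ : ∀ u v, W (0, u, v) = u⁻¹ * v * u) (hW₁ : ∀ u v, W (1, u, v) = v)
    (p₁ p₂ : C(Z, BlochSphere)) (a b) (hab : polarPolar Z a = polarPolar Z b) :
    ∃ g ∈ specialUnitaryGroup (Fin 2) ℂ,
      twistedFrame W p₁ p₂ a = twistedFrame W p₁ p₂ b * g := by
  obtain ⟨⟨z, ζ₁, t₁⟩, ζ₂, t₂⟩ := a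
  obtain ⟨⟨z', ζ₁', t₁'⟩, ζ₂', t₂'⟩ := b
  obtain ⟨h, h₂⟩ := Prod.mk.inj hab
  obtain ⟨rfl, h₁⟩ := Prod.mk.inj h
  obtain ⟨rfl, hζ₁⟩ := eq_or_eq_of_polar_eq_polar h₁
  obtain ⟨rfl, hζ₂⟩ := eq_or_eq_of_polar_eq_polar h₂
  obtain ⟨g, hg⟩ := exists_doubleFrame_eq_mul hW₀ hW₁
    (hζ₁.imp_right (.imp_right fun h => congrArg (fun ζ => twist (ζ, p₁ z)) h))
    (hζ₂.imp_right (.imp_right fun h => congrArg (fun ζ => twist (ζ, p₂ z)) h))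
  exact ⟨g.1.1, mem_specialUnitaryGroup_iff.2 ⟨g.1.2, g.2⟩, hg⟩

theorem exists_adams_eq [CompactSpace Z] [T2Space Z] {W : C(I × (SU 2 × SU 2), SU 2)}
    (hW₀ : ∀ u v, W (0, u, v) = u⁻¹ * v * u) (hW₁ : ∀ u v, W (1, u, v) = v)
    (p₁ p₂ : C(Z, BlochSphere)) :
    ∃ E : KTheory ((Z × BlochSphere) × BlochSphere),
      pull (atPole (Z × BlochSphere)) E = 2 + 2 * (pull .fst (pull p₁ bott) * pull .snd bott) ∧
      pull ((atPole Z).prodMap (.id BlochSphere)) E =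
        2 + 2 * (pull .fst (pull p₂ bott) * pull .snd bott) ∧
      KZero.adams E = E ^ 2 - 2 := by
  obtain ⟨e, he, heF, hext⟩ := exists_exteriorSquare_eq_one isQuotientMap_polarPolar
    (twistedFrame W p₁ p₂) (fun _ => conjTranspose_doubleFrame_mul_self W _ _ _ _)
    (exists_twistedFrame_eq_mul hW₀ hW₁ p₁ p₂)
  have hpole : polar (1, 1) = pole := by simp [Subtype.ext_iff, pole]
  refine ⟨KZero.mk ⟨_, e, he⟩, ?_, ?_, ?_⟩
  · refine pull_mk_eq_of_joinFrames p₁ _ (stackRows 1 0) conjTranspose_stackRows_one_zero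
      fun z ζ t => ?_
    rw [← doubleFrame_right_one W _ _ (twist (1, p₂ z)), atPole, ContinuousMap.prod_eval,
      ContinuousMap.const_apply, ← hpole]
    exact heF ((z, ζ, t), 1, 1)
  · refine pull_mk_eq_of_joinFrames p₂ _ (1 ⊗ₖ stackRows 1 0) ?_ fun z ζ t => ?_
    · rw [conjTranspose_kronecker, ← mul_kronecker_mul, conjTranspose_one, Matrix.one_mul,
        conjTranspose_stackRows_one_zero, one_kronecker_one]
    · rw [← doubleFrame_left_one hW₁ _ (twist (1, p₁ z)), atPole, ContinuousMap.prodMap_apply]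
      simp only [Prod.map_apply, ContinuousMap.prod_eval, ← hpole]
      exact heF ((z, 1, 1), ζ, t)
  · exact (KZero.adams_of _).trans (by
      rw [ProjectiveClass.exteriorSquare_mk, hext, map_one, mul_one])

end Samelson

open unitInterval in
theorem exists_homotopy_conj_snd {G : Type*} [TopologicalSpace G] [Group G] [IsTopologicalGroup G]
    {c : C(G × G, G)} (hc : ∀ u v, c (u, v) = u * v * u⁻¹ * v⁻¹) {y : G}
    (F : c.Homotopy (.const (G × G) y)) :
    ∃ W : C(I × (G × G), G),
      (∀ u v, W (0, u, v) = u⁻¹ * v * u) ∧ ∀ u v, W (1, u, v) = v := by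
  refine ⟨⟨fun p => p.2.2 * (F (p.1, p.2.2⁻¹, p.2.1⁻¹) * (F (p.1, 1, 1))⁻¹), by fun_prop⟩, ?_, ?_⟩
  · intro u v
    simp [hc, mul_assoc]
  · intro u v
    simp

/-- **Theorem (Samelson).** The commutator map `c : SU(2) × SU(2) → SU(2)`,
`c(u,v) = u v u⁻¹ v⁻¹`, is continuous and not null-homotopic. -/
theorem commutatorMap_SU2_not_nullHomotopic :
    Continuous (fun uv : SU 2 × SU 2 => uv.1 * uv.2 * uv.1⁻¹ * uv.2⁻¹) ∧
    ∀ c : C(SU 2 × SU 2, SU 2),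
      (∀ u v : SU 2, c (u, v) = u * v * u⁻¹ * v⁻¹) →
        ¬∃ y : SU 2, c.Homotopic (ContinuousMap.const (SU 2 × SU 2) y) := by
  refine ⟨by fun_prop, ?_⟩
  rintro c hc ⟨y, ⟨F⟩⟩
  obtain ⟨W, hW₀, hW₁⟩ := exists_homotopy_conj_snd hc F
  obtain ⟨E, h₂, h₁, hE⟩ := exists_adams_eq (Z := (Unit × BlochSphere) × BlochSphere) hW₀ hW₁
    (.comp .snd .fst) .snd
  exact KTheory.not_adams_eq h₂ h₁ hE
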